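/- arXiv:2108.03396 — 9 statements merged into one kernel-verified Lean document; each statement's English description precedes it below -/
import Mathlib

section
/- Let m ≥ 2 be an even integer, let F ∈ ℤ[x₁,…,x_m] be a homogeneous cubic form, and let M be a primitive (m/2)×m integer matrix such that F(x) = 0 for every x ∈ ℤ^m with Mx = 0. Then for every integer n ≥ 1, the average (1/n^{m/2}) · ∑_{v ∈ (ℤ/nℤ)^{m/2}} S_{vM}(n) equals φ(n)·n^{m/2}, where φ is Euler's totient function. -/
/-!
Interchanging the sums, the inner sum over `v` of `e_n(v · Mx)` is, by orthogonality of additive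
characters, `n ^ k` when `Mx ≡ 0 (mod n)` and `0` otherwise (`sum_stdAddChar_dot`). Primitivity of
`M` gives an integral right inverse `N` (`exists_right_inverse`), which is used twice.
* Every `x` mod `n` with `Mx ≡ 0` lifts to an integral zero of `M`: if `X` is any lift and
  `MX = n w`, then `X - n N w` works. Hence `F(x) ≡ 0 (mod n)`, and the surviving terms are all `1`
  (`aeval_eq_zero_of_mulVec_eq_zero`).
* `M` is surjective mod `n`, so its kernel there has `n ^ (2k) / n ^ k = n ^ k` elements
  (`card_kernel`).

The sum over the `φ(n)` units `a` then equals `φ(n) · n ^ k · n ^ k`.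
-/


open scoped BigOperators

/-- `e_n(t) := exp(2πi t/n)` for `t : ZMod n`, using the canonical lift `t.val`. -/
noncomputable def en (n : ℕ) (t : ZMod n) : ℂ :=
  Complex.exp (2 * Real.pi * Complex.I * (t.val : ℂ) / (n : ℂ))

/-- The complete exponential sum `S_c(n)` for a cubic form `F` and `c ∈ (ZMod n)^m`. -/
noncomputable def Sc {m : ℕ} (F : MvPolynomial (Fin m) ℤ) (n : ℕ) [NeZero n]
    (c : Fin m → ZMod n) : ℂ :=
  ∑ a : (ZMod n)ˣ, ∑ x : Fin m → ZMod n,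
    en n ((a : ZMod n) * MvPolynomial.aeval x F + ∑ i, c i * x i)

open Matrix in
/-- The first rows of a unimodular matrix have an integral right inverse: the corresponding
columns of the inverse matrix. -/
lemma exists_right_inverse {k m : ℕ} (M : Matrix (Fin k) (Fin m) ℤ)
    (f : Fin k → Fin m) (hf : Function.Injective f) (U : Matrix (Fin m) (Fin m) ℤ)
    (hU : U.det = 1 ∨ U.det = -1) (hM : ∀ i j, U (f i) j = M i j) :
    ∃ N : Matrix (Fin m) (Fin k) ℤ, M * N = 1 := by
  have hdet : IsUnit U.det := Int.isUnit_iff.2 hU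
  refine ⟨U⁻¹.submatrix id f, ?_⟩
  have hMU : M = U.submatrix f id := by
    ext i j
    exact (hM i j).symm
  rw [hMU, ← Matrix.submatrix_mul _ _ f id f Function.bijective_id,
    Matrix.mul_nonsing_inv _ hdet, Matrix.submatrix_one f hf]

lemma en_eq_stdAddChar (n : ℕ) [NeZero n] (t : ZMod n) : en n t = ZMod.stdAddChar t := by
  rw [ZMod.stdAddChar_apply, ZMod.toCircle_apply, en]

/-- Orthogonality of the additive characters of `(ZMod n) ^ k`. -/
lemma sum_stdAddChar_dot (n k : ℕ) [NeZero n] (w : Fin k → ZMod n) :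
    ∑ v : Fin k → ZMod n, (ZMod.stdAddChar (∑ i, v i * w i) : ℂ)
      = if w = 0 then (n : ℂ) ^ k else 0 := by
  have hprod : ∑ v : Fin k → ZMod n, (ZMod.stdAddChar (∑ i, v i * w i) : ℂ)
      = ∏ i, ∑ t : ZMod n, (ZMod.stdAddChar (t * w i) : ℂ) := by
    rw [Finset.prod_univ_sum, Fintype.piFinset_univ]
    exact Finset.sum_congr rfl fun v _ =>
      map_prod (ZMod.stdAddChar (N := n)).toMonoidHom (fun i => Multiplicative.ofAdd (v i * w i)) _
  have hone (b : ZMod n) :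
      ∑ t : ZMod n, (ZMod.stdAddChar (t * b) : ℂ) = if b = 0 then (n : ℂ) else 0 := by
    rw [AddChar.sum_mulShift b (ZMod.isPrimitive_stdAddChar n), ZMod.card]
    split_ifs <;> simp
  rw [hprod]
  simp_rw [hone]
  split_ifs with hw
  · simp [hw]
  · obtain ⟨i, hi⟩ := Function.ne_iff.1 hw
    exact Finset.prod_eq_zero (Finset.mem_univ i) (if_neg hi)

/-- A solution of `Mx = 0` modulo `n` lifts to an integral one, so `F` vanishes at it. -/
lemma aeval_eq_zero_of_mulVec_eq_zero {k m : ℕ} (F : MvPolynomial (Fin m) ℤ)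
    (M : Matrix (Fin k) (Fin m) ℤ) (N : Matrix (Fin m) (Fin k) ℤ) (hMN : M * N = 1)
    (hFL : ∀ x : Fin m → ℤ, (∀ i, (∑ t, M i t * x t) = 0) → MvPolynomial.eval x F = 0)
    (n : ℕ) (x : Fin m → ZMod n)
    (hx : (M.map (Int.cast : ℤ → ZMod n)).mulVec x = 0) :
    MvPolynomial.aeval x F = 0 := by
  choose X hX using fun t => ZMod.intCast_surjective (x t)
  have hdvd : ∀ i, ∃ w : ℤ, M.mulVec X i = n * w := by
    intro i
    refine (ZMod.intCast_zmod_eq_zero_iff_dvd _ n).1 ?_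
    have := congrFun hx i
    simpa [Matrix.mulVec, dotProduct, hX] using this
  choose w hw using hdvd
  have hzero : M.mulVec (X - (n : ℤ) • N.mulVec w) = 0 := by
    rw [Matrix.mulVec_sub, Matrix.mulVec_smul, Matrix.mulVec_mulVec, hMN, Matrix.one_mulVec]
    ext i
    simp [hw]
  have hF := hFL _ fun i => congrFun hzero i
  have hred : x = fun t => algebraMap ℤ (ZMod n) ((X - (n : ℤ) • N.mulVec w) t) := by
    ext t
    simp [hX]
  rw [hred]
  have := MvPolynomial.aeval_algebraMap_apply (ZMod n) (X - (n : ℤ) • N.mulVec w) F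
  rw [Function.comp_def] at this
  rw [this, MvPolynomial.aeval_eq_eval, hF, map_zero]

/-- The kernel of a surjective linear map `(ZMod n) ^ (2k) → (ZMod n) ^ k` has `n ^ k` elements. -/
lemma card_kernel (k n : ℕ) [NeZero n] (A : Matrix (Fin k) (Fin (2 * k)) (ZMod n))
    (B : Matrix (Fin (2 * k)) (Fin k) (ZMod n)) (hAB : A * B = 1) :
    (Finset.univ.filter fun x => A.mulVec x = 0).card = n ^ k := by
  have hsurj : Function.Surjective A.mulVecLin := fun w =>
    ⟨B.mulVec w, by simp [Matrix.mulVec_mulVec, hAB]⟩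
  have hker : Nat.card (LinearMap.ker A.mulVecLin)
      = (Finset.univ.filter fun x => A.mulVec x = 0).card := by
    rw [← SetLike.coe_sort_coe, Nat.card_coe_set_eq, ← Set.ncard_coe_finset]
    congr 1
    ext x
    simp
  have hcard := (LinearMap.ker A.mulVecLin).card_eq_card_quotient_mul_card
  rw [Nat.card_congr (A.mulVecLin.quotKerEquivOfSurjective hsurj).toEquiv, hker] at hcard
  simp only [Nat.card_eq_fintype_card, Fintype.card_fun, ZMod.card, Fintype.card_fin] at hcard
  have hpos : 0 < n ^ k := pow_pos (NeZero.pos n) k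
  refine Nat.eq_of_mul_eq_mul_left hpos ?_
  rw [← pow_add, ← two_mul]
  linarith

theorem stmt1 (k : ℕ) (hk : 1 ≤ k) (F : MvPolynomial (Fin (2 * k)) ℤ)
    (hF : F.IsHomogeneous 3)
    (M : Matrix (Fin k) (Fin (2 * k)) ℤ)
    (hM : ∃ U : Matrix (Fin (2 * k)) (Fin (2 * k)) ℤ,
      (U.det = 1 ∨ U.det = -1) ∧
      ∀ (i : Fin k) (j : Fin (2 * k)), U ⟨i.val, by have := i.isLt; omega⟩ j = M i j)
    (hFL : ∀ x : Fin (2 * k) → ℤ,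
      (∀ i, (∑ t, M i t * x t) = 0) → MvPolynomial.eval x F = 0)
    (n : ℕ) [NeZero n] :
    (1 / (n : ℂ) ^ k) *
      ∑ v : Fin k → ZMod n, Sc F n (fun t => ∑ i, v i * (M i t : ZMod n))
    = (Nat.totient n : ℂ) * (n : ℂ) ^ k := by
  obtain ⟨U, hU, hUM⟩ := hM
  obtain ⟨N, hMN⟩ := exists_right_inverse M (fun i => ⟨i.val, by have := i.isLt; omega⟩)
    (fun i j h => Fin.ext (by simpa using h)) U hU hUM
  set A := M.map (Int.cast : ℤ → ZMod n) with hA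
  have hAB : A * N.map (Int.cast : ℤ → ZMod n) = 1 := by
    have := congrArg (fun P => P.map (Int.castRingHom (ZMod n))) hMN
    rw [Matrix.map_mul, Matrix.map_one _ (map_zero _) (map_one _)] at this
    exact this
  have hdot (v : Fin k → ZMod n) (x : Fin (2 * k) → ZMod n) :
      ∑ t, (∑ i, v i * (M i t : ZMod n)) * x t = ∑ i, v i * A.mulVec x i := by
    simp only [Matrix.mulVec, dotProduct, Finset.sum_mul, Finset.mul_sum, hA, Matrix.map_apply]
    rw [Finset.sum_comm]
    simp only [mul_assoc]
  have hinner (a : (ZMod n)ˣ) (x : Fin (2 * k) → ZMod n) :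
      ∑ v : Fin k → ZMod n, en n ((a : ZMod n) * MvPolynomial.aeval x F +
        ∑ t, (∑ i, v i * (M i t : ZMod n)) * x t)
      = if A.mulVec x = 0 then (n : ℂ) ^ k else 0 := by
    simp_rw [hdot, en_eq_stdAddChar, AddChar.map_add_eq_mul]
    rw [← Finset.mul_sum, sum_stdAddChar_dot]
    split_ifs with hx
    · rw [aeval_eq_zero_of_mulVec_eq_zero F M N hMN hFL n x hx]
      simp
    · simp
  have hn : (n : ℂ) ^ k ≠ 0 := pow_ne_zero _ (NeZero.ne _)
  have hsum : ∑ v : Fin k → ZMod n, Sc F n (fun t => ∑ i, v i * (M i t : ZMod n))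
      = (Nat.totient n : ℂ) * ((n : ℂ) ^ k * (n : ℂ) ^ k) := by
    simp only [Sc]
    rw [Finset.sum_comm]
    have hunit (a : (ZMod n)ˣ) :
        ∑ v : Fin k → ZMod n, ∑ x : Fin (2 * k) → ZMod n,
          en n ((a : ZMod n) * MvPolynomial.aeval x F +
            ∑ t, (∑ i, v i * (M i t : ZMod n)) * x t) = (n : ℂ) ^ k * (n : ℂ) ^ k := by
      rw [Finset.sum_comm]
      simp_rw [hinner]
      rw [← Finset.sum_filter, Finset.sum_const, card_kernel k n A _ hAB]
      simp
    simp_rw [hunit]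
    rw [Finset.sum_const, Finset.card_univ, ZMod.card_units_eq_totient, nsmul_eq_mul]
  rw [hsum]
  field_simp
end

section
/- Let m ≥ 2 be an even integer, let w : ℝ^m → ℝ be continuous with compact support, and let U be an m×m real matrix with |det U| = 1; let M be the (m/2)×m matrix consisting of the first m/2 rows of U. Then lim_{ε→0⁺} (2ε)^{−m/2} ∫_{{x ∈ ℝ^m : ‖Mx‖_∞ ≤ ε}} w(x) dx exists and equals ∫_{ℝ^{m/2}} w(U^{−1}(0,y)) dy, where for y ∈ ℝ^{m/2}, (0,y) ∈ ℝ^m denotes the vector whose first m/2 coordinates are 0 and whose last m/2 coordinates are those of y, and ‖·‖_∞ is the sup-norm on ℝ^{m/2}. -/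
/-!
The map `T (a, b) = U⁻¹ (a, b)` is a homeomorphism `ℝᵏ × ℝᵏ → ℝ²ᵏ` which preserves Lebesgue measure
since `|det U| = 1`. As `M (T (a, b)) = a`, it pulls `{x | ‖M x‖_∞ ≤ ε}` back to the product of
the sup-norm ball of radius `ε` with `ℝᵏ`. By Fubini, the normalized integral is therefore the
average over that ball, whose volume is `(2ε)ᵏ`, of `G a = ∫ w (T (a, b)) db`. Since `w ∘ T` is
continuous with compact support, `G` is continuous, and the averages converge to `G 0`.
-/

open scoped BigOperators

open MeasureTheory Filter Topology

namespace DeltaDensity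

lemma lt_two_mul (k : ℕ) (i : Fin k) : (i : ℕ) < 2 * k := by omega

lemma add_lt_two_mul (k : ℕ) (i : Fin k) : k + (i : ℕ) < 2 * k := by omega

lemma sub_lt_of_not_lt (k : ℕ) (j : Fin (2 * k)) (h : ¬ (j : ℕ) < k) : (j : ℕ) - k < k := by
  omega

/-- The vector of `ℝ²ᵏ` whose first `k` coordinates are those of `p.1` and whose last `k`
coordinates are those of `p.2`. -/
def glue (k : ℕ) (p : (Fin k → ℝ) × (Fin k → ℝ)) (j : Fin (2 * k)) : ℝ :=
  if h : (j : ℕ) < k then p.1 ⟨j, h⟩ else p.2 ⟨(j : ℕ) - k, sub_lt_of_not_lt k j h⟩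

lemma continuous_glue (k : ℕ) : Continuous (glue k) := by
  refine continuous_pi fun j => ?_
  unfold glue
  split_ifs <;> fun_prop

lemma measurePreserving_glue (k : ℕ) : MeasurePreserving (glue k) volume volume := by
  let e : Fin k ⊕ Fin k ≃ Fin (2 * k) := finSumFinEquiv.trans (finCongr (by omega))
  have h := (volume_measurePreserving_piCongrLeft (fun _ : Fin (2 * k) => ℝ) e).comp
    (volume_measurePreserving_sumPiEquivProdPi_symm (fun _ : Fin k ⊕ Fin k => ℝ))
  convert h using 1
  funext p j
  obtain ⟨s, rfl⟩ := e.surjective j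
  rw [Function.comp_apply, MeasurableEquiv.coe_piCongrLeft, Equiv.piCongrLeft_apply_apply]
  rcases s with i | i <;> simp [glue, e, MeasurableEquiv.coe_sumPiEquivProdPi_symm]

/-- The change of variables `(a, b) ↦ U⁻¹ (a, b)`, as a homeomorphism. -/
noncomputable def chart {k : ℕ} (U : Matrix (Fin (2 * k)) (Fin (2 * k)) ℝ)
    (hU : IsUnit U.det) : ((Fin k → ℝ) × (Fin k → ℝ)) ≃ₜ (Fin (2 * k) → ℝ) where
  toFun p := U⁻¹.mulVec (glue k p)
  invFun x := (fun i => U.mulVec x ⟨i, lt_two_mul k i⟩, fun i => U.mulVec x ⟨k + i, add_lt_two_mul k i⟩)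
  left_inv p := by
    ext i <;> simp [Matrix.mulVec_mulVec, Matrix.mul_nonsing_inv U hU, glue]
  right_inv x := by
    have : glue k (fun i => U.mulVec x ⟨i, lt_two_mul k i⟩, fun i => U.mulVec x ⟨k + i, add_lt_two_mul k i⟩)
        = U.mulVec x := by
      funext j
      unfold glue
      split_ifs with h
      · rfl
      · simp only
        congr 2
        omega
    simp only [this, Matrix.mulVec_mulVec, Matrix.nonsing_inv_mul U hU, Matrix.one_mulVec]
  continuous_toFun := continuous_const.matrix_mulVec (continuous_glue k)
  continuous_invFun := by
    have h : Continuous fun x => U.mulVec x := continuous_const.matrix_mulVec continuous_id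
    exact (continuous_pi fun i => (continuous_apply _).comp h).prodMk
      (continuous_pi fun i => (continuous_apply _).comp h)

lemma measurePreserving_chart {k : ℕ} (U : Matrix (Fin (2 * k)) (Fin (2 * k)) ℝ)
    (hU : IsUnit U.det) (hU1 : |U.det| = 1) :
    MeasurePreserving (chart U hU) volume volume := by
  have hdet : |(U⁻¹).det| = 1 := by
    rw [Matrix.det_nonsing_inv, Ring.inverse_eq_inv', abs_inv, hU1, inv_one]
  have h : MeasurePreserving (Matrix.toLin' U⁻¹) volume volume := by
    refine ⟨(LinearMap.continuous_of_finiteDimensional _).measurable, ?_⟩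
    rw [Real.map_matrix_volume_pi_eq_smul_volume_pi, abs_inv, hdet]
    · simp
    · intro h0
      simp [h0] at hdet
  exact h.comp (measurePreserving_glue k)

/-- Partial integrals of a continuous compactly supported function depend continuously on the
parameter: all the slices are supported in the (compact) projection of the support. -/
lemma continuous_integral_slice {X Y : Type*} [TopologicalSpace X] [FirstCountableTopology X]
    [LocallyCompactSpace X] [TopologicalSpace Y] [MeasurableSpace Y] [OpensMeasurableSpace Y]
    {μ : Measure Y} [IsLocallyFiniteMeasure μ] {F : X × Y → ℝ} (hF : Continuous F)
    (hF' : HasCompactSupport F) : Continuous fun a => ∫ b, F (a, b) ∂μ := by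
  have hK : IsCompact (Prod.snd '' tsupport F) := hF'.isCompact.image continuous_snd
  have h := continuous_parametric_integral_of_continuous (μ := μ) (f := fun a b => F (a, b))
    hF hK
  convert h using 2 with a
  refine (setIntegral_eq_integral_of_forall_compl_eq_zero fun b hb => ?_).symm
  contrapose! hb
  exact ⟨(a, b), subset_tsupport _ hb, rfl⟩

/-- Averages of a continuous function over shrinking sup-norm balls converge to its value at the
centre. -/
lemma tendsto_average_cube {k : ℕ} {G : (Fin k → ℝ) → ℝ} (hG : Continuous G) :
    Tendsto (fun ε : ℝ => (2 * ε) ^ (-(k : ℤ)) * ∫ a in Metric.closedBall 0 ε, G a)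
      (𝓝[>] 0) (𝓝 (G 0)) := by
  have hs : Tendsto (Metric.closedBall (0 : Fin k → ℝ)) (𝓝[>] 0) (𝓝 0).smallSets :=
    (tendsto_closedBall_smallSets _).mono_left nhdsWithin_le_nhds
  have hv : (fun ε : ℝ => volume.real (Metric.closedBall (0 : Fin k → ℝ) ε)) =ᶠ[𝓝[>] 0]
      fun ε => (2 * ε) ^ k := by
    filter_upwards [self_mem_nhdsWithin] with ε hε
    have hε' : (0 : ℝ) < ε := hε
    rw [measureReal_def, Real.volume_pi_closedBall _ hε'.le, ENNReal.toReal_ofReal (by positivity),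
      Fintype.card_fin]
  have ho := hG.continuousAt.integral_sub_linear_isLittleO_ae
    hG.stronglyMeasurable.stronglyMeasurableAtFilter hs _ hv
  have h := ho.tendsto_div_nhds_zero.add_const (G 0)
  rw [zero_add] at h
  refine h.congr' ?_
  filter_upwards [self_mem_nhdsWithin] with ε hε
  have hε' : (0 : ℝ) < ε := hε
  have hne : (2 * ε) ^ k ≠ 0 := by positivity
  rw [zpow_neg, zpow_natCast, smul_eq_mul]
  generalize (2 * ε) ^ k = c at hne ⊢
  field_simp
  ring

end DeltaDensity

open DeltaDensity in
theorem stmt3 (k : ℕ) (hk : 1 ≤ k)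
    (w : (Fin (2 * k) → ℝ) → ℝ) (hw : Continuous w) (hw2 : HasCompactSupport w)
    (U : Matrix (Fin (2 * k)) (Fin (2 * k)) ℝ) (hU : |U.det| = 1)
    (M : Matrix (Fin k) (Fin (2 * k)) ℝ)
    (hM : ∀ (i : Fin k) (j : Fin (2 * k)), M i j = U ⟨i.val, by have := i.isLt; omega⟩ j) :
    Filter.Tendsto
      (fun ε : ℝ =>
        (2 * ε) ^ (-(k : ℤ)) *
          ∫ x in {x : Fin (2 * k) → ℝ | ∀ i, |M.mulVec x i| ≤ ε}, w x)
      (nhdsWithin 0 (Set.Ioi 0))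
      (nhds (∫ y : Fin k → ℝ,
        w (U⁻¹.mulVec fun j : Fin (2 * k) =>
          if h : (j : ℕ) < k then 0 else y ⟨(j : ℕ) - k, by have := j.isLt; omega⟩))) := by
  have hu : IsUnit U.det := by
    refine isUnit_iff_ne_zero.2 fun h0 => ?_
    simp [h0] at hU
  set T := chart U hu with hT
  have hTM : ∀ p i, M.mulVec (T p) i = p.1 i := by
    intro p i
    have h1 : M.mulVec (T p) i = U.mulVec (T p) ⟨i, by omega⟩ := by
      simp only [Matrix.mulVec, dotProduct, hM]
    rw [h1]
    exact congrFun (congrArg Prod.fst (T.symm_apply_apply p)) i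
  have hF : Continuous (w ∘ T) := hw.comp T.continuous
  have hF' : HasCompactSupport (w ∘ T) := hw2.comp_homeomorph T
  have key : ∀ ε : ℝ, 0 < ε →
      ∫ x in {x : Fin (2 * k) → ℝ | ∀ i, |M.mulVec x i| ≤ ε}, w x
        = ∫ a in Metric.closedBall (0 : Fin k → ℝ) ε, ∫ b : Fin k → ℝ, (w ∘ T) (a, b) := by
    intro ε hε
    have hpre : T ⁻¹' {x : Fin (2 * k) → ℝ | ∀ i, |M.mulVec x i| ≤ ε}
        = Metric.closedBall (0 : Fin k → ℝ) ε ×ˢ Set.univ := by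
      ext p
      simp [hTM, pi_norm_le_iff_of_nonneg hε.le]
    rw [← (measurePreserving_chart U hu hU).setIntegral_preimage_emb
      T.measurableEmbedding w, hpre, Measure.volume_eq_prod]
    have h := setIntegral_prod (μ := (volume : Measure (Fin k → ℝ)))
      (ν := (volume : Measure (Fin k → ℝ))) (w ∘ T) (s := Metric.closedBall 0 ε) (t := Set.univ)
      (hF.integrable_of_hasCompactSupport hF').integrableOn
    simp only [Measure.restrict_univ] at h
    exact h
  have h := tendsto_average_cube (continuous_integral_slice
    (μ := (volume : Measure (Fin k → ℝ))) hF hF')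
  refine h.congr' ?_
  filter_upwards [self_mem_nhdsWithin] with ε hε
  rw [key ε hε]
end

section
/- There is a constant C depending only on m ∈ {4,6} with the following property. Let F = F₁x₁³ + ⋯ + F_mx_m³ with F₁,…,F_m nonzero integers, fix a partition of {1,…,m} into m/2 pairs {i_k,j_k} and rationals t_k with t_k³ = F_{j_k}/F_{i_k}, let c ∈ ℤ^m satisfy c_{j_k} = t_k·c_{i_k} for all k, and let p be a prime with p ∤ 6·F₁⋯F_m satisfying the nondegeneracy condition. Then the number N of x ∈ 𝔽_p^m with F(x) = 0 and c₁x₁ + ⋯ + c_mx_m = 0 (coefficients reduced mod p) satisfies |N − p^{m−2} − p^{m/2}| ≤ C·p^{(m−1)/2}. -/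
open scoped BigOperators

/-!
The trivial linear relations make the problem diagonalisable. On the pair `{i, j}` with ratio `t`,
put `x_i = u + v` and `t x_j = u - v`; then `F_i x_i³ + F_j x_j³ = 2 F_i (u³ + 3 u v²)` and
`c_i x_i + c_j x_j = 2 c_i u`. So one counts pairs `(u, v)` with `c · u = 0` lying on a variety that,
for fixed `u`, is a diagonal quadric in `v` (`card_eq_sum_pairs`). The fibre over `u = 0` is everything
and gives the term `p^{m/2}`. The other fibres are quadrics whose points are counted exactly by the
quadratic character `χ` (`count_binary`, `count_ternary`).

For `m = 4` the fibres over `u ≠ 0` have `p ± 1` points, and the error is `O(p)` (`count_two`).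
For `m = 6` a generic fibre has `p² + p χ(G(u))` points with `G` a form of degree six, so a sum of
`χ ∘ G` over the plane `c · u = 0` remains (`count_three`). By homogeneity it is `p - 1` times a sum
over one line, and nondegeneracy for pairs puts a simple zero of `G` at infinity on that line, leaving
a polynomial of degree five (`sum_quadraticChar_sextic`). The required square-root cancellation,
`abs_sum_quadraticChar_eval_le`, is the Weil bound for a genus-two curve; it is proved by Stepanov's
polynomial method (`stepanov`), which is especially simple in odd degree over a prime field.

Of the nondegeneracy condition only the sets `S` with one or two elements are needed: they say that
`c_i ≠ 0` and `F_i c_j³ ≠ F_j c_i³` in `𝔽_p`.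
-/

/-! ### Stepanov's method and the Weil bound for quintics -/

open Polynomial in
/-- Differentiating `f ^ n * Q` up to `n` times costs one factor `f` each time, and the cofactor
gains degree at most `deg f - 1`, here `4`. -/
lemma iterate_derivative_pow_mul_form {R : Type*} [CommRing R] (f Q : R[X])
    (hf : f.natDegree ≤ 5) (n k : ℕ) (hk : k ≤ n) :
    ∃ E : R[X], E.natDegree ≤ Q.natDegree + 4 * k ∧
      derivative^[k] (f ^ n * Q) = f ^ (n - k) * E := by
  induction k with
  | zero => exact ⟨Q, by simp, by simp⟩
  | succ k ih =>
    obtain ⟨E, hE, h⟩ := ih (by omega)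
    refine ⟨((n - k : ℕ) : R[X]) * (derivative f * E) + f * derivative E, ?_, ?_⟩
    · have hf' := natDegree_derivative_le f
      refine natDegree_add_le_of_degree_le ?_ ?_
      · refine (natDegree_mul_le).trans ?_
        have := natDegree_mul_le (p := derivative f) (q := E)
        simp only [natDegree_natCast]
        omega
      · by_cases h0 : E.natDegree = 0
        · rw [natDegree_eq_zero] at h0
          obtain ⟨c, rfl⟩ := h0
          simp
        · have := natDegree_derivative_lt h0
          have := natDegree_mul_le (p := f) (q := derivative E)
          omega
    · rw [Function.iterate_succ_apply', h, derivative_mul, derivative_pow]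
      obtain ⟨r, hr⟩ : ∃ r, n - k = r + 1 := ⟨n - k - 1, by omega⟩
      rw [show n - (k + 1) = r by omega, hr]
      simp only [Nat.add_sub_cancel, pow_succ, map_natCast]
      ring

open Polynomial in
/-- Powers of `X ^ p` are constants for the derivation in characteristic `p`. -/
lemma iterate_derivative_X_pow_char_mul {p : ℕ} (j k : ℕ) (h : (ZMod p)[X]) :
    derivative^[k] (X ^ (p * j) * h) = X ^ (p * j) * derivative^[k] h := by
  induction k with
  | zero => rfl
  | succ k ih =>
    rw [Function.iterate_succ_apply', ih, derivative_mul, Function.iterate_succ_apply']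
    simp [derivative_X_pow]

open Polynomial in
/-- Stepanov's method. A nonzero combination `P` of the polynomials
`X ^ i * X ^ (p * j) * f ^ (l + e * h)` with `i < A`, `j < J`, `e < 2` is made to vanish to order
`l` at every `x` with `f(x) ^ h = a`; comparing with `deg P` bounds the number of such `x`.
The inequality `hcount` says that the vanishing conditions are fewer than the coefficients. -/
lemma stepanov (p : ℕ) [Fact p.Prime] (f : (ZMod p)[X]) (hf : f.natDegree = 5)
    (h l J A : ℕ) (hp : p = 2 * h + 1) (hA : A + 2 ≤ h) (hl : l ≤ p)
    (hcount : l * (A + J + 4 * l) < A * J * 2) (a : ZMod p) :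
    l * (Finset.univ.filter fun x : ZMod p => (f.eval x) ^ h = a).card
      ≤ 5 * l + A + p * J + 5 * h := by
  classical
  have hf0 : f ≠ 0 := by rintro rfl; simp at hf
  have hx : ∀ i : Fin A × Fin J × Fin 2, ∀ k : Fin l, ∃ E : (ZMod p)[X],
      E.natDegree ≤ i.1 + 4 * k ∧
      derivative^[k] (f ^ (l + i.2.2 * h) * X ^ (i.1 : ℕ)) = f ^ (l + i.2.2 * h - k) * E := by
    intro i k
    have := iterate_derivative_pow_mul_form f (X ^ (i.1 : ℕ)) hf.le (l + i.2.2 * h) k (by omega)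
    simpa using this
  choose E hEdeg hE using hx
  -- At a point `x` with `x ^ p = x` and `f(x) ^ h = a`, the `k`-th derivative of the basis
  -- polynomial of index `i` is `f(x) ^ (l - k)` times the value of the low-degree `T i k`.
  set T : Fin A × Fin J × Fin 2 → Fin l → (ZMod p)[X] :=
    fun i k => C (a ^ (i.2.2 : ℕ)) * (X ^ (i.2.1 : ℕ) * E i k) with hT
  have hTdeg : ∀ i k, (T i k).natDegree < A + J + 4 * l := by
    intro i k
    have h1 := natDegree_C_mul_le (a ^ (i.2.2 : ℕ)) (X ^ (i.2.1 : ℕ) * E i k)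
    have h2 := natDegree_mul_le (p := (X : (ZMod p)[X]) ^ (i.2.1 : ℕ)) (q := E i k)
    have h3 := hEdeg i k
    simp only [natDegree_X_pow] at h2
    simp only [hT]
    have := i.1.2; have := i.2.1.2; have := k.2
    omega
  let M : Matrix (Fin l × Fin (A + J + 4 * l)) (Fin A × Fin J × Fin 2) (ZMod p) :=
    Matrix.of fun r i => (T i r.1).coeff r.2
  have hker : LinearMap.ker M.mulVecLin ≠ ⊥ := by
    apply LinearMap.ker_ne_bot_of_finrank_lt
    simp only [Module.finrank_fintype_fun_eq_card, Fintype.card_prod, Fintype.card_fin]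
    nlinarith
  obtain ⟨w, hwM, hw⟩ := Submodule.exists_mem_ne_zero_of_ne_bot hker
  have hσ : ∀ k, ∑ i, C (w i) * T i k = 0 := by
    intro k
    ext n
    simp only [finsetSum_coeff, coeff_C_mul, coeff_zero]
    by_cases hn : n < A + J + 4 * l
    · have := congrFun (LinearMap.mem_ker.1 hwM) (k, ⟨n, hn⟩)
      simp only [Matrix.mulVecLin_apply, Matrix.mulVec, dotProduct, M, Matrix.of_apply,
        Pi.zero_apply] at this
      rw [← this]
      exact Finset.sum_congr rfl fun i _ => mul_comm _ _
    · refine Finset.sum_eq_zero fun i _ => ?_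
      rw [coeff_eq_zero_of_natDegree_lt ((hTdeg i k).trans_le (not_lt.1 hn)), mul_zero]
  set B : Fin A × Fin J × Fin 2 → (ZMod p)[X] :=
    fun i => C (w i) * (X ^ (p * i.2.1) * (f ^ (l + i.2.2 * h) * X ^ (i.1 : ℕ))) with hB
  -- Since `5 * h = 2 * p + (h - 2)`, the part of the degree before `p * _` is a residue below `p`
  -- that determines both `i.1` and `i.2.2`: this is where the odd degree of `f` is used.
  have hBdeg : ∀ i, B i ≠ 0 →
      (B i).natDegree = (i.1 + i.2.2 * (h - 2) : ℕ) + p * (i.2.1 + 2 * i.2.2) + 5 * l := by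
    intro i hi
    have hwi : w i ≠ 0 := by
      intro h0; apply hi; simp [hB, h0]
    simp only [hB]
    rw [natDegree_C_mul hwi, natDegree_mul (by simp) (by simp [hf0]),
      natDegree_mul (by simp [hf0]) (by simp), natDegree_pow f, hf, natDegree_X_pow, natDegree_X_pow]
    have := i.2.2.2
    obtain ⟨g, rfl⟩ : ∃ g, h = g + 2 := ⟨h - 2, by omega⟩
    subst hp
    simp only [Nat.add_sub_cancel]
    ring
  have hBinj : ∀ i j, B i ≠ 0 → B j ≠ 0 → (B i).natDegree = (B j).natDegree → i = j := by
    intro i j hi hj hij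
    rw [hBdeg i hi, hBdeg j hj] at hij
    have hij := Nat.add_right_cancel hij
    have key : ∀ i : Fin A × Fin J × Fin 2, (i.1 + i.2.2 * (h - 2) : ℕ) < p := by
      intro i
      have := i.1.2
      have : (i.2.2 : ℕ) * (h - 2) ≤ 1 * (h - 2) := Nat.mul_le_mul_right _ (by omega)
      omega
    have e1 := congrArg (· % p) hij
    have e2 := congrArg (· / p) hij
    have hp0 : 0 < p := by omega
    simp only [Nat.add_mul_mod_self_left, Nat.mod_eq_of_lt (key i), Nat.mod_eq_of_lt (key j)] at e1
    simp only [Nat.add_mul_div_left _ _ hp0, Nat.div_eq_of_lt (key i), Nat.div_eq_of_lt (key j)]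
      at e2
    obtain ⟨i1, i2, i3⟩ := i
    obtain ⟨j1, j2, j3⟩ := j
    have hi1 := i1.2
    have hj1 := j1.2
    simp only [Prod.mk.injEq, Fin.ext_iff] at *
    have h3 := i3.2
    have h4 := j3.2
    obtain h5 | h5 : (i3 : ℕ) = 0 ∨ (i3 : ℕ) = 1 := by omega
    all_goals obtain h6 | h6 : (j3 : ℕ) = 0 ∨ (j3 : ℕ) = 1 := by omega
    all_goals rw [h5, h6] at e1 e2
    all_goals omega
  set P := ∑ i, B i with hPdef
  -- Polynomials of pairwise distinct degrees cannot cancel.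
  have hP : P ≠ 0 := by
    have hd := degree_sum_eq_of_disjoint B Finset.univ (by
      intro i hi j hj hne heq
      exact hne (hBinj i j hi.2 hj.2 (natDegree_eq_of_degree_eq heq)))
    obtain ⟨i, hi⟩ := Function.ne_iff.1 hw
    have hi : w i ≠ 0 := hi
    have hBi : B i ≠ 0 := by simp [hB, hi, hf0]
    intro h0
    rw [← hPdef, h0, degree_zero] at hd
    have := Finset.le_sup (f := fun i => degree (B i)) (Finset.mem_univ i)
    rw [← hd, le_bot_iff, degree_eq_bot] at this
    exact hBi this
  have hPdeg : P.natDegree ≤ 5 * l + A + p * J + 5 * h := by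
    apply natDegree_sum_le_of_forall_le
    intro i _
    by_cases hi : B i = 0
    · simp [hi]
    rw [hBdeg i hi]
    have h1 := i.1.2
    have h2 := i.2.1.2
    have h4 : p * (i.2.1 : ℕ) ≤ p * J := Nat.mul_le_mul_left _ h2.le
    obtain h5 | h5 : (i.2.2 : ℕ) = 0 ∨ (i.2.2 : ℕ) = 1 := by omega
    all_goals rw [h5]
    · simp only [Nat.zero_mul, Nat.mul_zero, Nat.add_zero]
      omega
    · rw [Nat.mul_add]
      omega
  have hroot : ∀ x : ZMod p, (f.eval x) ^ h = a → l ≤ P.rootMultiplicity x := by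
    intro x hxa
    obtain _ | l' := l
    · simp
    rw [Nat.succ_le_iff]
    apply lt_rootMultiplicity_of_isRoot_iterate_derivative_of_mem_nonZeroDivisors hP
    · intro k hk
      let k' : Fin (l' + 1) := ⟨k, by omega⟩
      have hs := congrArg (eval x) (hσ k')
      rw [hPdef, iterate_derivative_sum, IsRoot.def, eval_finsetSum]
      rw [eval_finsetSum, eval_zero] at hs
      have : ∀ i, eval x (derivative^[k] (B i)) =
          (f.eval x) ^ (l' + 1 - k) * eval x (C (w i) * T i k') := by
        intro i
        simp only [hB, hT]
        rw [iterate_derivative_C_mul, iterate_derivative_X_pow_char_mul, hE i k']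
        simp only [eval_mul, eval_C, eval_pow, eval_X, pow_mul, ZMod.pow_card, ← hxa]
        rw [show l' + 1 + (i.2.2 : ℕ) * h - (k' : ℕ) = (l' + 1 - k) + h * i.2.2 by
          simp only [k']; rw [Nat.mul_comm]; omega, pow_add, pow_mul]
        ring
      simp only [this, ← Finset.mul_sum, hs, mul_zero]
    · rw [mem_nonZeroDivisors_iff_ne_zero]
      intro h0
      rw [ZMod.natCast_eq_zero_iff, (Fact.out : p.Prime).dvd_factorial] at h0
      omega
  calc l * (Finset.univ.filter fun x : ZMod p => (f.eval x) ^ h = a).card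
      = ∑ x ∈ Finset.univ.filter (fun x : ZMod p => (f.eval x) ^ h = a), l := by
        rw [Finset.sum_const, smul_eq_mul, mul_comm]
    _ ≤ ∑ x ∈ Finset.univ.filter (fun x : ZMod p => (f.eval x) ^ h = a), P.roots.count x := by
        refine Finset.sum_le_sum fun x hx => ?_
        rw [count_roots]
        exact hroot x (Finset.mem_filter.1 hx).2
    _ ≤ ∑ x : ZMod p, P.roots.count x :=
        Finset.sum_le_sum_of_subset (Finset.filter_subset _ _)
    _ = P.roots.card := Multiset.sum_count_eq_card (fun _ _ => Finset.mem_univ _)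
    _ ≤ P.natDegree := card_roots' P
    _ ≤ _ := hPdeg

lemma quadraticChar_abs_le_one {p : ℕ} [Fact p.Prime] (x : ZMod p) :
    |(quadraticChar (ZMod p) x)| ≤ 1 := by
  rcases quadraticChar_isQuadratic (ZMod p) x with h | h | h <;> rw [h] <;> norm_num

open Polynomial in
/-- Square-root cancellation for the quadratic character along a quintic polynomial over `𝔽_p`,
that is, the Weil bound for `y² = f(x)` with an unoptimised constant. -/
lemma abs_sum_quadraticChar_eval_le (p : ℕ) [Fact p.Prime] (hp2 : p ≠ 2) (f : (ZMod p)[X])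
    (hf : f.natDegree = 5) :
    |((∑ x : ZMod p, quadraticChar (ZMod p) (f.eval x) : ℤ) : ℝ)| ≤ 200 * √(p : ℝ) := by
  classical
  have hpp : p.Prime := Fact.out
  -- For small `p` the trivial bound `p` is enough, because `√p ≤ 200`.
  by_cases hsmall : p ≤ 40000
  · have h1 : |∑ x : ZMod p, quadraticChar (ZMod p) (f.eval x)| ≤ p := by
      refine (Finset.abs_sum_le_sum_abs _ _).trans ?_
      refine (Finset.sum_le_card_nsmul _ _ 1 fun x _ => quadraticChar_abs_le_one _).trans ?_
      simp
    have h2 : |((∑ x : ZMod p, quadraticChar (ZMod p) (f.eval x) : ℤ) : ℝ)| ≤ p := by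
      exact_mod_cast h1
    have h3 : √(p : ℝ) ≤ 200 := by
      rw [Real.sqrt_le_left (by norm_num)]
      norm_num
      exact_mod_cast hsmall
    have h4 := Real.mul_self_sqrt (Nat.cast_nonneg (α := ℝ) p)
    nlinarith [Real.sqrt_nonneg (p : ℝ)]
  obtain ⟨h, hh⟩ : ∃ h, p = 2 * h + 1 := hpp.odd_of_ne_two hp2
  have hch : ringChar (ZMod p) ≠ 2 := by rwa [ZMod.ringChar_zmod_n]
  set s := Nat.sqrt p with hs
  have hs1 : s * s ≤ p := Nat.sqrt_le p
  have hs2 : p < (s + 1) * (s + 1) := Nat.lt_succ_sqrt p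
  have hs3 : 200 ≤ s := by nlinarith
  set S : ZMod p → ℕ := fun a => (Finset.univ.filter fun x : ZMod p => (f.eval x) ^ h = a).card
    with hS
  -- Stepanov's method with multiplicity `s ≈ √p`, `A = h - 2` as large as allowed, and `J` just
  -- above `s / 2` so that there are more coefficients than conditions.
  have hSle : ∀ a, 2 * S a ≤ p + 26 * s + 62 := by
    intro a
    have hJ1 : s + 19 ≤ 2 * (s / 2 + 10) := by omega
    have hJ2 : 2 * (s / 2 + 10) ≤ s + 20 := by omega
    generalize s / 2 + 10 = J at hJ1 hJ2
    obtain ⟨A, rfl⟩ : ∃ A, h = A + 2 := ⟨h - 2, by omega⟩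
    have := stepanov p f hf (A + 2) s J A hh le_rfl (by nlinarith) (by
      have e1 := Nat.mul_le_mul_left A hJ1
      have e2 := Nat.mul_le_mul_left s hJ2
      nlinarith) a
    change s * S a ≤ _ at this
    have e3 := Nat.mul_le_mul_left p hJ2
    have : s * (2 * S a) ≤ s * (p + 26 * s + 62) := by nlinarith
    exact Nat.le_of_mul_le_mul_left this (by omega)
  set Z := (Finset.univ.filter fun x : ZMod p => f.eval x = 0).card with hZ
  have hZle : Z ≤ 5 := by
    rw [← hf]
    refine le_trans ?_ (card_roots' f)
    refine le_trans (Finset.card_le_card ?_) (Multiset.toFinset_card_le f.roots)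
    intro x hx
    have hf0 : f ≠ 0 := by rintro rfl; simp at hf
    simpa [hf0] using hx
  have h1 : ∀ x : ZMod p, x = 0 ∨ x ^ h = 1 ∨ x ^ h = -1 := by
    intro x
    by_cases hx : x = 0
    · exact Or.inl hx
    · right
      have := FiniteField.pow_dichotomy hch hx
      rwa [ZMod.card, show p / 2 = h by omega] at this
  have hne : (1 : ZMod p) ≠ -1 := (Ring.neg_one_ne_one_of_char_ne_two hch).symm
  have hh0 : h ≠ 0 := by omega
  have h2 : ∀ x : ZMod p, quadraticChar (ZMod p) x =
      (if x ^ h = 1 then 1 else 0) - (if x ^ h = -1 then 1 else 0) := by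
    intro x
    by_cases hx : x = 0
    · simp [hx, hh0]
    · rw [quadraticChar_eq_pow_of_char_ne_two hch hx, ZMod.card,
        show p / 2 = h by omega]
      rcases (h1 x).resolve_left hx with h3 | h3 <;> simp [h3, hne, hne.symm]
  have hsum : ∑ x : ZMod p, quadraticChar (ZMod p) (f.eval x) = (S 1 : ℤ) - S (-1) := by
    simp only [h2, Finset.sum_sub_distrib, Finset.sum_boole, hS]
  -- The two level sets and the at most five zeros of `f` exhaust `𝔽_p`, so the upper bounds for
  -- both level sets give lower bounds as well.
  have hcov : p ≤ Z + (S 1 + S (-1)) := by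
    have : (Finset.univ : Finset (ZMod p)) ⊆ (Finset.univ.filter fun x : ZMod p => f.eval x = 0) ∪
        ((Finset.univ.filter fun x : ZMod p => (f.eval x) ^ h = 1) ∪
        (Finset.univ.filter fun x : ZMod p => (f.eval x) ^ h = -1)) := by
      intro x _
      simpa using h1 (f.eval x)
    have h3 := (Finset.card_le_card this).trans (Finset.card_union_le _ _)
    have h4 := Finset.card_union_le (Finset.univ.filter fun x : ZMod p => (f.eval x) ^ h = 1)
        (Finset.univ.filter fun x : ZMod p => (f.eval x) ^ h = -1)
    rw [Finset.card_univ, ZMod.card] at h3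
    simp only [hS]
    omega
  have hfin : |(S 1 : ℤ) - S (-1)| ≤ 200 * s := by
    have := hSle 1
    have := hSle (-1)
    rw [abs_le]
    omega
  rw [hsum]
  calc |(((S 1 : ℤ) - S (-1) : ℤ) : ℝ)| ≤ 200 * (s : ℝ) := by exact_mod_cast hfin
    _ ≤ 200 * √(p : ℝ) := by
      have := Real.nat_sqrt_le_real_sqrt (a := p)
      gcongr

/-! ### Points on diagonal quadrics -/

section quadrics
variable {F : Type*} [Field F] [Fintype F] [DecidableEq F]

lemma sum_mul_sq_eq (hF : ringChar F ≠ 2) (α d : F) (hα : α ≠ 0) :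
    ∑ v : F, (if α * v ^ 2 = d then (1 : ℤ) else 0) = quadraticChar F (α * d) + 1 := by
  have h := quadraticChar_card_sqrts hF (d / α)
  have e : α * d = d / α * α ^ 2 := by field_simp
  rw [e, map_mul, quadraticChar_sq_one' hα, mul_one, ← h, Finset.sum_boole]
  congr 2
  ext v
  simp only [Finset.mem_filter, Finset.mem_univ, true_and, Set.mem_toFinset, Set.mem_ofPred_eq]
  rw [eq_div_iff hα, mul_comm]

lemma sum_quadraticChar_linear (hF : ringChar F ≠ 2) (α β : F) (hα : α ≠ 0) :
    ∑ v : F, quadraticChar F (α * v + β) = 0 := by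
  rw [← quadraticChar_sum_zero hF]
  exact Fintype.sum_equiv ((Equiv.mulLeft₀ α hα).trans (Equiv.addRight β)) _ _ fun v => rfl

lemma sum_quadraticChar_quadratic (hF : ringChar F ≠ 2) (α β : F) (hα : α ≠ 0) :
    ∑ v : F, quadraticChar F (α * v ^ 2 + β) =
      quadraticChar F α * (if β = 0 then (Fintype.card F : ℤ) - 1 else -1) := by
  by_cases hβ : β = 0
  · have h : ∀ v : F, quadraticChar F (α * v ^ 2 + β) =
        quadraticChar F α * (1 - if v = 0 then 1 else 0) := by
      intro v
      by_cases hv : v = 0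
      · simp [hβ, hv]
      · simp [hβ, hv, map_mul, quadraticChar_sq_one' hv, -map_pow]
    rw [Finset.sum_congr rfl fun v _ => h v, ← Finset.mul_sum, Finset.sum_sub_distrib, if_pos hβ]
    simp
  · -- group the `v` according to `w = v ^ 2`, which has `χ(w) + 1` square roots
    have h1 : ∑ v : F, quadraticChar F (α * v ^ 2 + β) =
        ∑ w : F, (quadraticChar F w + 1) * quadraticChar F (α * w + β) := by
      have h : ∀ w : F, (quadraticChar F w + 1) * quadraticChar F (α * w + β) =
          ∑ v : F, if w = v ^ 2 then quadraticChar F (α * v ^ 2 + β) else 0 := by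
        intro w
        have := sum_mul_sq_eq hF 1 w one_ne_zero
        rw [one_mul] at this
        rw [← this, Finset.sum_mul]
        refine Finset.sum_congr rfl fun v _ => ?_
        by_cases hv : w = v ^ 2
        · simp [hv]
        · rw [if_neg hv, one_mul, if_neg (Ne.symm hv), zero_mul]
      simp only [h]
      rw [Finset.sum_comm]
      simp
    -- `χ(w) χ(α w + β) = χ(α + β / w)` off `w = 0`; the correction at `w = 0` uses `0⁻¹ = 0`
    have h2 : ∀ w : F, (quadraticChar F w + 1) * quadraticChar F (α * w + β) =
        quadraticChar F (β * w⁻¹ + α) - (if w = 0 then quadraticChar F α else 0)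
          + quadraticChar F (α * w + β) := by
      intro w
      by_cases hw : w = 0
      · simp [hw]
      · rw [if_neg hw, add_mul, ← map_mul, one_mul, sub_zero,
          show w * (α * w + β) = (β * w⁻¹ + α) * w ^ 2 by field_simp; ring, map_mul,
          quadraticChar_sq_one' hw, mul_one]
    have h3 : ∑ w : F, quadraticChar F (β * w⁻¹ + α) = 0 := by
      rw [← sum_quadraticChar_linear hF β α hβ]
      exact Fintype.sum_equiv (Equiv.inv F) _ _ fun v => rfl
    rw [h1]
    simp only [h2, Finset.sum_add_distrib, Finset.sum_sub_distrib, h3,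
      sum_quadraticChar_linear hF α β hα, hβ, if_false]
    simp

lemma count_binary (hF : ringChar F ≠ 2) (α β b : F) (hα : α ≠ 0) (hβ : β ≠ 0) :
    ∑ x : F, ∑ y : F, (if α * x ^ 2 + β * y ^ 2 = b then (1 : ℤ) else 0) =
      Fintype.card F + quadraticChar F (-(α * β)) *
        (if b = 0 then (Fintype.card F : ℤ) - 1 else -1) := by
  have h : ∀ x : F, ∑ y : F, (if α * x ^ 2 + β * y ^ 2 = b then (1 : ℤ) else 0) =
      1 + quadraticChar F (-(α * β) * x ^ 2 + β * b) := by
    intro x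
    have := sum_mul_sq_eq hF β (b - α * x ^ 2) hβ
    simp only [eq_sub_iff_add_eq'] at this
    rw [this, add_comm]
    congr 2
    ring
  simp only [h, Finset.sum_add_distrib]
  rw [sum_quadraticChar_quadratic hF _ _ (by simp [hα, hβ])]
  simp [hβ]

lemma count_ternary (hF : ringChar F ≠ 2) (α β γ b : F) (hα : α ≠ 0) (hβ : β ≠ 0)
    (hγ : γ ≠ 0) :
    ∑ x : F, ∑ y : F, ∑ z : F,
      (if α * x ^ 2 + β * y ^ 2 + γ * z ^ 2 = b then (1 : ℤ) else 0) =
      (Fintype.card F : ℤ) ^ 2 + Fintype.card F * quadraticChar F (-(α * β * γ * b)) := by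
  have h : ∀ x : F, ∑ y : F, ∑ z : F,
      (if α * x ^ 2 + β * y ^ 2 + γ * z ^ 2 = b then (1 : ℤ) else 0) =
      Fintype.card F + quadraticChar F (-(β * γ)) *
        (Fintype.card F * (if α * x ^ 2 = b then 1 else 0) - 1) := by
    intro x
    have := count_binary hF β γ (b - α * x ^ 2) hβ hγ
    simp only [eq_sub_iff_add_eq', ← add_assoc, sub_eq_zero] at this
    rw [this]
    congr 2
    by_cases hb : α * x ^ 2 = b
    · simp [hb]
    · simp [hb, Ne.symm hb]
  simp only [h, Finset.sum_add_distrib, ← Finset.mul_sum, Finset.sum_sub_distrib,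
    sum_mul_sq_eq hF α b hα]
  have key : quadraticChar F (-(α * β * γ * b)) =
      quadraticChar F (-(β * γ)) * quadraticChar F (α * b) := by
    rw [← map_mul]
    congr 1
    ring
  rw [key, Finset.sum_const, Finset.sum_const, Finset.card_univ]
  simp only [nsmul_eq_mul]
  ring

end quadrics

/-! ### Summation over the fibres -/

section counts
variable {p : ℕ} [Fact p.Prime]

/-- The case of two pairs. Each fibre over a point `u ≠ 0` of the line `c · u = 0` is a
nondegenerate binary quadratic equation with `p ± 1` solutions; the fibre over `u = 0` is all of
`𝔽_p²`. -/
lemma count_two (hp2 : p ≠ 2) (h3 : (3 : ZMod p) ≠ 0) (a c : Fin 2 → ZMod p)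
    (ha : ∀ i, a i ≠ 0) (hc : ∀ i, c i ≠ 0) (hnd : a 0 * c 1 ^ 3 ≠ a 1 * c 0 ^ 3) :
    |(∑ u : Fin 2 → ZMod p, ∑ v : Fin 2 → ZMod p,
      if ∑ i, a i * (u i ^ 3 + 3 * u i * v i ^ 2) = 0 ∧ ∑ i, c i * u i = 0 then (1 : ℤ) else 0)
        - p ^ 2 - p ^ 2| ≤ 2 * p := by
  have hch : ringChar (ZMod p) ≠ 2 := by rwa [ZMod.ringChar_zmod_n]
  -- `n x` counts the `v` lying over the point `u = (x, w x)` of the line `c · u = 0`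
  set w : ZMod p → ZMod p := fun x => -(c 0 * x) / c 1 with hw
  set n : ZMod p → ℤ := fun x => ∑ y : ZMod p, ∑ z : ZMod p,
    if a 0 * (x ^ 3 + 3 * x * y ^ 2) + a 1 * (w x ^ 3 + 3 * w x * z ^ 2) = 0
      then (1 : ℤ) else 0 with hn
  have hN : (∑ u : Fin 2 → ZMod p, ∑ v : Fin 2 → ZMod p,
      if ∑ i, a i * (u i ^ 3 + 3 * u i * v i ^ 2) = 0 ∧ ∑ i, c i * u i = 0
        then (1 : ℤ) else 0) = ∑ x : ZMod p, n x := by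
    have hsplit : ∀ G : (Fin 2 → ZMod p) → ℤ,
        ∑ u : Fin 2 → ZMod p, G u = ∑ x : ZMod p, ∑ y : ZMod p, G ![x, y] := by
      intro G
      rw [← Fintype.sum_prod_type']
      exact Fintype.sum_equiv (piFinTwoEquiv fun _ => ZMod p) _ _ fun u => by
        congr 1; ext i; fin_cases i <;> rfl
    rw [hsplit]
    refine Finset.sum_congr rfl fun x _ => ?_
    simp only [hsplit, Fin.sum_univ_two, Matrix.cons_val_zero, Matrix.cons_val_one]
    rw [Finset.sum_eq_single (w x)]
    · have : c 0 * x + c 1 * w x = 0 := by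
        simp only [hw]; field_simp [hc 1]; ring
      simp only [this, and_true, hn]
    · intro y _ hy
      have : ¬ (c 0 * x + c 1 * y = 0) := by
        intro h
        apply hy
        simp only [hw]
        rw [eq_div_iff (hc 1)]
        linear_combination h
      simp [this]
    · simp
  have hbd : ∀ x : ZMod p, |n x - p - (if x = 0 then (p : ℤ) ^ 2 - p else 0)| ≤ 1 := by
    intro x
    by_cases hx : x = 0
    · have : n x = p ^ 2 := by
        simp [hn, hw, hx, sq]
      rw [this, if_pos hx]
      simp
    · have hwx : w x ≠ 0 := by
        simp only [hw]
        exact div_ne_zero (neg_ne_zero.2 (mul_ne_zero (hc 0) hx)) (hc 1)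
      have hb : -(a 0 * x ^ 3 + a 1 * w x ^ 3) ≠ 0 := by
        intro h
        apply hnd
        have h1 : w x * c 1 = -(c 0 * x) := by
          simp only [hw]; field_simp [hc 1]
        have h2 : x ^ 3 * (a 0 * c 1 ^ 3 - a 1 * c 0 ^ 3) = 0 := by
          have h3 : (w x * c 1) ^ 3 = (-(c 0 * x)) ^ 3 := by rw [h1]
          linear_combination (-c 1 ^ 3) * h - a 1 * h3
        rcases mul_eq_zero.1 h2 with h3 | h3
        · exact absurd (pow_eq_zero_iff (by norm_num) |>.1 h3) hx
        · exact sub_eq_zero.1 h3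
      have := count_binary hch (a 0 * (3 * x)) (a 1 * (3 * w x))
        (-(a 0 * x ^ 3 + a 1 * w x ^ 3)) (mul_ne_zero (ha 0) (mul_ne_zero h3 hx))
        (mul_ne_zero (ha 1) (mul_ne_zero h3 hwx))
      rw [if_neg hb, ZMod.card] at this
      have hnx : n x = _ := Eq.trans (by
        simp only [hn]
        refine Finset.sum_congr rfl fun y _ => Finset.sum_congr rfl fun z _ => ?_
        congr 1
        rw [eq_neg_iff_add_eq_zero]
        exact propext ⟨fun h => by linear_combination h, fun h => by linear_combination h⟩) this
      rw [hnx, if_neg hx]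
      have := quadraticChar_abs_le_one (-(a 0 * (3 * x) * (a 1 * (3 * w x))))
      rw [abs_le] at this ⊢
      constructor <;> linarith [this.1, this.2]
  rw [hN]
  have hs : ∑ x : ZMod p, (n x - p - (if x = 0 then (p : ℤ) ^ 2 - p else 0)) =
      (∑ x, n x) - p ^ 2 - (p ^ 2 - p) := by
    rw [Finset.sum_sub_distrib, Finset.sum_sub_distrib]
    simp [sq]
  have hs2 := (Finset.abs_sum_le_sum_abs _ _).trans
    (Finset.sum_le_card_nsmul Finset.univ _ 1 fun x _ => hbd x)
  rw [hs, Finset.card_univ, ZMod.card] at hs2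
  rw [abs_le] at hs2 ⊢
  simp only [nsmul_eq_mul, mul_one] at hs2
  constructor <;> linarith [hs2.1, hs2.2]

open Polynomial in
/-- The character sum over the plane `c · u = 0` of the sextic discriminant of the ternary fibres.
By homogeneity of even degree it is `p - 1` times the sum along `u₀ = 1`. There the sextic becomes a
polynomial of degree `5`, since it has a simple zero at `u₀ = 0` by nondegeneracy. -/
lemma sum_quadraticChar_sextic (hp2 : p ≠ 2) (h3 : (3 : ZMod p) ≠ 0) (a c : Fin 3 → ZMod p)
    (ha : ∀ i, a i ≠ 0) (hc : ∀ i, c i ≠ 0) (hnd : a 1 * c 2 ^ 3 ≠ a 2 * c 1 ^ 3)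
    (w : ZMod p → ZMod p → ZMod p) (hw : w = fun x y => -(c 0 * x + c 1 * y) / c 2) :
    |((∑ x : ZMod p, ∑ y : ZMod p, quadraticChar (ZMod p) (27 * a 0 * a 1 * a 2 *
      (x * y * w x y) * (a 0 * x ^ 3 + a 1 * y ^ 3 + a 2 * w x y ^ 3)) : ℤ) : ℝ)|
      ≤ p * (200 * √(p : ℝ)) := by
  set D : ZMod p := 27 * a 0 * a 1 * a 2 with hD
  have hD0 : D ≠ 0 := by
    have : (27 : ZMod p) = 3 ^ 3 := by norm_num
    rw [hD, this]
    exact mul_ne_zero (mul_ne_zero (mul_ne_zero (pow_ne_zero _ h3) (ha 0)) (ha 1)) (ha 2)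
  set e0 : ZMod p := -c 0 / c 2 with he0
  set e1 : ZMod p := -c 1 / c 2 with he1
  have he1' : e1 ≠ 0 := div_ne_zero (neg_ne_zero.2 (hc 1)) (hc 2)
  have hlead : a 1 + a 2 * e1 ^ 3 ≠ 0 := by
    intro h
    apply hnd
    have h1 : e1 * c 2 = -c 1 := by rw [he1]; field_simp [hc 2]
    have h2 : (e1 * c 2) ^ 3 = (-c 1) ^ 3 := by rw [h1]
    linear_combination c 2 ^ 3 * h - a 2 * h2
  set g : (ZMod p)[X] := C (a 1 + a 2 * e1 ^ 3) * X ^ 3 + C (a 2 * 3 * e1 ^ 2 * e0) * X ^ 2 +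
    C (a 2 * 3 * e1 * e0 ^ 2) * X + C (a 0 + a 2 * e0 ^ 3) with hg
  have hg3 : g.natDegree = 3 := natDegree_cubic hlead
  have hl1 : (C e1 * X + C e0).natDegree = 1 := natDegree_linear he1'
  have hg0 : g ≠ 0 := by intro h; rw [h] at hg3; simp at hg3
  have hl0 : (C e1 * X + C e0 : (ZMod p)[X]) ≠ 0 := by intro h; rw [h] at hl1; simp at hl1
  set f : (ZMod p)[X] := C D * (X * ((C e1 * X + C e0) * g)) with hf
  have hf5 : f.natDegree = 5 := by
    rw [hf, natDegree_C_mul hD0, natDegree_mul X_ne_zero (mul_ne_zero hl0 hg0),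
      natDegree_mul hl0 hg0, hg3, hl1, natDegree_X]
  have hfe : ∀ y, f.eval y = D * (1 * y * (e1 * y + e0)) *
      (a 0 * 1 ^ 3 + a 1 * y ^ 3 + a 2 * (e1 * y + e0) ^ 3) := by
    intro y
    simp only [hf, hg, eval_mul, eval_add, eval_C, eval_X, eval_pow]
    ring
  have hinner : ∀ x : ZMod p, (∑ y : ZMod p, quadraticChar (ZMod p) (D * (x * y * w x y) *
      (a 0 * x ^ 3 + a 1 * y ^ 3 + a 2 * w x y ^ 3))) =
      if x = 0 then 0 else ∑ y : ZMod p, quadraticChar (ZMod p) (f.eval y) := by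
    intro x
    by_cases hx : x = 0
    · simp [hx]
    · rw [if_neg hx]
      symm
      refine Fintype.sum_equiv (Equiv.mulLeft₀ x hx) _ _ fun y => ?_
      have h1 : w x (x * y) = x * (e1 * y + e0) := by
        simp only [hw, he0, he1]
        field_simp [hc 2]
        ring
      change _ = quadraticChar (ZMod p) (D * (x * (x * y) * w x (x * y)) *
        (a 0 * x ^ 3 + a 1 * (x * y) ^ 3 + a 2 * w x (x * y) ^ 3))
      rw [h1, hfe, show D * (x * (x * y) * (x * (e1 * y + e0))) *
        (a 0 * x ^ 3 + a 1 * (x * y) ^ 3 + a 2 * (x * (e1 * y + e0)) ^ 3) =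
        (D * (1 * y * (e1 * y + e0)) *
        (a 0 * 1 ^ 3 + a 1 * y ^ 3 + a 2 * (e1 * y + e0) ^ 3)) * (x ^ 3) ^ 2 by ring,
        map_mul _ _ ((x ^ 3) ^ 2), quadraticChar_sq_one' (pow_ne_zero 3 hx), mul_one]
  rw [Finset.sum_congr rfl fun x _ => hinner x]
  have hweil := abs_sum_quadraticChar_eval_le p hp2 f hf5
  rw [Int.cast_sum]
  refine (Finset.abs_sum_le_sum_abs _ _).trans ?_
  refine (Finset.sum_le_card_nsmul _ _ (200 * √(p : ℝ)) fun x _ => ?_).trans ?_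
  · by_cases hx : x = 0
    · rw [if_pos hx]; simp
    · rw [if_neg hx]; exact hweil
  · rw [Finset.card_univ, ZMod.card, nsmul_eq_mul]

/-- The number of points on a fibre over a point `u ≠ 0` with a vanishing coordinate differs from
`p²` by at most `p`: one variable is free, and the other two satisfy a nondegenerate binary
equation. -/
lemma count_fibre_degenerate (hp2 : p ≠ 2) (α β b : ZMod p) (hα : α ≠ 0) (hβ : β ≠ 0)
    (hb : b ≠ 0) :
    |p * (∑ x : ZMod p, ∑ y : ZMod p, if α * x ^ 2 + β * y ^ 2 = b then (1 : ℤ) else 0)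
      - p ^ 2| ≤ p := by
  have hch : ringChar (ZMod p) ≠ 2 := by rwa [ZMod.ringChar_zmod_n]
  rw [count_binary hch α β b hα hβ, if_neg hb, ZMod.card]
  have h := quadraticChar_abs_le_one (-(α * β))
  have e : (p : ℤ) * (p + quadraticChar (ZMod p) (-(α * β)) * -1) - p ^ 2 =
      p * -(quadraticChar (ZMod p) (-(α * β))) := by ring
  rw [e, abs_mul, abs_neg, Nat.abs_cast]
  exact mul_le_of_le_one_right (by positivity) h

/-- The number of `v` above a point `u = (x, y, w)` of the plane `c · u = 0` is
`p² + p χ(27 a₀ a₁ a₂ · x y w · (a₀ x³ + a₁ y³ + a₂ w³))`, plus `p³ - p²` at the origin, with an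
error of at most `p` for each vanishing coordinate. -/
lemma count_fibre_three (hp2 : p ≠ 2) (h3 : (3 : ZMod p) ≠ 0) (a c : Fin 3 → ZMod p)
    (ha : ∀ i, a i ≠ 0) (hc : ∀ i, c i ≠ 0)
    (hnd : ∀ i j, i ≠ j → a i * c j ^ 3 ≠ a j * c i ^ 3)
    (x y w : ZMod p) (hw : c 0 * x + c 1 * y + c 2 * w = 0) :
    |(∑ v0 : ZMod p, ∑ v1 : ZMod p, ∑ v2 : ZMod p,
      if a 0 * (x ^ 3 + 3 * x * v0 ^ 2) + a 1 * (y ^ 3 + 3 * y * v1 ^ 2)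
        + a 2 * (w ^ 3 + 3 * w * v2 ^ 2) = 0 then (1 : ℤ) else 0)
      - p ^ 2 - p * quadraticChar (ZMod p) (27 * a 0 * a 1 * a 2 *
        (x * y * w) * (a 0 * x ^ 3 + a 1 * y ^ 3 + a 2 * w ^ 3))
      - (if y = 0 then if x = 0 then (p : ℤ) ^ 3 - p ^ 2 else 0 else 0)|
      ≤ (if x = 0 then (p : ℤ) else 0) + (if y = 0 then (p : ℤ) else 0)
        + (if w = 0 then (p : ℤ) else 0) := by
  have hch : ringChar (ZMod p) ≠ 2 := by rwa [ZMod.ringChar_zmod_n]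
  have hp0 : (0 : ℤ) ≤ p := by positivity
  -- If one coordinate vanishes, the nondegeneracy condition for the other two keeps the constant
  -- term of their binary equation nonzero.
  have hnz : ∀ i j, i ≠ j → ∀ s t : ZMod p, c i * s + c j * t = 0 → s ≠ 0 →
      t ≠ 0 ∧ -(a i * s ^ 3 + a j * t ^ 3) ≠ 0 := by
    intro i j hij s t h hs
    constructor
    · rintro rfl
      simp [hc i, hs] at h
    · intro hb
      apply hnd i j hij
      have h1 : t * c j = -(c i * s) := by linear_combination h
      have h2 : (t * c j) ^ 3 = (-(c i * s)) ^ 3 := by rw [h1]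
      have h3 : s ^ 3 * (a i * c j ^ 3 - a j * c i ^ 3) = 0 := by
        linear_combination (-c j ^ 3) * hb - a j * h2
      rcases mul_eq_zero.1 h3 with h4 | h4
      · exact absurd (pow_eq_zero_iff (by norm_num) |>.1 h4) hs
      · exact sub_eq_zero.1 h4
  by_cases hx : x = 0
  · subst hx
    by_cases hy : y = 0
    · subst hy
      have hw0 : w = 0 := by simpa [hc 2] using hw
      subst hw0
      have e : (p : ℤ) * (p * p) - p ^ 2 - (p ^ 3 - p ^ 2) = 0 := by ring
      simp [e]
      positivity
    · obtain ⟨hw0, hb⟩ := hnz 1 2 (by decide) y w (by linear_combination hw) hy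
      have := count_fibre_degenerate hp2 (a 1 * (3 * y)) (a 2 * (3 * w)) _
        (mul_ne_zero (ha 1) (mul_ne_zero h3 hy)) (mul_ne_zero (ha 2) (mul_ne_zero h3 hw0)) hb
      simp only [eq_neg_iff_add_eq_zero] at this
      have e : ∀ v0 v1 v2 : ZMod p, a 0 * (0 ^ 3 + 3 * 0 * v0 ^ 2) + a 1 * (y ^ 3 + 3 * y * v1 ^ 2)
          + a 2 * (w ^ 3 + 3 * w * v2 ^ 2) =
          a 1 * (3 * y) * v1 ^ 2 + a 2 * (3 * w) * v2 ^ 2 + (a 1 * y ^ 3 + a 2 * w ^ 3) := by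
        intros; ring
      simp only [e, Finset.sum_const, Finset.card_univ, ZMod.card, nsmul_eq_mul]
      simpa [hy, hw0] using this
  · by_cases hy : y = 0
    · subst hy
      obtain ⟨hw0, hb⟩ := hnz 0 2 (by decide) x w (by linear_combination hw) hx
      have := count_fibre_degenerate hp2 (a 0 * (3 * x)) (a 2 * (3 * w)) _
        (mul_ne_zero (ha 0) (mul_ne_zero h3 hx)) (mul_ne_zero (ha 2) (mul_ne_zero h3 hw0)) hb
      simp only [eq_neg_iff_add_eq_zero] at this
      have e : ∀ v0 v1 v2 : ZMod p, a 0 * (x ^ 3 + 3 * x * v0 ^ 2) + a 1 * (0 ^ 3 + 3 * 0 * v1 ^ 2)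
          + a 2 * (w ^ 3 + 3 * w * v2 ^ 2) =
          a 0 * (3 * x) * v0 ^ 2 + a 2 * (3 * w) * v2 ^ 2 + (a 0 * x ^ 3 + a 2 * w ^ 3) := by
        intros; ring
      simp only [e, Finset.sum_const, Finset.card_univ, ZMod.card, nsmul_eq_mul, ← Finset.mul_sum]
      simpa [hx, hw0] using this
    · by_cases hw0 : w = 0
      · subst hw0
        obtain ⟨-, hb⟩ := hnz 0 1 (by decide) x y (by linear_combination hw) hx
        have := count_fibre_degenerate hp2 (a 0 * (3 * x)) (a 1 * (3 * y)) _
          (mul_ne_zero (ha 0) (mul_ne_zero h3 hx)) (mul_ne_zero (ha 1) (mul_ne_zero h3 hy)) hb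
        simp only [eq_neg_iff_add_eq_zero] at this
        have e : ∀ v0 v1 v2 : ZMod p,
            a 0 * (x ^ 3 + 3 * x * v0 ^ 2) + a 1 * (y ^ 3 + 3 * y * v1 ^ 2)
            + a 2 * (0 ^ 3 + 3 * 0 * v2 ^ 2) =
            a 0 * (3 * x) * v0 ^ 2 + a 1 * (3 * y) * v1 ^ 2 + (a 0 * x ^ 3 + a 1 * y ^ 3) := by
          intros; ring
        simp only [e, Finset.sum_const, Finset.card_univ, ZMod.card, nsmul_eq_mul, ← Finset.mul_sum]
        simpa [hx, hy] using this
      · have := count_ternary hch (a 0 * (3 * x)) (a 1 * (3 * y)) (a 2 * (3 * w))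
          (-(a 0 * x ^ 3 + a 1 * y ^ 3 + a 2 * w ^ 3))
          (mul_ne_zero (ha 0) (mul_ne_zero h3 hx)) (mul_ne_zero (ha 1) (mul_ne_zero h3 hy))
          (mul_ne_zero (ha 2) (mul_ne_zero h3 hw0))
        simp only [eq_neg_iff_add_eq_zero, ZMod.card] at this
        have e : ∀ v0 v1 v2 : ZMod p,
            a 0 * (x ^ 3 + 3 * x * v0 ^ 2) + a 1 * (y ^ 3 + 3 * y * v1 ^ 2)
            + a 2 * (w ^ 3 + 3 * w * v2 ^ 2) =
            a 0 * (3 * x) * v0 ^ 2 + a 1 * (3 * y) * v1 ^ 2 + a 2 * (3 * w) * v2 ^ 2 +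
            (a 0 * x ^ 3 + a 1 * y ^ 3 + a 2 * w ^ 3) := by
          intros; ring
        have e2 : -(a 0 * (3 * x) * (a 1 * (3 * y)) * (a 2 * (3 * w)) *
            -(a 0 * x ^ 3 + a 1 * y ^ 3 + a 2 * w ^ 3)) = 27 * a 0 * a 1 * a 2 *
            (x * y * w) * (a 0 * x ^ 3 + a 1 * y ^ 3 + a 2 * w ^ 3) := by ring
        rw [e2] at this
        simp only [e, this, hx, hy, hw0, if_false]
        rw [abs_le]
        constructor <;> linarith

/-- The case of three pairs: the origin of the `u`-plane contributes the main term `p³`, the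
other points contribute `p⁴` and a character sum controlled by the Weil bound. -/
lemma count_three (hp2 : p ≠ 2) (h3 : (3 : ZMod p) ≠ 0) (a c : Fin 3 → ZMod p)
    (ha : ∀ i, a i ≠ 0) (hc : ∀ i, c i ≠ 0)
    (hnd : ∀ i j, i ≠ j → a i * c j ^ 3 ≠ a j * c i ^ 3) :
    |((∑ u : Fin 3 → ZMod p, ∑ v : Fin 3 → ZMod p,
      if ∑ i, a i * (u i ^ 3 + 3 * u i * v i ^ 2) = 0 ∧ ∑ i, c i * u i = 0
        then (1 : ℤ) else 0 : ℤ) : ℝ) - p ^ 4 - p ^ 3| ≤ 204 * (p ^ 2 * √(p : ℝ)) := by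
  set w : ZMod p → ZMod p → ZMod p := fun x y => -(c 0 * x + c 1 * y) / c 2 with hw
  set n : ZMod p → ZMod p → ℤ := fun x y => ∑ v0 : ZMod p, ∑ v1 : ZMod p, ∑ v2 : ZMod p,
      if a 0 * (x ^ 3 + 3 * x * v0 ^ 2) + a 1 * (y ^ 3 + 3 * y * v1 ^ 2)
        + a 2 * (w x y ^ 3 + 3 * w x y * v2 ^ 2) = 0 then (1 : ℤ) else 0 with hn
  set χ : ZMod p → ZMod p → ℤ := fun x y => quadraticChar (ZMod p) (27 * a 0 * a 1 * a 2 *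
      (x * y * w x y) * (a 0 * x ^ 3 + a 1 * y ^ 3 + a 2 * w x y ^ 3)) with hχ
  have hw0 : ∀ x y, c 0 * x + c 1 * y + c 2 * w x y = 0 := by
    intro x y
    simp only [hw]; field_simp [hc 2]; ring
  have hN : (∑ u : Fin 3 → ZMod p, ∑ v : Fin 3 → ZMod p,
      if ∑ i, a i * (u i ^ 3 + 3 * u i * v i ^ 2) = 0 ∧ ∑ i, c i * u i = 0
        then (1 : ℤ) else 0) = ∑ x : ZMod p, ∑ y : ZMod p, n x y := by
    have hsplit : ∀ G : (Fin 3 → ZMod p) → ℤ,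
        ∑ u : Fin 3 → ZMod p, G u =
          ∑ x : ZMod p, ∑ y : ZMod p, ∑ z : ZMod p, G ![x, y, z] := by
      intro G
      have e : ∀ x : ZMod p, ∑ y : ZMod p, ∑ z : ZMod p, G ![x, y, z] =
          ∑ q : ZMod p × ZMod p, G ![x, q.1, q.2] := fun x => by
        rw [← Fintype.sum_prod_type']
      rw [Finset.sum_congr rfl fun x _ => e x, ← Fintype.sum_prod_type']
      symm
      refine Fintype.sum_bijective (fun q : ZMod p × ZMod p × ZMod p => ![q.1, q.2.1, q.2.2])
        ⟨?_, ?_⟩ _ _ fun q => rfl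
      · rintro ⟨x, y, z⟩ ⟨x', y', z'⟩ h
        have h0 := congrFun h 0
        have h1 := congrFun h 1
        have h2 := congrFun h 2
        simp at h0 h1 h2
        rw [h0, h1, h2]
      · intro u
        exact ⟨(u 0, u 1, u 2), by ext i; fin_cases i <;> rfl⟩
    rw [hsplit]
    refine Finset.sum_congr rfl fun x _ => Finset.sum_congr rfl fun y _ => ?_
    simp only [hsplit, Fin.sum_univ_three, Matrix.cons_val]
    rw [Finset.sum_eq_single (w x y)]
    · simp only [hw0, and_true, hn]
    · intro z _ hz
      have : ¬ (c 0 * x + c 1 * y + c 2 * z = 0) := by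
        intro h
        apply hz
        have h1 : c 2 * (z - w x y) = 0 := by linear_combination h - hw0 x y
        exact sub_eq_zero.1 ((mul_eq_zero.1 h1).resolve_left (hc 2))
      simp [this]
    · simp
  have hbd : ∀ x y : ZMod p, |n x y - p ^ 2 - p * χ x y
      - (if y = 0 then if x = 0 then (p : ℤ) ^ 3 - p ^ 2 else 0 else 0)|
      ≤ (if x = 0 then (p : ℤ) else 0) + (if y = 0 then (p : ℤ) else 0)
        + (if w x y = 0 then (p : ℤ) else 0) := fun x y =>
    count_fibre_three hp2 h3 a c ha hc hnd x y (w x y) (hw0 x y)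
  have hwsum : ∀ x : ZMod p, ∑ y : ZMod p, (if w x y = 0 then (p : ℤ) else 0) = p := by
    intro x
    have : ∀ y, w x y = 0 ↔ y = -(c 0 * x) / c 1 := by
      intro y
      simp only [hw]
      rw [div_eq_zero_iff, or_iff_left (hc 2), eq_div_iff (hc 1)]
      constructor <;> intro h <;> linear_combination -h
    simp [this]
  have hs : ∑ x : ZMod p, ∑ y : ZMod p, (n x y - p ^ 2 - p * χ x y
      - (if y = 0 then if x = 0 then (p : ℤ) ^ 3 - p ^ 2 else 0 else 0)) =
      (∑ x, ∑ y, n x y) - p ^ 4 - p * (∑ x, ∑ y, χ x y) - (p ^ 3 - p ^ 2) := by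
    simp only [Finset.sum_sub_distrib, ← Finset.mul_sum]
    simp
    ring
  have hs2 : |(∑ x, ∑ y, n x y) - p ^ 4 - p * (∑ x, ∑ y, χ x y) - ((p : ℤ) ^ 3 - p ^ 2)|
      ≤ 3 * p ^ 2 := by
    rw [← hs]
    refine (Finset.abs_sum_le_sum_abs _ _).trans ?_
    refine (Finset.sum_le_sum fun x _ => (Finset.abs_sum_le_sum_abs _ _).trans
      (Finset.sum_le_sum fun y _ => hbd x y)).trans ?_
    simp only [Finset.sum_add_distrib, hwsum]
    simp
    linarith
  have hsex := sum_quadraticChar_sextic hp2 h3 a c ha hc (hnd 1 2 (by decide)) w hw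
  rw [hN]
  have hs3 : |((∑ x, ∑ y, n x y : ℤ) : ℝ) - p ^ 4 - p * ((∑ x, ∑ y, χ x y : ℤ) : ℝ)
      - ((p : ℝ) ^ 3 - p ^ 2)| ≤ 3 * p ^ 2 := by
    exact_mod_cast hs2
  change |((∑ x, ∑ y, χ x y : ℤ) : ℝ)| ≤ _ at hsex
  generalize ((∑ x, ∑ y, χ x y : ℤ) : ℝ) = X at hsex hs3
  generalize ((∑ x, ∑ y, n x y : ℤ) : ℝ) = N at hs3
  have hp1 : (1 : ℝ) ≤ p := by exact_mod_cast (Fact.out : p.Prime).one_le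
  have hsq : 1 ≤ √(p : ℝ) := by rwa [Real.one_le_sqrt]
  have h5 : (p : ℝ) ^ 2 ≤ p ^ 2 * √(p : ℝ) := le_mul_of_one_le_right (by positivity) hsq
  have h6 : |p * X| ≤ 200 * (p ^ 2 * √(p : ℝ)) := by
    rw [abs_mul, Nat.abs_cast]
    calc (p : ℝ) * |X| ≤ p * (p * (200 * √(p : ℝ))) := by gcongr
      _ = _ := by ring
  rw [abs_le] at hs3 h6 ⊢
  constructor <;> linarith [hs3.1, hs3.2, h6.1, h6.2]

end counts

/-! ### Reduction modulo `p` to the pair coordinates -/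

/-- The substitution `x_{i_a} = u_a + v_a`, `τ_a x_{j_a} = u_a - v_a`. -/
lemma card_eq_sum_pairs {F : Type*} [Field F] [Fintype F] [DecidableEq F] (h2 : (2 : F) ≠ 0)
    {m k : ℕ} (I J : Fin k → Fin m) (hIJ : Function.Bijective (Sum.elim I J))
    (a c : Fin m → F) (τ : Fin k → F) (hτ : ∀ i, τ i ≠ 0)
    (ha : ∀ i, a (J i) = τ i ^ 3 * a (I i)) (hc : ∀ i, c (J i) = τ i * c (I i)) :
    (Nat.card {x : Fin m → F | (∑ i, a i * x i ^ 3) = 0 ∧ (∑ i, c i * x i) = 0} : ℤ) =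
      ∑ u : Fin k → F, ∑ v : Fin k → F,
        if ∑ i, a (I i) * (u i ^ 3 + 3 * u i * v i ^ 2) = 0 ∧ ∑ i, c (I i) * u i = 0
          then (1 : ℤ) else 0 := by
  classical
  let e := Equiv.ofBijective _ hIJ
  let φ : (Fin k → F) × (Fin k → F) → (Fin m → F) := fun q x =>
    Sum.elim (fun i => q.1 i + q.2 i) (fun i => (q.1 i - q.2 i) / τ i) (e.symm x)
  have hφI : ∀ q i, φ q (I i) = q.1 i + q.2 i := by
    intro q i
    have : e.symm (I i) = Sum.inl i := e.symm_apply_eq.2 rfl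
    simp only [φ, this, Sum.elim_inl]
  have hφJ : ∀ q i, φ q (J i) = (q.1 i - q.2 i) / τ i := by
    intro q i
    have : e.symm (J i) = Sum.inr i := e.symm_apply_eq.2 rfl
    simp only [φ, this, Sum.elim_inr]
  have hφ : Function.Bijective φ := by
    constructor
    · intro q q' h
      have h1 : ∀ i, q.1 i = q'.1 i ∧ q.2 i = q'.2 i := by
        intro i
        have hI := congrFun h (I i)
        have hJ := congrFun h (J i)
        rw [hφI, hφI] at hI
        rw [hφJ, hφJ, div_left_inj' (hτ i)] at hJ
        constructor <;> apply mul_left_cancel₀ h2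
        · linear_combination hI + hJ
        · linear_combination hI - hJ
      exact Prod.ext (funext fun i => (h1 i).1) (funext fun i => (h1 i).2)
    · intro x
      refine ⟨(fun i => (x (I i) + τ i * x (J i)) / 2, fun i => (x (I i) - τ i * x (J i)) / 2), ?_⟩
      ext z
      obtain ⟨i | i, rfl⟩ := hIJ.2 z
      · simp only [Sum.elim_inl, hφI]
        field_simp
        ring
      · simp only [Sum.elim_inr, hφJ]
        have := hτ i
        field_simp
        ring
  have hsum : ∀ G : Fin m → F, ∑ z, G z = ∑ i, (G (I i) + G (J i)) := by
    intro G
    rw [← Equiv.sum_comp e, Fintype.sum_sum_type, Finset.sum_add_distrib]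
    rfl
  have h4 : (2 : F) * ((2 : F)⁻¹) = 1 := mul_inv_cancel₀ h2
  rw [Nat.card_eq_fintype_card, Fintype.card_subtype]
  rw [← Fintype.sum_prod_type', ← Finset.sum_boole]
  symm
  refine Fintype.sum_bijective φ hφ _ _ fun q => ?_
  congr 1
  have e1 : ∑ i, a i * φ q i ^ 3 = 2 * ∑ i, a (I i) * (q.1 i ^ 3 + 3 * q.1 i * q.2 i ^ 2) := by
    rw [hsum, Finset.mul_sum]
    refine Finset.sum_congr rfl fun i _ => ?_
    rw [hφI, hφJ, ha]
    have := hτ i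
    field_simp
    ring
  have e2 : ∑ i, c i * φ q i = 2 * ∑ i, c (I i) * q.1 i := by
    rw [hsum, Finset.mul_sum]
    refine Finset.sum_congr rfl fun i _ => ?_
    rw [hφI, hφJ, hc]
    have := hτ i
    field_simp
    ring
  simp only [Set.mem_ofPred_eq, e1, e2, mul_eq_zero, h2, false_or]

/-- A rational cube ratio of two integers prime to `p` has denominator prime to `p`, hence reduces
to a nonzero element of `𝔽_p`. -/
lemma exists_cube_ratio_mod {p : ℕ} [Fact p.Prime] (A B c d : ℤ) (hA : A ≠ 0)
    (hAp : (A : ZMod p) ≠ 0) (hBp : (B : ZMod p) ≠ 0) (t : ℚ) (ht : t ^ 3 = (B : ℚ) / A)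
    (hcd : (d : ℚ) = t * c) :
    ∃ τ : ZMod p, τ ≠ 0 ∧ (B : ZMod p) = τ ^ 3 * A ∧ (d : ZMod p) = τ * c := by
  have hAQ : (A : ℚ) ≠ 0 := by exact_mod_cast hA
  have hdQ : (t.den : ℚ) ≠ 0 := by exact_mod_cast t.den_ne_zero
  have h1 : t.num ^ 3 * A = B * (t.den : ℤ) ^ 3 := by
    have : (t.num : ℚ) ^ 3 * A = B * (t.den : ℚ) ^ 3 := by
      rw [eq_div_iff hAQ] at ht
      rw [← ht]
      nth_rw 2 [← Rat.num_div_den t]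
      field_simp
    exact_mod_cast this
  have h2 : d * (t.den : ℤ) = t.num * c := by
    have : (d : ℚ) * (t.den : ℚ) = t.num * c := by
      rw [hcd]
      nth_rw 1 [← Rat.num_div_den t]
      field_simp
    exact_mod_cast this
  have h1p : (t.num : ZMod p) ^ 3 * A = B * (t.den : ZMod p) ^ 3 := by
    have := congrArg (Int.cast : ℤ → ZMod p) h1
    push_cast at this
    exact this
  have h2p : (d : ZMod p) * (t.den : ZMod p) = t.num * c := by
    have := congrArg (Int.cast : ℤ → ZMod p) h2
    push_cast at this
    exact this
  have hden : (t.den : ZMod p) ≠ 0 := by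
    intro h0
    rw [h0, zero_pow (by norm_num), mul_zero, mul_eq_zero, or_iff_left hAp,
      pow_eq_zero_iff (by norm_num)] at h1p
    rw [ZMod.natCast_eq_zero_iff] at h0
    rw [ZMod.intCast_zmod_eq_zero_iff_dvd, Int.natCast_dvd] at h1p
    have := Nat.dvd_gcd h1p h0
    rw [t.reduced.gcd_eq_one] at this
    exact (Fact.out : p.Prime).one_lt.ne' (Nat.dvd_one.1 this)
  refine ⟨t.num / t.den, ?_, ?_, ?_⟩
  · intro h0
    rw [div_eq_zero_iff, or_iff_left hden] at h0
    rw [h0, zero_pow (by norm_num), zero_mul] at h1p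
    exact mul_ne_zero hBp (pow_ne_zero 3 hden) h1p.symm
  · field_simp
    linear_combination -h1p
  · field_simp
    linear_combination h2p

/-- The nondegeneracy condition for singletons and for pairs `S = {i, j}`, without the square
roots `r_i`. -/
lemma nondegenerate_consequences {p : ℕ} [Fact p.Prime] {k : ℕ} (A c : Fin k → ℤ)
    (hA : ∀ i, (A i : ZMod p) ≠ 0)
    (h : ∀ (S : Finset (Fin k)), S.Nonempty → ∀ r : Fin k → AlgebraicClosure (ZMod p),
      (∀ a ∈ S, (r a) ^ 2 * ((A a : ℤ) : AlgebraicClosure (ZMod p)) =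
        ((c a : ℤ) : AlgebraicClosure (ZMod p)) ^ 3) → (∑ a ∈ S, r a) ≠ 0) :
    (∀ i, (c i : ZMod p) ≠ 0) ∧
      ∀ i j, i ≠ j → (A i : ZMod p) * (c j : ZMod p) ^ 3 ≠ A j * (c i : ZMod p) ^ 3 := by
  have hcast : ∀ z : ℤ, (z : AlgebraicClosure (ZMod p)) =
      algebraMap (ZMod p) (AlgebraicClosure (ZMod p)) (z : ZMod p) := fun z => by simp
  constructor
  · intro i hi
    refine h {i} (by simp) (fun _ => 0) ?_ (by simp)
    intro a ha
    rw [Finset.mem_singleton.1 ha, hcast (c i), hi]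
    simp
  · intro i j hij heq
    have hAi : (A i : AlgebraicClosure (ZMod p)) ≠ 0 := by
      rw [hcast]; exact (map_ne_zero _).2 (hA i)
    have heq' : (A i : AlgebraicClosure (ZMod p)) * (c j : AlgebraicClosure (ZMod p)) ^ 3 =
        A j * (c i : AlgebraicClosure (ZMod p)) ^ 3 := by
      have := congrArg (algebraMap (ZMod p) (AlgebraicClosure (ZMod p))) heq
      simpa using this
    obtain ⟨s, hs⟩ := IsAlgClosed.exists_pow_nat_eq
      ((c i : AlgebraicClosure (ZMod p)) ^ 3 / A i) (n := 2) (by norm_num)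
    rw [eq_div_iff hAi] at hs
    -- `s` is a root for both `i` and `j`, so the choice `r_i = s`, `r_j = -s` would be admissible
    refine h {i, j} (by simp) (fun a => if a = i then s else -s) ?_ ?_
    · intro a ha
      rcases Finset.mem_insert.1 ha with rfl | ha
      · simpa using hs
      · rw [Finset.mem_singleton.1 ha, if_neg hij.symm]
        apply mul_left_cancel₀ hAi
        linear_combination (A j : AlgebraicClosure (ZMod p)) * hs - heq'
    · rw [Finset.sum_pair hij, if_pos rfl, if_neg hij.symm, add_neg_cancel]

theorem stmt7 (m k : ℕ) (hmk : m = 2 * k) (hm46 : m = 4 ∨ m = 6) :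
    ∃ C : ℝ, ∀ (Fc : Fin m → ℤ), (∀ i, Fc i ≠ 0) →
      ∀ (I J : Fin k → Fin m), Function.Bijective (Sum.elim I J) →
      ∀ (t : Fin k → ℚ), (∀ a, (t a) ^ 3 = (Fc (J a) : ℚ) / (Fc (I a) : ℚ)) →
      ∀ (c : Fin m → ℤ), (∀ a, (c (J a) : ℚ) = t a * (c (I a) : ℚ)) →
      ∀ (p : ℕ) [Fact p.Prime], ¬ ((p : ℤ) ∣ 6 * ∏ i, Fc i) →
      (∀ (S : Finset (Fin k)), S.Nonempty →
        ∀ r : Fin k → AlgebraicClosure (ZMod p),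
          (∀ a ∈ S, (r a) ^ 2 * ((Fc (I a) : ℤ) : AlgebraicClosure (ZMod p)) =
            ((c (I a) : ℤ) : AlgebraicClosure (ZMod p)) ^ 3) →
          (∑ a ∈ S, r a) ≠ 0) →
      |(Nat.card {x : Fin m → ZMod p |
            (∑ i, (Fc i : ZMod p) * (x i) ^ 3) = 0 ∧
            (∑ i, (c i : ZMod p) * x i) = 0} : ℝ)
          - (p : ℝ) ^ (m - 2) - (p : ℝ) ^ k|
        ≤ C * (p : ℝ) ^ (((m : ℝ) - 1) / 2) := by
  refine ⟨204, ?_⟩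
  intro Fc hFc I J hIJ t ht c hc p _ hp hnd
  have hpp : p.Prime := Fact.out
  have hpZ : Prime (p : ℤ) := Nat.prime_iff_prime_int.1 hpp
  have h6 : ¬ (p : ℤ) ∣ 6 := fun h => hp (h.mul_right _)
  have hp2 : p ≠ 2 := by rintro rfl; norm_num at h6
  have h2 : (2 : ZMod p) ≠ 0 := by
    intro h
    apply h6
    rw [← ZMod.intCast_zmod_eq_zero_iff_dvd]
    push_cast
    linear_combination 3 * h
  have h3 : (3 : ZMod p) ≠ 0 := by
    intro h
    apply h6
    rw [← ZMod.intCast_zmod_eq_zero_iff_dvd]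
    push_cast
    linear_combination 2 * h
  have hFp : ∀ i, (Fc i : ZMod p) ≠ 0 := by
    intro i h
    rw [ZMod.intCast_zmod_eq_zero_iff_dvd] at h
    exact hp ((h.trans (Finset.dvd_prod_of_mem Fc (Finset.mem_univ i))).mul_left 6)
  choose τ hτ0 hτF hτc using fun a => exists_cube_ratio_mod (p := p) (Fc (I a)) (Fc (J a))
    (c (I a)) (c (J a)) (hFc _) (hFp _) (hFp _) (t a) (ht a) (hc a)
  obtain ⟨hc0, hcc⟩ := nondegenerate_consequences (p := p) (fun a => Fc (I a)) (fun a => c (I a))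
    (fun a => hFp _) hnd
  have hcard := card_eq_sum_pairs h2 I J hIJ (fun i => (Fc i : ZMod p)) (fun i => (c i : ZMod p))
    τ hτ0 hτF hτc
  have hcardR := congrArg (Int.cast : ℤ → ℝ) hcard
  rw [Int.cast_natCast] at hcardR
  have hp1 : (1 : ℝ) ≤ p := by exact_mod_cast hpp.one_le
  have hp0 : (0 : ℝ) < p := by linarith
  have hsq : 1 ≤ √(p : ℝ) := by rwa [Real.one_le_sqrt]
  rw [hcardR]
  rcases hm46 with rfl | rfl
  · obtain rfl : k = 2 := by omega
    have := count_two hp2 h3 (fun a => (Fc (I a) : ZMod p)) (fun a => (c (I a) : ZMod p))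
      (fun _ => hFp _) hc0 (hcc 0 1 (by decide))
    have hR : |((∑ u : Fin 2 → ZMod p, ∑ v : Fin 2 → ZMod p,
        if ∑ i, (Fc (I i) : ZMod p) * (u i ^ 3 + 3 * u i * v i ^ 2) = 0 ∧
          ∑ i, (c (I i) : ZMod p) * u i = 0 then (1 : ℤ) else 0 : ℤ) : ℝ)
        - p ^ 2 - p ^ 2| ≤ 2 * p := by exact_mod_cast this
    refine hR.trans ?_
    have hle : (p : ℝ) ≤ (p : ℝ) ^ ((((4 : ℕ) : ℝ) - 1) / 2) := by
      conv_lhs => rw [← Real.rpow_one (p : ℝ)]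
      exact Real.rpow_le_rpow_of_exponent_le hp1 (by norm_num)
    linarith
  · obtain rfl : k = 3 := by omega
    have := count_three hp2 h3 (fun a => (Fc (I a) : ZMod p)) (fun a => (c (I a) : ZMod p))
      (fun _ => hFp _) hc0 hcc
    refine this.trans (le_of_eq ?_)
    rw [Real.sqrt_eq_rpow, ← Real.rpow_natCast (p : ℝ) 2, ← Real.rpow_add hp0]
    norm_num
end

section
/- Let p be an odd prime, m ∈ {4,6}, set m_* := m − 3, and let s ≥ 1 and l ≥ 0 be integers. Let f₁,…,f_{m/2} and d₁,…,d_{m/2} be integers with p ∤ 6·f₁⋯f_{m/2}·d₁⋯d_{m/2}. Let A be the set of pairs (h,y) with h ∈ (ℤ/p^lℤ)^{m/2} and y ∈ (ℤ/p^lℤ)^{m/2−1} satisfying both congruences: ∑_{k=1}^{m/2−1} f_k·h_k·(2d_k·y_k + p^s·y_k²) ≡ −3p^s·∑_{k=1}^{m/2} f_k·h_k³ (mod p^l) and ∑_{k=1}^{m/2} f_k·d_k²·h_k ≡ 0 (mod p^l). Then |A| = p^{l·m_*} + (p−1)·∑_{j=0}^{l−1} p^{l(m_*+1)/2 − 1 +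 j(m_*−1)/2}. In particular |A| does not depend on s nor on the choice of the units f_k, d_k. -/
/-!
Write `R = ℤ/p^l` and `κ = n + 1`. Using the linear congruence, the cubic term of the last variable
becomes `f_κ h_κ³ = h_κ² ∑_{k<κ} f_κ c_k h_k`, so both congruences together say that
`∑_{k<κ} h_k v_k = 0`, where `v_k` equals `f_k (2 d_k y_k + p^s y_k²)` plus a quantity depending
only on `h`. As `2 d_k` is a unit and `p` is nilpotent, `y_k ↦ v_k` is a permutation of `R`.
Hence the set is in bijection with the zero locus of the bilinear form `∑ h_k v_k` on `Rⁿ × Rⁿ`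
(`card_reduction`).

The zeros `N(l)` of the bilinear form are counted by a recursion in `l` (`bilinCount_succ`). A vector
`h` over `ℤ/p^(l+1)` with a unit entry has a kernel of size `p^((l+1)(n-1))`. The other vectors are
`p h'` with `h'` over `ℤ/p^l`, and the kernel of `p h'` is `p^n` times as large as that of `h'`,
because both linear forms have images of the same size. The closed forms for `n = 1, 2` follow by
induction.
-/

open scoped BigOperators

/-! ### Kernels of linear forms over a finite ring -/

/-- The linear form `v ↦ ∑ k, h k * v k`. -/
def dotHom {R : Type*} [CommRing R] {n : ℕ} (h : Fin n → R) : (Fin n → R) →+ R where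
  toFun v := ∑ k, h k * v k
  map_zero' := by simp
  map_add' v w := by simp [mul_add, Finset.sum_add_distrib]

lemma dotHom_apply {R : Type*} [CommRing R] {n : ℕ} (h v : Fin n → R) :
    dotHom h v = ∑ k, h k * v k := rfl

/-- The number of pairs `(h, v)` in `Rⁿ × Rⁿ` with `∑ k, h k * v k = 0`. -/
noncomputable def bilinCount (R : Type*) [CommRing R] (n : ℕ) : ℕ :=
  Nat.card {hv : (Fin n → R) × (Fin n → R) // ∑ k, hv.1 k * hv.2 k = 0}

lemma card_ker_mul_card_range {R : Type*} [CommRing R] {n : ℕ} (h : Fin n → R) :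
    Nat.card (dotHom h).ker * Nat.card (dotHom h).range = Nat.card R ^ n := by
  rw [← AddSubgroup.index_ker, AddSubgroup.card_mul_index]
  simp [Nat.card_fun]

lemma bilinCount_eq_sum (R : Type*) [CommRing R] [Fintype R] [DecidableEq R] (n : ℕ) :
    bilinCount R n = ∑ h : Fin n → R, Nat.card (dotHom h).ker := by
  unfold bilinCount
  rw [Nat.card_congr (Equiv.subtypeProdEquivSigmaSubtype
    (fun h v : Fin n → R => ∑ k, h k * v k = 0)), Nat.card_sigma]
  rfl

lemma card_ker_of_unit {R : Type*} [CommRing R] [Finite R] {n : ℕ} (h : Fin (n + 1) → R)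
    (i : Fin (n + 1)) (hi : IsUnit (h i)) : Nat.card (dotHom h).ker = Nat.card R ^ n := by
  have hsurj : Function.Surjective (dotHom h) := by
    intro x
    obtain ⟨u, hu⟩ := hi
    refine ⟨Pi.single i (↑u⁻¹ * x), ?_⟩
    rw [dotHom_apply, Finset.sum_eq_single i]
    · simp [← hu]
    · intro b _ hb
      simp [hb]
    · simp
  have := card_ker_mul_card_range h
  rw [AddMonoidHom.range_eq_top.mpr hsurj, AddSubgroup.card_top, pow_succ] at this
  exact Nat.eq_of_mul_eq_mul_right Nat.card_pos this

/-! ### Passing from modulus `p^l` to `p^(l+1)` -/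

/-- Multiplication by `p`, as an additive map `ℤ/p^l → ℤ/p^(l+1)`. -/
def mulP (p l : ℕ) : ZMod (p ^ l) →+ ZMod (p ^ (l + 1)) :=
  ZMod.lift (p ^ l) ⟨(AddMonoidHom.mulLeft (p : ZMod (p ^ (l + 1)))).comp (Int.castAddHom _), by
    have : ((p ^ (l + 1) : ℕ) : ZMod (p ^ (l + 1))) = 0 := ZMod.natCast_self _
    simpa [pow_succ'] using this⟩

lemma mulP_intCast (p l : ℕ) (x : ℤ) :
    mulP p l (x : ZMod (p ^ l)) = (p : ZMod (p ^ (l + 1))) * x := by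
  unfold mulP
  rw [ZMod.lift_coe]
  rfl

lemma mulP_injective (p l : ℕ) (hp : p.Prime) : Function.Injective (mulP p l) := by
  rw [injective_iff_map_eq_zero]
  intro a
  obtain ⟨x, rfl⟩ := ZMod.intCast_surjective a
  rw [mulP_intCast]
  intro hx
  have h1 : (((p : ℤ) * x : ℤ) : ZMod (p ^ (l + 1))) = 0 := by push_cast; exact hx
  rw [ZMod.intCast_zmod_eq_zero_iff_dvd] at h1 ⊢
  push_cast [pow_succ'] at h1 ⊢
  exact Int.dvd_of_mul_dvd_mul_left (by exact_mod_cast hp.ne_zero) h1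

lemma isUnit_intCast (p l : ℕ) (hp : p.Prime) (x : ℤ) (hx : ¬ (p : ℤ) ∣ x) :
    IsUnit (x : ZMod (p ^ l)) := by
  rw [ZMod.coe_int_isUnit_iff_isCoprime]
  push_cast
  exact ((Nat.prime_iff_prime_int.mp hp).coprime_iff_not_dvd.mpr hx).pow_left

lemma not_isUnit_iff (p l : ℕ) (hp : p.Prime) (a : ZMod (p ^ (l + 1))) :
    ¬ IsUnit a ↔ ∃ b, mulP p l b = a := by
  constructor
  · intro ha
    obtain ⟨x, rfl⟩ := ZMod.intCast_surjective a
    by_cases hx : (p : ℤ) ∣ x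
    · obtain ⟨y, rfl⟩ := hx
      exact ⟨(y : ZMod (p ^ l)), by rw [mulP_intCast]; push_cast; rfl⟩
    · exact absurd (isUnit_intCast p _ hp x hx) ha
  · rintro ⟨b, rfl⟩ hu
    obtain ⟨y, rfl⟩ := ZMod.intCast_surjective b
    rw [mulP_intCast] at hu
    have h2 := isUnit_of_mul_isUnit_left hu
    rw [ZMod.isUnit_iff_coprime, Nat.coprime_pow_right_iff (Nat.succ_pos l),
      Nat.coprime_self] at h2
    exact hp.one_lt.ne' h2

/-- The images of `dotHom h` and `dotHom (p h)` have the same size, so the kernel grows by `p ^ n`. -/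
lemma card_ker_mulP (p l : ℕ) (hp : p.Prime) {n : ℕ} (h : Fin n → ZMod (p ^ l)) :
    Nat.card (dotHom (mulP p l ∘ h)).ker = p ^ n * Nat.card (dotHom h).ker := by
  have : NeZero (p ^ l) := ⟨pow_ne_zero _ hp.ne_zero⟩
  have hr : (dotHom (mulP p l ∘ h)).range = (dotHom h).range.map (mulP p l) := by
    have key : ∀ x y : ℤ, mulP p l ((x : ZMod (p ^ l)) * (y : ZMod (p ^ l)))
        = mulP p l (x : ZMod (p ^ l)) * (y : ZMod (p ^ (l + 1))) := by
      intro x y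
      rw [← Int.cast_mul, mulP_intCast, mulP_intCast]
      push_cast
      ring
    choose g hg using fun k => ZMod.intCast_surjective (h k)
    have key2 : ∀ w : Fin n → ℤ, dotHom (mulP p l ∘ h) (fun k => (w k : ZMod (p ^ (l + 1))))
        = mulP p l (dotHom h (fun k => (w k : ZMod (p ^ l)))) := by
      intro w
      rw [dotHom_apply, dotHom_apply, map_sum]
      refine Finset.sum_congr rfl fun k _ => ?_
      rw [← hg k, key, Function.comp_apply, hg k]
    ext x
    simp only [AddMonoidHom.mem_range, AddSubgroup.mem_map]
    constructor
    · rintro ⟨v, rfl⟩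
      choose w hw using fun k => ZMod.intCast_surjective (v k)
      obtain rfl : (fun k => (w k : ZMod (p ^ (l + 1)))) = v := funext hw
      exact ⟨_, ⟨_, rfl⟩, (key2 w).symm⟩
    · rintro ⟨_, ⟨v, rfl⟩, rfl⟩
      choose w hw using fun k => ZMod.intCast_surjective (v k)
      obtain rfl : (fun k => (w k : ZMod (p ^ l))) = v := funext hw
      exact ⟨_, key2 w⟩
  have h1 := card_ker_mul_card_range (mulP p l ∘ h)
  have h2 := card_ker_mul_card_range h
  have hc : Nat.card ((dotHom h).range.map (mulP p l)) = Nat.card (dotHom h).range :=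
    (Nat.card_congr ((dotHom h).range.equivMapOfInjective _ (mulP_injective p l hp)).toEquiv).symm
  rw [hr, hc, Nat.card_zmod] at h1
  rw [Nat.card_zmod] at h2
  have hpos : 0 < Nat.card (dotHom h).range := Nat.card_pos
  refine Nat.eq_of_mul_eq_mul_right hpos ?_
  rw [h1, mul_assoc, h2, pow_succ', mul_pow]

/-! ### Zeros of the bilinear form over `ℤ/p^l` -/

/-- Splitting the vectors `h` over `ℤ/p^(l+1)` according to whether they have a unit entry. The
number `p^((l+1)(n+1)) - p^(l(n+1))` of those with one is kept free of subtraction. -/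
lemma bilinCount_succ (p l n : ℕ) (hp : p.Prime) :
    bilinCount (ZMod (p ^ (l + 1))) (n + 1) + p ^ (l * (n + 1)) * p ^ ((l + 1) * n)
      = p ^ ((l + 1) * (n + 1)) * p ^ ((l + 1) * n)
        + p ^ (n + 1) * bilinCount (ZMod (p ^ l)) (n + 1) := by
  classical
  have : NeZero (p ^ l) := ⟨pow_ne_zero _ hp.ne_zero⟩
  have : NeZero (p ^ (l + 1)) := ⟨pow_ne_zero _ hp.ne_zero⟩
  rw [bilinCount_eq_sum, bilinCount_eq_sum, ← Finset.sum_filter_add_sum_filter_not Finset.univ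
    (fun h : Fin (n + 1) → ZMod (p ^ (l + 1)) => ∃ i, IsUnit (h i))]
  have hinj : Function.Injective
      (fun h : Fin (n + 1) → ZMod (p ^ l) => (mulP p l ∘ h : Fin (n + 1) → _)) :=
    (mulP_injective p l hp).comp_left
  have himg : Finset.univ.filter
      (fun h : Fin (n + 1) → ZMod (p ^ (l + 1)) => ¬ ∃ i, IsUnit (h i))
      = Finset.univ.image (fun h : Fin (n + 1) → ZMod (p ^ l) => mulP p l ∘ h) := by
    ext h
    simp only [Finset.mem_filter, Finset.mem_univ, true_and, Finset.mem_image, not_exists]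
    constructor
    · intro hh
      choose b hb using fun i => (not_isUnit_iff p l hp (h i)).mp (hh i)
      exact ⟨b, funext hb⟩
    · rintro ⟨b, rfl⟩ i
      exact (not_isUnit_iff p l hp _).mpr ⟨b i, rfl⟩
  have hcard := Finset.card_filter_add_card_filter_not
    (s := Finset.univ) (fun h : Fin (n + 1) → ZMod (p ^ (l + 1)) => ∃ i, IsUnit (h i))
  have hsum : ∑ h ∈ Finset.univ.filter
      (fun h : Fin (n + 1) → ZMod (p ^ (l + 1)) => ∃ i, IsUnit (h i)), Nat.card (dotHom h).ker
      = (Finset.univ.filter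
      (fun h : Fin (n + 1) → ZMod (p ^ (l + 1)) => ∃ i, IsUnit (h i))).card
        * p ^ ((l + 1) * n) := by
    rw [Finset.sum_const_nat]
    intro h hh
    obtain ⟨i, hi⟩ := (Finset.mem_filter.mp hh).2
    rw [card_ker_of_unit h i hi, Nat.card_zmod, pow_mul]
  rw [hsum, himg, Finset.sum_image hinj.injOn]
  rw [himg, Finset.card_image_of_injective _ hinj] at hcard
  simp only [Finset.card_univ, Fintype.card_fun, ZMod.card, Fintype.card_fin, ← pow_mul] at hcard
  rw [← hcard]
  simp only [card_ker_mulP p l hp, ← Finset.mul_sum]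
  ring

lemma bilinCount_zero (p n : ℕ) : bilinCount (ZMod (p ^ 0)) n = 1 := by
  unfold bilinCount
  have : Subsingleton (ZMod (p ^ 0)) := by
    rw [pow_zero]
    infer_instance
  have : Nonempty {hv : (Fin n → ZMod (p ^ 0)) × (Fin n → ZMod (p ^ 0)) //
    ∑ k, hv.1 k * hv.2 k = 0} := ⟨⟨0, Subsingleton.elim _ _⟩⟩
  exact Nat.card_unique

lemma bilinCount_one (p l : ℕ) (hp : p.Prime) :
    bilinCount (ZMod (p ^ l)) 1 = p ^ l + (p - 1) * (l * p ^ (l - 1)) := by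
  obtain ⟨q, rfl⟩ : ∃ q, p = q + 1 := ⟨p - 1, by have := hp.pos; omega⟩
  induction l with
  | zero => rw [bilinCount_zero]; simp
  | succ l ih =>
    have h := bilinCount_succ (q + 1) l 0 hp
    rw [ih] at h
    rcases l with _ | l
    · simp at h ⊢
      linarith
    · simp only [Nat.add_sub_cancel] at h ⊢
      refine Nat.add_right_cancel (h.trans ?_)
      push_cast
      ring

lemma bilinCount_two (p l : ℕ) (hp : p.Prime) :
    bilinCount (ZMod (p ^ l)) 2
      = p ^ (l * 3) + (p - 1) * ∑ j ∈ Finset.range l, p ^ (l * 2 - 1 + j) := by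
  -- Summing the geometric progression on the right-hand side, without division.
  have hgeom : p * ((p - 1) * ∑ j ∈ Finset.range l, p ^ (l * 2 - 1 + j)) + p ^ (l * 2)
      = p ^ (l * 3) := by
    rcases l with _ | l
    · simp
    · obtain ⟨q, rfl⟩ : ∃ q, p = q + 1 := ⟨p - 1, by have := hp.pos; omega⟩
      have h3 : (∑ j ∈ Finset.range (l + 1), (q + 1) ^ j) * q + 1 = (q + 1) ^ (l + 1) :=
        geom_sum_mul_add q (l + 1)
      have e : (l + 1) * 2 - 1 = 2 * l + 1 := by omega
      rw [e]
      simp only [pow_add _ (2 * l + 1) _, ← Finset.mul_sum, Nat.add_sub_cancel]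
      calc _ = (q + 1) ^ ((l + 1) * 2) *
            ((∑ j ∈ Finset.range (l + 1), (q + 1) ^ j) * q + 1) := by ring
        _ = _ := by rw [h3]; ring
  have hM : ∀ k, p * bilinCount (ZMod (p ^ k)) 2 + p ^ (2 * k) = p ^ (3 * k + 1) + p ^ (3 * k) := by
    intro k
    induction k with
    | zero => rw [bilinCount_zero]; simp
    | succ k ih =>
      have h := bilinCount_succ p k 1 hp
      norm_num at h
      refine Nat.add_right_cancel (m := p * (p ^ (k * 2) * p ^ (k + 1))) ?_
      calc _ = p * (bilinCount (ZMod (p ^ (k + 1))) 2 + p ^ (k * 2) * p ^ (k + 1))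
            + p ^ (2 * (k + 1)) := by ring
        _ = p * (p ^ ((k + 1) * 2) * p ^ (k + 1))
            + p ^ 2 * (p * bilinCount (ZMod (p ^ k)) 2 + p ^ (2 * k)) := by rw [h]; ring
        _ = _ := by rw [ih]; ring
  refine Nat.eq_of_mul_eq_mul_left hp.pos (Nat.add_right_cancel (m := p ^ (2 * l)) ?_)
  rw [hM, mul_add, add_assoc, mul_comm 2 l, hgeom]
  ring

/-! ### Reduction to the bilinear form -/

/-- With `F` and `c` units and `P` nilpotent, `y ↦ F (c y + P y²) + e` is a permutation of a finite ring:
the difference of two values is `F (y - z) (c + P (y + z))`. -/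
lemma bijective_quadratic {R : Type*} [CommRing R] [Finite R] (F c P e : R)
    (hF : IsUnit F) (hc : IsUnit c) (hP : IsNilpotent P) :
    Function.Bijective (fun y : R => F * (c * y + P * y ^ 2) + e) := by
  apply Function.Injective.bijective_of_finite
  intro y z hyz
  have hu : IsUnit (c + P * (y + z)) :=
    IsNilpotent.isUnit_add_left_of_commute ((Commute.all _ _).isNilpotent_mul_right hP) hc
      (Commute.all _ _)
  have h0 : (F * (c + P * (y + z))) * (y - z) = 0 := by
    simp only at hyz
    linear_combination hyz
  exact sub_eq_zero.mp ((hF.mul hu).mul_right_eq_zero.mp h0)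

/-- The change of variables `(h, y) ↦ ((h_k)_{k < κ}, v)` onto the zeros of `∑ h_k v_k`. -/
lemma card_reduction {R : Type*} [CommRing R] [Finite R] (n : ℕ) (F D : Fin (n + 1) → R) (P : R)
    (hF : ∀ a, IsUnit (F a)) (hD : ∀ a, IsUnit (D a)) (h2 : IsUnit (2 : R)) (hP : IsNilpotent P) :
    Nat.card {hy : (Fin (n + 1) → R) × (Fin n → R) |
      (∑ a : Fin n, F a.castSucc * hy.1 a.castSucc *
          (2 * D a.castSucc * hy.2 a + P * (hy.2 a) ^ 2))
        = -3 * P * ∑ a, F a * (hy.1 a) ^ 3 ∧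
      (∑ a, F a * D a ^ 2 * hy.1 a) = 0} = bilinCount R n := by
  obtain ⟨u, hu⟩ := (hF (Fin.last n)).mul ((hD (Fin.last n)).pow 2)
  -- The linear congruence reads `h (last n) = ∑ k, c k * h k`.
  let c : Fin n → R := fun k => -(↑u⁻¹ * (F k.castSucc * D k.castSucc ^ 2))
  have hlin : ∀ h : Fin (n + 1) → R, (∑ a, F a * D a ^ 2 * h a) = 0 ↔
      h (Fin.last n) = ∑ k, c k * h k.castSucc := by
    intro h
    have hc : ∑ k, c k * h k.castSucc
        = -(↑u⁻¹ * ∑ k : Fin n, F k.castSucc * D k.castSucc ^ 2 * h k.castSucc) := by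
      rw [Finset.mul_sum, ← Finset.sum_neg_distrib]
      exact Finset.sum_congr rfl fun k _ => by simp only [c]; ring
    rw [Fin.sum_univ_castSucc, hc, ← hu]
    constructor
    · intro h0
      linear_combination (↑u⁻¹ : R) * h0 - h (Fin.last n) * u.inv_mul
    · intro h0
      linear_combination (u : R) * h0
        - (∑ k : Fin n, F k.castSucc * D k.castSucc ^ 2 * h k.castSucc) * u.mul_inv
  let e : (Fin (n + 1) → R) → Fin n → R := fun h k =>
    3 * P * (F k.castSucc * h k.castSucc ^ 2 + F (Fin.last n) * c k * h (Fin.last n) ^ 2)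
  let g : (Fin (n + 1) → R) → Fin n → R → R := fun h k y =>
    F k.castSucc * (2 * D k.castSucc * y + P * y ^ 2) + e h k
  have hg : ∀ h k, Function.Bijective (g h k) := fun h k =>
    bijective_quadratic _ _ _ _ (hF _) (h2.mul (hD _)) hP
  have hcub : ∀ (h : Fin (n + 1) → R) (y : Fin n → R),
      h (Fin.last n) = ∑ k, c k * h k.castSucc →
      ∑ k, h k.castSucc * g h k (y k)
        = (∑ a : Fin n, F a.castSucc * h a.castSucc *
            (2 * D a.castSucc * y a + P * (y a) ^ 2)) + 3 * P * ∑ a, F a * (h a) ^ 3 := by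
    intro h y h0
    have h3 : F (Fin.last n) * h (Fin.last n) ^ 3
        = ∑ k, F (Fin.last n) * h (Fin.last n) ^ 2 * (c k * h k.castSucc) := by
      rw [← Finset.mul_sum, ← h0]
      ring
    rw [Fin.sum_univ_castSucc, h3, ← Finset.sum_add_distrib, Finset.mul_sum,
      ← Finset.sum_add_distrib]
    exact Finset.sum_congr rfl fun k _ => by simp only [g, e]; ring
  unfold bilinCount
  refine Nat.card_eq_of_bijective (fun hy => ⟨(fun k => hy.1.1 k.castSucc,
    fun k => g hy.1.1 k (hy.1.2 k)), ?_⟩) ⟨?_, ?_⟩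
  · obtain ⟨⟨h, y⟩, h1, h0⟩ := hy
    refine (hcub h y ((hlin h).mp h0)).trans ?_
    simp only at h1
    rw [h1]
    ring
  · rintro ⟨⟨h, y⟩, h1, h0⟩ ⟨⟨h', y'⟩, h1', h0'⟩ heq
    simp only [Subtype.mk.injEq, Prod.mk.injEq] at heq
    obtain ⟨ha, hb⟩ := heq
    have hh : h = h' := by
      funext a
      refine Fin.lastCases ?_ (fun k => congrFun ha k) a
      rw [(hlin h).mp h0, (hlin h').mp h0']
      exact Finset.sum_congr rfl fun k _ => by rw [congrFun ha k]
    subst hh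
    obtain rfl : y = y' := funext fun k => (hg h k).1 (congrFun hb k)
    rfl
  · rintro ⟨⟨x, v⟩, hxv⟩
    simp only at hxv
    let h : Fin (n + 1) → R := Fin.snoc (α := fun _ => R) x (∑ k, c k * x k)
    have hx : ∀ k : Fin n, h k.castSucc = x k := fun k => by simp [h]
    have hl : h (Fin.last n) = ∑ k, c k * h k.castSucc := by simp [h]
    choose y hy using fun k => (hg h k).2 (v k)
    refine ⟨⟨(h, y), ?_, (hlin h).mpr hl⟩, ?_⟩
    · have := hcub h y hl
      simp only [hy, hx, hxv] at this ⊢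
      linear_combination -this
    · simp only [hy, hx]

theorem stmt10 (m κ : ℕ) (hmk : m = 2 * κ) (hm46 : m = 4 ∨ m = 6)
    (p : ℕ) (hp : p.Prime) (hodd : Odd p)
    (s l : ℕ) (hs : 1 ≤ s)
    (f d : Fin κ → ℤ)
    (hpfd : ¬ ((p : ℤ) ∣ 6 * (∏ a, f a) * ∏ a, d a)) :
    Nat.card {hy : (Fin κ → ZMod (p ^ l)) × (Fin (κ - 1) → ZMod (p ^ l)) |
      (∑ a : Fin (κ - 1),
          (f ⟨a.val, by have := a.isLt; omega⟩ : ZMod (p ^ l)) *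
            hy.1 ⟨a.val, by have := a.isLt; omega⟩ *
            (2 * (d ⟨a.val, by have := a.isLt; omega⟩ : ZMod (p ^ l)) * hy.2 a
              + (p : ZMod (p ^ l)) ^ s * (hy.2 a) ^ 2))
        = -3 * (p : ZMod (p ^ l)) ^ s * ∑ a : Fin κ, (f a : ZMod (p ^ l)) * (hy.1 a) ^ 3 ∧
      (∑ a : Fin κ, (f a : ZMod (p ^ l)) * (d a : ZMod (p ^ l)) ^ 2 * hy.1 a) = 0}
    = p ^ (l * (m - 3)) +
        (p - 1) * ∑ j ∈ Finset.range l,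
          p ^ (l * ((m - 3 + 1) / 2) - 1 + j * ((m - 3 - 1) / 2)) := by
  have hpi : Prime (p : ℤ) := Nat.prime_iff_prime_int.mp hp
  obtain ⟨n, rfl⟩ : ∃ n, κ = n + 1 := ⟨κ - 1, by omega⟩
  have hF : ∀ a, IsUnit ((f a : ℤ) : ZMod (p ^ l)) := fun a =>
    isUnit_intCast p l hp _ fun h => hpfd
      (((h.trans (Finset.dvd_prod_of_mem f (Finset.mem_univ a))).mul_left 6).mul_right _)
  have hD : ∀ a, IsUnit ((d a : ℤ) : ZMod (p ^ l)) := fun a =>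
    isUnit_intCast p l hp _ fun h => hpfd
      ((h.trans (Finset.dvd_prod_of_mem d (Finset.mem_univ a))).mul_left _)
  have h2 : IsUnit (2 : ZMod (p ^ l)) := by
    have := isUnit_intCast p l hp 2 fun h => hpfd
      (((h.trans (by norm_num : (2 : ℤ) ∣ 6)).mul_right _).mul_right _)
    exact_mod_cast this
  have hP : IsNilpotent ((p : ZMod (p ^ l)) ^ s) := by
    refine IsNilpotent.pow_of_pos ⟨l, ?_⟩ (by omega)
    have := ZMod.natCast_self (p ^ l)
    exact_mod_cast this
  have : NeZero (p ^ l) := ⟨pow_ne_zero _ hp.ne_zero⟩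
  refine (card_reduction n (fun a => (f a : ZMod (p ^ l))) (fun a => (d a : ZMod (p ^ l)))
    ((p : ZMod (p ^ l)) ^ s) hF hD h2 hP).trans ?_
  rcases hm46 with rfl | rfl
  · obtain rfl : n = 1 := by omega
    simpa using bilinCount_one p l hp
  · obtain rfl : n = 2 := by omega
    simpa using bilinCount_two p l hp
end

section
/- Fix m ≥ 2, nonzero rational numbers F₁,…,F_m, complex numbers s₁,…,s_m with s_i² = F_i, and a polynomial function Q : ℂ^m → ℂ such that Q(c) = ∏_{ε ∈ {±1}^m, ε₁=1} (ε₁s₁^{−1}γ₁³ + ⋯ + ε_m s_m^{−1}γ_m³) for every c ∈ ℂ^m and every γ ∈ ℂ^m with γ_i² = c_i for all i. Let r ≥ 0 be an integer, c ∈ ℂ^m ∖ {0}, and fix γ ∈ ℂ^m with γ_i² = c_i for all i. Then all partial derivatives of Q of order ≤ r vanish at c if and only if there are at least r + 1 distinct sign vectors ε ∈ {±1}^m with ε₁ = 1 and ε₁s₁^{−1}γ₁³ + ⋯ + ε_m s_m^{−1}γ_m³ = 0. -/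
open scoped BigOperators

/-!
The claim is that the order of vanishing of `Q` at `c` equals the number `N` of sign vectors `ε`
(with `ε₁ = 1`) whose factor `∑ εᵢ sᵢ⁻¹ γᵢ³` vanishes.

Let `P(x) = Q(c + x)`, and let `d` be the least degree of a nonzero homogeneous component `H` of
`P`. In characteristic zero all partial derivatives of order `≤ r` vanish at `c` iff `r < d`
(`derivs_vanish_iff`), so it remains to see `d = N`. For this, both sides of the product formula
are restricted to a polynomial curve `Γ(u)` with `Γ(0) = γ` and `Γᵢ(u)² = cᵢ + u² yᵢ(u)`,
`yᵢ(0) = vᵢ`, for a prescribed vector `v`: take `Γᵢ = γᵢ + u² vᵢ / (2γᵢ)` if `γᵢ ≠ 0` and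
`Γᵢ = u √vᵢ` if `γᵢ = 0` (`exists_curve`). Going along `u²` rather than `u` resolves the branching
of `γ` over the coordinates where `c` vanishes, and there `Γᵢ³ = O(u³)` is negligible.

* On the left, `P(u² y(u)) = u^{2d} (H(v) + O(u))` (`exists_aeval_X_sq_mul`).
* On the right, a non-vanishing factor is a unit at `u = 0`, and a vanishing one equals
  `u² ((3/2) Λ_ε(v) + O(u))` with `Λ_ε(v) = ∑ εᵢ sᵢ⁻¹ γᵢ vᵢ`. The linear form `Λ_ε` is nonzero
  because `c ≠ 0`.

For `v` outside the zero locus of `H ∏ Λ_ε`, comparing the orders in `u` gives `2d = 2N`.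
-/

open MvPolynomial in
/-- Since the characteristic is zero, iterated partial derivatives at the origin detect exactly the
corresponding Taylor coefficients. -/
lemma coeff_foldr_pderiv_eq_zero_iff {m : ℕ} (P : MvPolynomial (Fin m) ℂ) (L : List (Fin m))
    (n : Fin m →₀ ℕ) :
    coeff n (L.foldr (fun i P => pderiv i P) P) = 0 ↔
      coeff (n + Multiset.toFinsupp (L : Multiset (Fin m))) P = 0 := by
  induction L generalizing n with
  | nil => simp
  | cons i L ih =>
    have h : ((n i : ℂ) + 1) ≠ 0 := Nat.cast_add_one_ne_zero (n i)
    rw [List.foldr_cons, coeff_pderiv, mul_eq_zero, or_iff_left h, ih, ← Multiset.cons_coe,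
      ← Multiset.singleton_add, Multiset.toFinsupp_add, Multiset.toFinsupp_singleton, add_assoc]

/-- The Taylor shift `x ↦ Q (c + x)`. -/
noncomputable def shift {m : ℕ} (c : Fin m → ℂ) :
    MvPolynomial (Fin m) ℂ →ₐ[ℂ] MvPolynomial (Fin m) ℂ :=
  MvPolynomial.aeval (fun i => MvPolynomial.X i + MvPolynomial.C (c i))

open MvPolynomial in
lemma pderiv_shift {m : ℕ} (c : Fin m → ℂ) (i : Fin m) (Q : MvPolynomial (Fin m) ℂ) :
    pderiv i (shift c Q) = shift c (pderiv i Q) := by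
  induction Q using MvPolynomial.induction_on with
  | C a => simp [shift]
  | add p q hp hq => simp [hp, hq]
  | mul_X p j hp =>
    rw [map_mul, pderiv_mul, hp, pderiv_mul, map_add, map_mul, map_mul]
    by_cases h : j = i
    · subst h; simp [shift]
    · simp [shift, pderiv_X_of_ne h]

open MvPolynomial in
lemma foldr_pderiv_shift {m : ℕ} (c : Fin m → ℂ) (L : List (Fin m))
    (Q : MvPolynomial (Fin m) ℂ) :
    L.foldr (fun i P => pderiv i P) (shift c Q) =
      shift c (L.foldr (fun i P => pderiv i P) Q) := by
  induction L with
  | nil => rfl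
  | cons i L ih => rw [List.foldr_cons, ih, pderiv_shift, List.foldr_cons]

open MvPolynomial in
lemma coeff_zero_shift {m : ℕ} (c : Fin m → ℂ) (Q : MvPolynomial (Fin m) ℂ) :
    coeff 0 (shift c Q) = eval c Q := by
  rw [← constantCoeff_eq]
  induction Q using MvPolynomial.induction_on with
  | C a => simp [shift]
  | add p q hp hq => simp [hp, hq]
  | mul_X p j hp => rw [map_mul, map_mul, hp]; simp [shift]

open MvPolynomial in
lemma derivs_vanish_iff {m : ℕ} (Q : MvPolynomial (Fin m) ℂ) (r : ℕ) (c : Fin m → ℂ) :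
    (∀ L : List (Fin m), L.length ≤ r →
        eval c (L.foldr (fun i P => pderiv i P) Q) = 0) ↔
      ∀ k ≤ r, homogeneousComponent k (shift c Q) = 0 := by
  have key (L : List (Fin m)) : eval c (L.foldr (fun i P => pderiv i P) Q) = 0 ↔
      coeff (Multiset.toFinsupp (L : Multiset (Fin m))) (shift c Q) = 0 := by
    rw [← coeff_zero_shift, ← foldr_pderiv_shift, coeff_foldr_pderiv_eq_zero_iff, zero_add]
  simp only [key]
  have hdeg (n : Fin m →₀ ℕ) : n.degree = n.toMultiset.card := by
    rw [Finsupp.card_toMultiset, Finsupp.degree_apply]; rfl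
  constructor
  · intro h k hk
    ext n
    rw [coeff_homogeneousComponent, coeff_zero]
    split_ifs with hn
    · have := h n.toMultiset.toList (by rw [Multiset.length_toList, ← hdeg, hn]; exact hk)
      rwa [Multiset.coe_toList, Finsupp.toMultiset_toFinsupp] at this
    · rfl
  · intro h L hL
    have := congrArg (coeff (Multiset.toFinsupp (L : Multiset (Fin m)))) (h _ hL)
    rwa [coeff_homogeneousComponent, coeff_zero, if_pos] at this
    rw [hdeg, Multiset.toFinsupp_toMultiset, Multiset.coe_card]

/-- If `P` starts in degree `d`, then `P(u² y(u)) = u^{2d} (P_d(y(0)) + O(u))`. -/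
lemma exists_aeval_X_sq_mul {m : ℕ} (P : MvPolynomial (Fin m) ℂ) (d : ℕ)
    (hP : ∀ k < d, MvPolynomial.homogeneousComponent k P = 0) (y : Fin m → Polynomial ℂ) :
    ∃ A : Polynomial ℂ,
      MvPolynomial.aeval (fun i => Polynomial.X ^ 2 * y i) P = Polynomial.X ^ (2 * d) * A ∧
      A.eval 0 = MvPolynomial.eval (fun i => (y i).eval 0)
        (MvPolynomial.homogeneousComponent d P) := by
  have hd : ∀ n ∈ P.support, d ≤ n.degree := by
    intro n hn
    by_contra! hlt
    have := congrArg (MvPolynomial.coeff n) (hP _ hlt)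
    rw [MvPolynomial.coeff_homogeneousComponent, if_pos rfl, MvPolynomial.coeff_zero] at this
    exact MvPolynomial.mem_support_iff.mp hn this
  refine ⟨∑ n ∈ P.support, Polynomial.C (P.coeff n) *
    (Polynomial.X ^ (2 * (n.degree - d)) * ∏ i, y i ^ n i), ?_, ?_⟩
  · rw [MvPolynomial.aeval_def, MvPolynomial.eval₂_eq', Finset.mul_sum]
    refine Finset.sum_congr rfl fun n hn => ?_
    have h1 : ∏ i, (Polynomial.X ^ 2 * y i) ^ n i
        = Polynomial.X ^ (2 * n.degree) * ∏ i, y i ^ n i := by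
      simp_rw [mul_pow]
      rw [Finset.prod_mul_distrib, Finset.prod_pow_eq_pow_sum, ← Finsupp.degree_eq_sum, ← pow_mul]
    have h2 : 2 * n.degree = 2 * d + 2 * (n.degree - d) := by have := hd n hn; omega
    rw [h1, h2, pow_add, Polynomial.algebraMap_eq]
    ring
  · rw [MvPolynomial.homogeneousComponent_apply, map_sum, Polynomial.eval_finsetSum,
      Finset.sum_filter]
    refine Finset.sum_congr rfl fun n hn => ?_
    split_ifs with h
    · simp [h, MvPolynomial.eval_monomial, Finsupp.prod_fintype, Polynomial.eval_prod]
    · have : n.degree - d ≠ 0 := by have := hd n hn; omega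
      simp [this]

/-- A polynomial curve through `γ` whose coordinatewise square moves along `u²` in direction `v`,
together with the expansion of its cubes to second order. -/
lemma exists_curve {m : ℕ} (γ v : Fin m → ℂ) :
    ∃ Γ y g : Fin m → Polynomial ℂ, ∀ i,
      Γ i ^ 2 = Polynomial.X ^ 2 * y i + Polynomial.C (γ i ^ 2) ∧ (y i).eval 0 = v i ∧
      Γ i ^ 3 = Polynomial.C (γ i ^ 3) + Polynomial.X ^ 2 * g i ∧
      (g i).eval 0 = 3 / 2 * (γ i * v i) := by
  have h (i : Fin m) : ∃ Γ y g : Polynomial ℂ,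
      Γ ^ 2 = Polynomial.X ^ 2 * y + Polynomial.C (γ i ^ 2) ∧ y.eval 0 = v i ∧
      Γ ^ 3 = Polynomial.C (γ i ^ 3) + Polynomial.X ^ 2 * g ∧
      g.eval 0 = 3 / 2 * (γ i * v i) := by
    by_cases hi : γ i = 0
    · obtain ⟨w, hw⟩ := IsAlgClosed.exists_pow_nat_eq (v i) (n := 2) (by norm_num)
      refine ⟨Polynomial.X * Polynomial.C w, Polynomial.C (w ^ 2),
        Polynomial.X * Polynomial.C (w ^ 3), ?_, by simp [hw], ?_, by simp [hi]⟩ <;>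
      · simp only [hi, map_pow, map_zero]; ring
    · obtain ⟨w, hw⟩ : ∃ w, v i = 2 * γ i * w := ⟨v i / (2 * γ i), by field_simp⟩
      refine ⟨Polynomial.C (γ i) + Polynomial.X ^ 2 * Polynomial.C w,
        2 * Polynomial.C (γ i) * Polynomial.C w + Polynomial.X ^ 2 * Polynomial.C w ^ 2,
        3 * Polynomial.C (γ i) ^ 2 * Polynomial.C w
          + 3 * Polynomial.C (γ i) * Polynomial.C w ^ 2 * Polynomial.X ^ 2
          + Polynomial.C w ^ 3 * Polynomial.X ^ 4, ?_, ?_, ?_, ?_⟩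
      · simp only [map_pow]; ring
      · simp [hw]
      · simp only [map_pow]; ring
      · simp [hw]; ring
  choose Γ y g h using h
  exact ⟨Γ, y, g, h⟩

lemma X_pow_mul_unit_exponent_le {a b : ℕ} {A B : Polynomial ℂ} (hA : A.eval 0 ≠ 0)
    (h : Polynomial.X ^ a * A = Polynomial.X ^ b * B) : b ≤ a := by
  by_contra! hlt
  obtain ⟨k, rfl⟩ := Nat.exists_eq_add_of_lt hlt
  rw [add_assoc, pow_add, mul_assoc] at h
  have := mul_left_cancel₀ (pow_ne_zero _ Polynomial.X_ne_zero) h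
  apply hA
  rw [this]
  simp

/-- Along the curve in direction `v`, the product of the factors `∑ aᵢ γᵢ³`, `a` ranging over a
finite family, has order twice the number of factors that vanish at `γ`, as soon as all
the linear forms `∑ aᵢ γᵢ vᵢ` are nonzero at `v`. -/
lemma exists_prod_eq_X_pow_mul {m : ℕ} {ι : Type*} (E : Finset ι) (a : ι → Fin m → ℂ)
    (γ v : Fin m → ℂ) (hv : ∀ e ∈ E, ∑ i, a e i * γ i * v i ≠ 0)
    (Γ g : Fin m → Polynomial ℂ)
    (hΓ : ∀ i, Γ i ^ 3 = Polynomial.C (γ i ^ 3) + Polynomial.X ^ 2 * g i)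
    (hg : ∀ i, (g i).eval 0 = 3 / 2 * (γ i * v i)) :
    ∃ B : Polynomial ℂ, B.eval 0 ≠ 0 ∧
      ∏ e ∈ E, ∑ i, Polynomial.C (a e i) * Γ i ^ 3 =
        Polynomial.X ^ (2 * (E.filter (fun e => ∑ i, a e i * γ i ^ 3 = 0)).card) * B := by
  classical
  have h1 (e : ι) : ∃ B : Polynomial ℂ, (e ∈ E → B.eval 0 ≠ 0) ∧
      ∑ i, Polynomial.C (a e i) * Γ i ^ 3 =
        (if ∑ i, a e i * γ i ^ 3 = 0 then Polynomial.X ^ 2 else 1) * B := by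
    have hexp : ∑ i, Polynomial.C (a e i) * Γ i ^ 3 = Polynomial.C (∑ i, a e i * γ i ^ 3) +
        Polynomial.X ^ 2 * ∑ i, Polynomial.C (a e i) * g i := by
      rw [map_sum, Finset.mul_sum, ← Finset.sum_add_distrib]
      refine Finset.sum_congr rfl fun i _ => ?_
      rw [hΓ, map_mul]; ring
    split_ifs with h0
    · refine ⟨∑ i, Polynomial.C (a e i) * g i, fun he => ?_, by rw [hexp, h0]; simp⟩
      have : (∑ i, Polynomial.C (a e i) * g i).eval 0 = 3 / 2 * ∑ i, a e i * γ i * v i := by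
        rw [Polynomial.eval_finsetSum, Finset.mul_sum]
        refine Finset.sum_congr rfl fun i _ => ?_
        rw [Polynomial.eval_mul, hg, Polynomial.eval_C]; ring
      rw [this]
      exact mul_ne_zero (by norm_num) (hv e he)
    · refine ⟨_, fun _ => ?_, (one_mul _).symm⟩
      rw [hexp, Polynomial.eval_add, Polynomial.eval_C, Polynomial.eval_mul]
      simpa only [Polynomial.eval_pow, Polynomial.eval_X, ne_eq, OfNat.ofNat_ne_zero,
        not_false_eq_true, zero_pow, zero_mul, add_zero] using h0
  choose B hB hB' using h1
  refine ⟨∏ e ∈ E, B e, ?_, ?_⟩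
  · rw [Polynomial.eval_prod]
    exact Finset.prod_ne_zero_iff.mpr hB
  · rw [Finset.prod_congr rfl fun e _ => hB' e, Finset.prod_mul_distrib, Finset.prod_ite]
    simp [pow_mul]

/-- Finitely many nonzero linear forms and one nonzero polynomial have a common non-zero. -/
lemma exists_generic {m : ℕ} {ι : Type*} (E : Finset ι) (b : ι → Fin m → ℂ)
    (hb : ∀ e ∈ E, ∃ i, b e i ≠ 0) (H : MvPolynomial (Fin m) ℂ) (hH : H ≠ 0) :
    ∃ v : Fin m → ℂ, MvPolynomial.eval v H ≠ 0 ∧ ∀ e ∈ E, ∑ i, b e i * v i ≠ 0 := by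
  classical
  have hprod : H * ∏ e ∈ E, ∑ i, MvPolynomial.C (b e i) * MvPolynomial.X i ≠ 0 := by
    refine mul_ne_zero hH (Finset.prod_ne_zero_iff.mpr fun e he h0 => ?_)
    obtain ⟨j, hj⟩ := hb e he
    have := congrArg (MvPolynomial.eval (Pi.single j (1 : ℂ))) h0
    simp [Pi.single_apply] at this
    exact hj this
  obtain ⟨v, hv⟩ : ∃ v, MvPolynomial.eval v
      (H * ∏ e ∈ E, ∑ i, MvPolynomial.C (b e i) * MvPolynomial.X i) ≠ 0 := by
    by_contra! h
    exact hprod (MvPolynomial.funext fun v => by rw [h v, map_zero])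
  rw [map_mul, mul_ne_zero_iff, map_prod, Finset.prod_ne_zero_iff] at hv
  exact ⟨v, hv.1, fun e he => by simpa using hv.2 e he⟩

/-- The lowest homogeneous component of the Taylor expansion of `Q` at `c` sits in degree equal to
the number of factors vanishing at `γ`. -/
lemma order_eq_card {m : ℕ} {ι : Type*} (E : Finset ι) (a : ι → Fin m → ℂ)
    (ha : ∀ e ∈ E, ∀ i, a e i ≠ 0) (Q : MvPolynomial (Fin m) ℂ)
    (hQ : ∀ c γ : Fin m → ℂ, (∀ i, γ i ^ 2 = c i) →
      MvPolynomial.eval c Q = ∏ e ∈ E, ∑ i, a e i * γ i ^ 3)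
    (c : Fin m → ℂ) (hc : c ≠ 0) (γ : Fin m → ℂ) (hγ : ∀ i, γ i ^ 2 = c i) (r : ℕ) :
    (∀ k ≤ r, MvPolynomial.homogeneousComponent k (shift c Q) = 0) ↔
      r < (E.filter (fun e => ∑ i, a e i * γ i ^ 3 = 0)).card := by
  classical
  set N := (E.filter (fun e => ∑ i, a e i * γ i ^ 3 = 0)).card with hN
  have hb : ∀ e ∈ E, ∃ i, a e i * γ i ≠ 0 := by
    intro e he
    obtain ⟨i, hi⟩ := Function.ne_iff.mp hc
    refine ⟨i, mul_ne_zero (ha e he i) fun h => hi ?_⟩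
    rw [← hγ i, h]; simp
  -- Restriction of the product formula to the curve in a generic direction.
  have key (H : MvPolynomial (Fin m) ℂ) (hH : H ≠ 0) : ∃ y : Fin m → Polynomial ℂ,
      MvPolynomial.eval (fun i => (y i).eval 0) H ≠ 0 ∧ ∃ B : Polynomial ℂ, B.eval 0 ≠ 0 ∧
        MvPolynomial.aeval (fun i => Polynomial.X ^ 2 * y i) (shift c Q) =
          Polynomial.X ^ (2 * N) * B := by
    obtain ⟨v, hvH, hv⟩ := exists_generic E (fun e i => a e i * γ i) hb H hH
    obtain ⟨Γ, y, g, h⟩ := exists_curve γ v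
    obtain ⟨B, hB, hprod⟩ := exists_prod_eq_X_pow_mul E a γ v hv Γ g
      (fun i => (h i).2.2.1) (fun i => (h i).2.2.2)
    refine ⟨y, ?_, B, hB, ?_⟩
    · simpa only [(h _).2.1] using hvH
    · rw [← hN] at hprod
      rw [← hprod]
      have hcomp : MvPolynomial.aeval (fun i => Polynomial.X ^ 2 * y i) (shift c Q) =
          MvPolynomial.aeval (fun i => Γ i ^ 2) Q := by
        rw [shift, ← AlgHom.comp_apply, MvPolynomial.comp_aeval]
        congr 2
        funext i
        simp [(h i).1, hγ]
      rw [hcomp]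
      refine Polynomial.funext fun u => ?_
      have h1 : (MvPolynomial.aeval (fun i => Γ i ^ 2) Q).eval u =
          MvPolynomial.eval (fun i => (Γ i).eval u ^ 2) Q := by
        rw [← Polynomial.coe_aeval_eq_eval, ← AlgHom.comp_apply, MvPolynomial.comp_aeval,
          ← MvPolynomial.coe_aeval_eq_eval]
        simp
      rw [h1, hQ _ (fun i => (Γ i).eval u) (fun i => rfl)]
      simp [Polynomial.eval_prod, Polynomial.eval_finsetSum]
  have hP : shift c Q ≠ 0 := by
    intro h0
    obtain ⟨y, -, B, hB, h⟩ := key 1 one_ne_zero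
    rw [h0, map_zero] at h
    rcases mul_eq_zero.mp h.symm with h | h
    · exact pow_ne_zero _ Polynomial.X_ne_zero h
    · exact hB (by rw [h]; simp)
  have hex : ∃ d, MvPolynomial.homogeneousComponent d (shift c Q) ≠ 0 := by
    by_contra! h
    exact hP (by rw [← MvPolynomial.sum_homogeneousComponent (shift c Q)]; simp [h])
  obtain ⟨y, hy, B, hB, h⟩ := key _ (Nat.find_spec hex)
  have hmin : ∀ k < Nat.find hex, MvPolynomial.homogeneousComponent k (shift c Q) = 0 :=
    fun k hk => not_not.mp (Nat.find_min hex hk)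
  obtain ⟨A, hA, hA0⟩ := exists_aeval_X_sq_mul _ _ hmin y
  rw [← hA0] at hy
  rw [hA] at h
  have hdN : Nat.find hex = N := by
    have h1 := X_pow_mul_unit_exponent_le hy h
    have h2 := X_pow_mul_unit_exponent_le hB h.symm
    omega
  rw [← hdN]
  constructor
  · intro hr
    by_contra! hle
    exact Nat.find_spec hex (hr _ hle)
  · exact fun hr k hk => hmin k (hk.trans_lt hr)

theorem stmt11 (m : ℕ) (hm : 2 ≤ m)
    (Fc : Fin m → ℚ) (hFc : ∀ i, Fc i ≠ 0)
    (s : Fin m → ℂ) (hs : ∀ i, (s i) ^ 2 = (Fc i : ℂ))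
    (Q : MvPolynomial (Fin m) ℂ)
    (hQ : ∀ (c γ : Fin m → ℂ), (∀ i, (γ i) ^ 2 = c i) →
      MvPolynomial.eval c Q =
        ∏ ε ∈ Finset.univ.filter (fun ε : Fin m → Bool => ε ⟨0, by omega⟩ = true),
          ∑ i, (if ε i then (1 : ℂ) else -1) * (s i)⁻¹ * (γ i) ^ 3)
    (r : ℕ) (c : Fin m → ℂ) (hc : c ≠ 0)
    (γ : Fin m → ℂ) (hγ : ∀ i, (γ i) ^ 2 = c i) :
    (∀ L : List (Fin m), L.length ≤ r →
        MvPolynomial.eval c (L.foldr (fun i P => MvPolynomial.pderiv i P) Q) = 0)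
      ↔ r + 1 ≤ Nat.card {ε : Fin m → Bool //
          ε ⟨0, by omega⟩ = true ∧
          (∑ i, (if ε i then (1 : ℂ) else -1) * (s i)⁻¹ * (γ i) ^ 3) = 0} := by
  have hs0 : ∀ i, s i ≠ 0 := by
    intro i h
    have := hs i
    rw [h] at this
    exact hFc i (by exact_mod_cast (by simpa using this.symm : (Fc i : ℂ) = 0))
  have key := order_eq_card
    (Finset.univ.filter (fun ε : Fin m → Bool => ε ⟨0, by omega⟩ = true))
    (fun ε i => (if ε i then (1 : ℂ) else -1) * (s i)⁻¹)
    (fun ε _ i => mul_ne_zero (by split_ifs <;> simp) (inv_ne_zero (hs0 i))) Q hQ c hc γ hγ r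
  rw [Finset.filter_filter, ← Fintype.card_subtype, ← Nat.card_eq_fintype_card] at key
  exact (derivs_vanish_iff Q r c).trans key
end

section
/- Fix an even integer m ≥ 4, nonzero rational numbers F₁,…,F_m, complex numbers s₁,…,s_m with s_i² = F_i, and a polynomial function Q : ℂ^m → ℂ such that Q(c) = ∏_{ε ∈ {±1}^m, ε₁=1} (ε₁s₁^{−1}γ₁³ + ⋯ + ε_m s_m^{−1}γ_m³) for every c ∈ ℂ^m and every γ ∈ ℂ^m with γ_i² = c_i for all i. Fix a partition of {1,…,m} into m/2 pairs {i_k,j_k} and complex numbers t_k with t_k³ = F_{j_k}/F_{i_k}, and let c ∈ ℂ^m satisfy c_{j_k} = t_k·c_{i_k} for all k. Then every partial derivative of Q of order ≤ 2^{m/2−1} − 1 vanishes at c. -/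
/-!
Substitute `c_i = γ_i²`.  As an identity of polynomials in `γ` (the field `ℂ` is infinite), `Q(γ²)`
is the product of the forms `ℓ_ε = ∑ ε_i s_i⁻¹ γ_i³`.

Suppose first that no coordinate of `c` is zero.  Choose square roots `g_i` of the `c_i`; the
relation `c_{J a} = t_a c_{I a}` says that `s_{J a}⁻¹ g_{J a}³ = ± s_{I a}⁻¹ g_{I a}³`, and the sign
of `g_{J a}` can be chosen so that the sign here is `-`.  Then `ℓ_ε(g) = 0` for each `ε` that is
constant on the pairs, and `2 ^ (k - 1)` of these have `ε₀ = +`.  Hence `Q(γ²)` lies in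
`M ^ (2 ^ (k - 1))`, with `M` the maximal ideal of the point `g`.  By the chain rule
`∂_i (R(γ²)) = 2 γ_i (∂_i R)(γ²)`; a derivation maps `M ^ (n + 1)` into `M ^ n`, and `γ_i ∉ M` can
be cancelled modulo `M ^ n` because `M ^ n` is `M`-primary.  So each partial derivative of `Q` costs
at most one power of `M`, and those of order less than `2 ^ (k - 1)` vanish at `c = g²`.

For arbitrary `c`, the points in question form a linear space parametrised by the coordinates
`c_{I a}`; a polynomial vanishing where all these coordinates are nonzero vanishes on the whole
space.
-/

theorem derivation_mem_pow {R A : Type*} [CommRing R] [CommRing A] [Algebra R A]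
    (D : Derivation R A A) (M : Ideal A) (n : ℕ) (x : A) (hx : x ∈ M ^ (n + 1)) :
    D x ∈ M ^ n := by
  induction n generalizing x with
  | zero => simp
  | succ n ih =>
    rw [pow_succ] at hx
    refine Submodule.mul_induction_on hx (fun a ha b hb => ?_) (fun a b ha hb => ?_)
    · rw [D.leibniz, smul_eq_mul, smul_eq_mul]
      refine add_mem (Ideal.mul_mem_right _ _ ha) ?_
      rw [pow_succ, mul_comm]
      exact Ideal.mul_mem_mul hb (ih a ha)
    · rw [map_add]
      exact add_mem ha hb

theorem pderiv_expand_two {σ : Type*} (i : σ) (R : MvPolynomial σ ℂ) :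
    MvPolynomial.pderiv i (MvPolynomial.expand 2 R) =
      (2 * MvPolynomial.X i) * MvPolynomial.expand 2 (MvPolynomial.pderiv i R) := by
  classical
  induction R using MvPolynomial.induction_on with
  | C a => simp
  | add p q hp hq => simp [hp, hq, mul_add]
  | mul_X p j hp =>
    simp only [map_mul, Derivation.leibniz, smul_eq_mul, hp, MvPolynomial.expand_X, map_add,
      MvPolynomial.pderiv_X, Derivation.leibniz_pow]
    by_cases h : j = i
    · subst h
      simp
      ring
    · simp [h]
      ring

/-- The order of vanishing of `R(γ²)` at a point `g` with nonzero coordinates drops by at most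
`L.length` when `R` is replaced by its partial derivative along `L`. -/
theorem expand_foldr_mem {σ : Type*} (g : σ → ℂ) (hg : ∀ i, g i ≠ 0) (Q : MvPolynomial σ ℂ)
    (L : List σ) (n : ℕ)
    (hQ : MvPolynomial.expand 2 Q ∈ RingHom.ker (MvPolynomial.eval g) ^ (n + L.length)) :
    MvPolynomial.expand 2 (L.foldr (fun i P => MvPolynomial.pderiv i P) Q) ∈
      RingHom.ker (MvPolynomial.eval g) ^ n := by
  have hmax : (RingHom.ker (MvPolynomial.eval g)).IsMaximal :=
    RingHom.ker_isMaximal_of_surjective _ fun z => ⟨MvPolynomial.C z, by simp⟩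
  induction L generalizing n with
  | nil => simpa using hQ
  | cons i L ih =>
    have h1 := ih (n + 1) (by simpa [add_assoc, add_comm, add_left_comm] using hQ)
    have h2 := derivation_mem_pow (MvPolynomial.pderiv i) _ n _ h1
    rw [pderiv_expand_two] at h2
    rcases Nat.eq_zero_or_pos n with rfl | hn
    · simp
    have hprim : (RingHom.ker (MvPolynomial.eval g) ^ n).IsPrimary := by
      apply Ideal.isPrimary_of_isMaximal_radical
      rw [Ideal.radical_pow _ hn.ne', hmax.isPrime.radical]
      exact hmax
    rw [mul_comm, Ideal.isPrimary_iff] at *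
    rcases hprim.2 h2 with h | h
    · exact h
    · rw [Ideal.radical_pow _ hn.ne', hmax.isPrime.radical] at h
      simp [RingHom.mem_ker, hg] at h

theorem card_bool_fun_true {k : ℕ} (a : Fin k) :
    (Finset.univ.filter (fun η : Fin k → Bool => η a = true)).card = 2 ^ (k - 1) := by
  have : Finset.univ.filter (fun η : Fin k → Bool => η a = true) =
      Fintype.piFinset (fun b => if b = a then {true} else Finset.univ) := by
    ext η
    simp only [Finset.mem_filter, Finset.mem_univ, true_and, Fintype.mem_piFinset]
    constructor
    · intro h b
      by_cases hb : b = a <;> simp [hb, h]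
    · intro h
      simpa using h a
  rw [this, Fintype.card_piFinset]
  have h2 : ∀ b, (if b = a then ({true} : Finset Bool) else Finset.univ).card =
      if b = a then 1 else 2 := by
    intro b
    by_cases hb : b = a <;> simp [hb]
  rw [Finset.prod_congr rfl (fun b _ => h2 b)]
  simp [Finset.filter_ne', Finset.prod_ite]

/-- The square root of `d` can be chosen to cancel the term of its partner `c = g²`. -/
theorem exists_sqrt_cancel {f f' σ σ' c d t g : ℂ} (hf : f ≠ 0) (hf' : f' ≠ 0)
    (hσ : σ ^ 2 = f) (hσ' : σ' ^ 2 = f') (ht : t ^ 3 = f' / f) (hd : d = t * c)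
    (hg : g ^ 2 = c) : ∃ h : ℂ, h ^ 2 = d ∧ σ⁻¹ * g ^ 3 + σ'⁻¹ * h ^ 3 = 0 := by
  obtain ⟨h, hh⟩ := IsAlgClosed.exists_pow_nat_eq d (n := 2) (by norm_num)
  have key : (σ'⁻¹ * h ^ 3) ^ 2 = (σ⁻¹ * g ^ 3) ^ 2 := by
    have e1 : (σ'⁻¹ * h ^ 3) ^ 2 = (σ' ^ 2)⁻¹ * (h ^ 2) ^ 3 := by ring
    have e2 : (σ⁻¹ * g ^ 3) ^ 2 = (σ ^ 2)⁻¹ * (g ^ 2) ^ 3 := by ring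
    rw [e1, e2, hh, hg, hσ, hσ', hd, mul_pow, ht]
    field_simp
  rcases sq_eq_sq_iff_eq_or_eq_neg.1 key with h1 | h1
  · refine ⟨-h, by rw [neg_sq, hh], ?_⟩
    rw [← h1]
    ring
  · exact ⟨h, hh, by rw [h1]; ring⟩

/-- The case in which no coordinate of `c` vanishes. -/
theorem stmt12_of_ne_zero (m k : ℕ) (z : Fin m)
    (Fc : Fin m → ℚ) (hFc : ∀ i, Fc i ≠ 0)
    (s : Fin m → ℂ) (hs : ∀ i, (s i) ^ 2 = (Fc i : ℂ))
    (Q : MvPolynomial (Fin m) ℂ)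
    (hQ : ∀ (c γ : Fin m → ℂ), (∀ i, (γ i) ^ 2 = c i) →
      MvPolynomial.eval c Q =
        ∏ ε ∈ Finset.univ.filter (fun ε : Fin m → Bool => ε z = true),
          ∑ i, (if ε i then (1 : ℂ) else -1) * (s i)⁻¹ * (γ i) ^ 3)
    (e : Fin k ⊕ Fin k ≃ Fin m)
    (t : Fin k → ℂ)
    (ht : ∀ a, (t a) ^ 3 = (Fc (e (Sum.inr a)) : ℂ) / (Fc (e (Sum.inl a)) : ℂ))
    (c : Fin m → ℂ) (hcp : ∀ a, c (e (Sum.inr a)) = t a * c (e (Sum.inl a)))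
    (hc : ∀ i, c i ≠ 0)
    (L : List (Fin m)) (hL : L.length ≤ 2 ^ (k - 1) - 1) :
    MvPolynomial.eval c (L.foldr (fun i P => MvPolynomial.pderiv i P) Q) = 0 := by
  classical
  have hF : ∀ i, (Fc i : ℂ) ≠ 0 := fun i => by exact_mod_cast hFc i
  choose g₁ hg₁ using fun a : Fin k =>
    IsAlgClosed.exists_pow_nat_eq (c (e (Sum.inl a))) (n := 2) (by norm_num)
  choose g₂ hg₂ hcancel using fun a : Fin k =>
    exists_sqrt_cancel (hF (e (Sum.inl a))) (hF (e (Sum.inr a))) (hs _) (hs _) (ht a) (hcp a)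
      (hg₁ a)
  set g : Fin m → ℂ := fun i => Sum.elim g₁ g₂ (e.symm i) with hgdef
  have hg : ∀ i, g i ^ 2 = c i := by
    intro i
    obtain ⟨x, rfl⟩ := e.surjective i
    rcases x with a | a <;> simp [hgdef, hg₁, hg₂]
  have hg0 : ∀ i, g i ≠ 0 := fun i h => hc i (by rw [← hg i, h]; simp)
  set ℓ : (Fin m → Bool) → MvPolynomial (Fin m) ℂ := fun ε =>
    ∑ i, MvPolynomial.C ((if ε i then (1 : ℂ) else -1) * (s i)⁻¹) * MvPolynomial.X i ^ 3 with hℓ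
  have hexp : MvPolynomial.expand 2 Q =
      ∏ ε ∈ Finset.univ.filter (fun ε : Fin m → Bool => ε z = true), ℓ ε := by
    refine MvPolynomial.funext fun γ => ?_
    have h1 : MvPolynomial.eval γ (MvPolynomial.expand 2 Q) =
        MvPolynomial.eval (fun i => γ i ^ 2) Q := by
      rw [MvPolynomial.eval_expand]
      rfl
    rw [h1, hQ _ γ (fun _ => rfl), map_prod]
    simp [hℓ]
  set M := RingHom.ker (MvPolynomial.eval g) with hM
  let π : Fin m → Fin k := fun i => Sum.elim id id (e.symm i)
  have hπ : Function.Surjective π := fun a => ⟨e (Sum.inl a), by simp [π]⟩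
  let S := Finset.univ.filter (fun η : Fin k → Bool => η (π z) = true)
  have hinj : Function.Injective (fun η : Fin k → Bool => η ∘ π) := hπ.injective_comp_right
  have hsub : S.image (fun η => η ∘ π) ⊆
      Finset.univ.filter (fun ε : Fin m → Bool => ε z = true) := by
    intro ε hε
    obtain ⟨η, hη, rfl⟩ := Finset.mem_image.1 hε
    simpa [S] using hη
  have hvan : ∀ η : Fin k → Bool, ℓ (η ∘ π) ∈ M := by
    intro η
    rw [hM, RingHom.mem_ker]
    simp only [hℓ, map_sum, map_mul, map_pow, MvPolynomial.eval_C, MvPolynomial.eval_X]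
    rw [← e.sum_comp, Fintype.sum_sum_type, ← Finset.sum_add_distrib]
    refine Finset.sum_eq_zero fun a _ => ?_
    simp only [hgdef, π, Function.comp, Equiv.symm_apply_apply, Sum.elim_inl, Sum.elim_inr, id]
    linear_combination (if η a = true then (1 : ℂ) else -1) * hcancel a
  have hmem : MvPolynomial.expand 2 Q ∈ M ^ (2 ^ (k - 1)) := by
    rw [hexp, ← Finset.prod_sdiff hsub]
    refine Ideal.mul_mem_left _ _ ?_
    rw [Finset.prod_image hinj.injOn, ← card_bool_fun_true (π z), ← Finset.prod_const]
    exact Ideal.prod_mem_prod fun η _ => hvan η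
  have hpos : 0 < 2 ^ (k - 1) := by positivity
  have h := expand_foldr_mem g hg0 Q L 1 (Ideal.pow_le_pow_right (by omega) hmem)
  rw [pow_one, RingHom.mem_ker, MvPolynomial.eval_expand] at h
  rwa [show g ^ 2 = c from funext hg] at h

theorem stmt12 (m k : ℕ) (hmk : m = 2 * k) (hk : 2 ≤ k)
    (Fc : Fin m → ℚ) (hFc : ∀ i, Fc i ≠ 0)
    (s : Fin m → ℂ) (hs : ∀ i, (s i) ^ 2 = (Fc i : ℂ))
    (Q : MvPolynomial (Fin m) ℂ)
    (hQ : ∀ (c γ : Fin m → ℂ), (∀ i, (γ i) ^ 2 = c i) →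
      MvPolynomial.eval c Q =
        ∏ ε ∈ Finset.univ.filter (fun ε : Fin m → Bool => ε ⟨0, by omega⟩ = true),
          ∑ i, (if ε i then (1 : ℂ) else -1) * (s i)⁻¹ * (γ i) ^ 3)
    (I J : Fin k → Fin m) (hIJ : Function.Bijective (Sum.elim I J))
    (t : Fin k → ℂ) (ht : ∀ a, (t a) ^ 3 = (Fc (J a) : ℂ) / (Fc (I a) : ℂ))
    (c : Fin m → ℂ) (hcp : ∀ a, c (J a) = t a * c (I a)) :
    ∀ L : List (Fin m), L.length ≤ 2 ^ (k - 1) - 1 →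
      MvPolynomial.eval c (L.foldr (fun i P => MvPolynomial.pderiv i P) Q) = 0 := by
  intro L hL
  have hF : ∀ i, (Fc i : ℂ) ≠ 0 := fun i => by exact_mod_cast hFc i
  have ht0 : ∀ a, t a ≠ 0 := by
    intro a h
    have h1 := ht a
    rw [h, zero_pow (by norm_num)] at h1
    exact div_ne_zero (hF _) (hF _) h1.symm
  let e : Fin k ⊕ Fin k ≃ Fin m := Equiv.ofBijective _ hIJ
  -- The linear parametrisation of the space of admissible `c` by the coordinates `c (I a)`.
  let p : (Fin k → ℂ) → Fin m → ℂ := fun y i =>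
    Sum.elim (fun _ => 1) t (e.symm i) * y (Sum.elim id id (e.symm i))
  have hpI : ∀ y a, p y (e (Sum.inl a)) = y a := fun y a => by simp [p]
  have hpJ : ∀ y a, p y (e (Sum.inr a)) = t a * y a := fun y a => by simp [p]
  set R := L.foldr (fun i P => MvPolynomial.pderiv i P) Q with hR
  let R' : MvPolynomial (Fin k) ℂ := MvPolynomial.aeval (fun i =>
    MvPolynomial.C (Sum.elim (fun _ => 1) t (e.symm i)) *
      MvPolynomial.X (Sum.elim id id (e.symm i))) R
  have hR' : ∀ y, MvPolynomial.eval y R' = MvPolynomial.eval (p y) R := by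
    intro y
    simp only [R', MvPolynomial.aeval_def, MvPolynomial.algebraMap_eq]
    rw [MvPolynomial.eval₂_eq_eval_map, ← MvPolynomial.eval₂_eq_eval_map]
    change MvPolynomial.eval y (MvPolynomial.bind₁ _ R) = _
    rw [← MvPolynomial.coe_aeval_eq_eval, RingHom.coe_coe, MvPolynomial.aeval_bind₁]
    simp [p, MvPolynomial.aeval_eq_eval]
  have hzero : R' * ∏ a, MvPolynomial.X a = 0 := by
    refine MvPolynomial.funext fun y => ?_
    rw [map_mul, map_prod, map_zero]
    by_cases hy : ∃ a, y a = 0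
    · obtain ⟨a, ha⟩ := hy
      rw [Finset.prod_eq_zero (Finset.mem_univ a) (by simpa using ha), mul_zero]
    · push Not at hy
      rw [hR', stmt12_of_ne_zero m k ⟨0, by omega⟩ Fc hFc s hs Q hQ e t ht (p y)
        (fun a => by rw [hpI, hpJ]) (fun i => ?_) L hL, zero_mul]
      obtain ⟨x, rfl⟩ := e.surjective i
      rcases x with a | a
      · rw [hpI]
        exact hy a
      · rw [hpJ]
        exact mul_ne_zero (ht0 a) (hy a)
  have hR0 : R' = 0 := (mul_eq_zero.1 hzero).resolve_right
    (Finset.prod_ne_zero_iff.2 fun a _ => MvPolynomial.X_ne_zero a)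
  have hpc : p (fun a => c (I a)) = c := by
    funext i
    obtain ⟨x, rfl⟩ := e.surjective i
    rcases x with a | a
    · exact hpI (fun a => c (I a)) a
    · exact (hpJ (fun a => c (I a)) a).trans (hcp a).symm
  have h := hR' (fun a => c (I a))
  rw [hR0, map_zero, hpc] at h
  exact h.symm
end

section
/- Fix an even integer m ≥ 4, nonzero rational numbers F₁,…,F_m, complex numbers s₁,…,s_m with s_i² = F_i, and a polynomial function Q : ℂ^m → ℂ such that Q(c) = ∏_{ε ∈ {±1}^m, ε₁=1} (ε₁s₁^{−1}γ₁³ + ⋯ + ε_m s_m^{−1}γ_m³) for every c ∈ ℂ^m and every γ ∈ ℂ^m with γ_i² = c_i for all i. Fix a partition of {1,…,m} into m/2 pairs {i_k,j_k} and rationals t_k with t_k³ = F_{j_k}/F_{i_k}, and let c ∈ ℚ^m ∖ {0} satisfy c_{j_k} = t_k·c_{i_k} for all k. Then the following are equivalent: (a) every partial derivative of Q of order ≤ 2^{m/2−1} vanishes at c; (b) there exist l ≥ 1 distinct indices k₁,…,k_l ∈ {1,…,m/2} and complex numbers ρ₁,…,ρ_l with ρ_t² = c_{i_{k_t}}³/F_{i_{k_t}}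 for all t and ρ₁ + ⋯ + ρ_l = 0. -/
/-!
Put `p i = γ i ^ 3 / s i` where `γ i ^ 2 = c i`. The factor of `Q` attached to a sign vector `ε`
takes the value `∑ i, ± p i` at `c`. The proof shows that the order of vanishing of `Q` at `c` is at
least the number of factors that vanish there, with equality if `c i₀ ≠ 0`, where `i₀` is the
index at which the signs are normalised; condition (b) is then a statement about that number.

*Order of vanishing.* `Q` is recentered at `c`, so that (a) says that all coefficients of total
degree `≤ n := 2 ^ (k - 1)` vanish (`partials_vanish_iff`). The individual factors are not
polynomials in `c`, and are not even analytic where some `c i = 0`, so `Q` is restricted to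
polynomial curves `z ↦ (γ i (z) ^ 2)` through `c`, on which the product formula is an identity in
`ℂ[z]`. One takes `γ i = g i + w z ^ 2` if `g i ≠ 0` and `γ i = w z` if `g i = 0`. In both cases
`γ i ^ 2 = c i + z ^ 2 (u i + O(z))` with an arbitrary prescribed direction `u i`, and
`γ i ^ 3 = g i ^ 3 + z ^ 2 (3 / 2 * g i * u i + O(z))` (`exists_local_param`). So a vanishing factor
contributes `z ^ 2`, while a form of degree `j` in the displacement contributes `z ^ (2 j)`.
Letting `u` vary shows that the order at `c` is at least the number of vanishing factors. The
choice `u = Pi.single i₀ 1` shows equality when `g i₀ ≠ 0`, because each vanishing factor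
then has a nonzero `z ^ 2` term along this curve (`coeff_vanish_iff`).

*Counting.* On a pair `{I a, J a}` the numbers `p` have equal squares, so `g` can be chosen with
`p (J a) = - p (I a)`. Then the `2 ^ (k - 1)` normalised sign vectors that are constant on pairs
give vanishing factors, and any further vanishing factor amounts to a relation `∑ a ∈ S, ρ a = 0`
where `S` is the set of pairs on which `ε` is not constant (`card_lt_iff`). If `c i₀ = 0`, then (b)
holds with a single `ρ a = 0`, so the number of vanishing factors exceeds `2 ^ (k - 1)` and the
lower bound for the order suffices.
-/

/-! ### Partial derivatives and coefficients -/

/-- The polynomial `P (X + c)`, that is, the Taylor expansion of `P` at `c`. -/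
noncomputable def recenter {m : ℕ} (c : Fin m → ℂ) :
    MvPolynomial (Fin m) ℂ →ₐ[ℂ] MvPolynomial (Fin m) ℂ :=
  MvPolynomial.aeval fun i => MvPolynomial.X i + MvPolynomial.C (c i)

lemma pderiv_recenter {m : ℕ} (c : Fin m → ℂ) (i : Fin m) (P : MvPolynomial (Fin m) ℂ) :
    MvPolynomial.pderiv i (recenter c P) = recenter c (MvPolynomial.pderiv i P) := by
  induction P using MvPolynomial.induction_on with
  | C a => simp [recenter, MvPolynomial.algebraMap_eq]
  | add p q hp hq => simp [hp, hq]
  | mul_X p j hp =>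
    have hX : recenter c (MvPolynomial.X j) = MvPolynomial.X j + MvPolynomial.C (c j) := by
      simp [recenter]
    have hX' : recenter c (MvPolynomial.pderiv i (MvPolynomial.X j))
        = MvPolynomial.pderiv i (MvPolynomial.X j) := by
      by_cases h : i = j
      · subst h; simp
      · simp [MvPolynomial.pderiv_X_of_ne (Ne.symm h)]
    rw [map_mul, MvPolynomial.pderiv_mul, MvPolynomial.pderiv_mul, map_add, map_mul, map_mul, hp,
      hX, hX', map_add, MvPolynomial.pderiv_C, add_zero]

lemma coeff_zero_recenter {m : ℕ} (c : Fin m → ℂ) (P : MvPolynomial (Fin m) ℂ) :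
    (recenter c P).coeff 0 = MvPolynomial.eval c P := by
  rw [← MvPolynomial.constantCoeff_eq]
  induction P using MvPolynomial.induction_on with
  | C a => simp [recenter, MvPolynomial.algebraMap_eq]
  | add p q hp hq => simp [hp, hq]
  | mul_X p j hp => rw [map_mul, map_mul, hp, map_mul]; simp [recenter]

lemma aeval_recenter {m : ℕ} (c : Fin m → ℂ) (z : Fin m → Polynomial ℂ)
    (P : MvPolynomial (Fin m) ℂ) :
    MvPolynomial.aeval z (recenter c P)
      = MvPolynomial.aeval (fun i => Polynomial.C (c i) + z i) P := by
  rw [recenter, ← AlgHom.comp_apply, MvPolynomial.comp_aeval]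
  congr 2
  funext i
  simp [MvPolynomial.algHom_C, add_comm]

/-- All partial derivatives of order at most `n` vanish at `c` iff the Taylor expansion at `c` has no
terms of degree at most `n`. The induction on `n` peels off the innermost derivative, at the end of
the list. -/
lemma partials_vanish_iff {m : ℕ} (c : Fin m → ℂ) (n : ℕ) (P : MvPolynomial (Fin m) ℂ) :
    (∀ L : List (Fin m), L.length ≤ n →
        MvPolynomial.eval c (L.foldr (fun i P => MvPolynomial.pderiv i P) P) = 0)
      ↔ ∀ d : Fin m →₀ ℕ, d.degree ≤ n → (recenter c P).coeff d = 0 := by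
  induction n generalizing P with
  | zero =>
    constructor
    · intro h d hd
      obtain rfl := (Finsupp.degree_eq_zero_iff d).1 (by omega)
      rw [coeff_zero_recenter]
      exact h [] (by simp)
    · intro h L hL
      obtain rfl := List.length_eq_zero_iff.1 (by omega : L.length = 0)
      rw [List.foldr_nil, ← coeff_zero_recenter]
      exact h 0 (by simp)
  | succ n ih =>
    constructor
    · intro h d hd
      by_cases h0 : d = 0
      · subst h0
        rw [coeff_zero_recenter]
        exact h [] (by simp)
      · obtain ⟨i, hi⟩ := Finsupp.ne_iff.1 h0
        have hle : Finsupp.single i 1 ≤ d := by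
          rw [Finsupp.single_le_iff]
          exact Nat.one_le_iff_ne_zero.2 hi
        obtain ⟨e, rfl⟩ := exists_add_of_le hle
        rw [map_add, Finsupp.degree_single] at hd
        have := (ih (MvPolynomial.pderiv i P)).1 (fun L hL => by
          simpa using h (L ++ [i]) (by simpa using hL)) e (by omega)
        rw [← pderiv_recenter, MvPolynomial.coeff_pderiv, add_comm e] at this
        exact (mul_eq_zero.1 this).resolve_right (Nat.cast_add_one_ne_zero _)
    · intro h L hL
      rcases L.eq_nil_or_concat with rfl | ⟨L, i, rfl⟩
      · rw [List.foldr_nil, ← coeff_zero_recenter]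
        exact h 0 (by simp)
      · have := (ih (MvPolynomial.pderiv i P)).2 (fun d hd => by
          rw [← pderiv_recenter, MvPolynomial.coeff_pderiv, h, zero_mul]
          rw [map_add, Finsupp.degree_single]; omega) L (by simpa using hL)
        simpa using this

/-! ### Restriction to curves -/

/-- If `f` has no terms of degree less than `n`, then its value at the displacement `X ^ 2 * y` is
`X ^ (2 * n)` times the degree-`n` form of `f` at `y`, up to a higher-order error. -/
lemma aeval_scaled {m : ℕ} (n : ℕ) (f : MvPolynomial (Fin m) ℂ)
    (hf : ∀ d : Fin m →₀ ℕ, d.degree < n → f.coeff d = 0) (y : Fin m → Polynomial ℂ) :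
    ∃ r : Polynomial ℂ, MvPolynomial.aeval (fun i => Polynomial.X ^ 2 * y i) f
      = Polynomial.X ^ (2 * n) *
        (MvPolynomial.aeval y (MvPolynomial.homogeneousComponent n f) + Polynomial.X ^ 2 * r) := by
  have key : ∀ d : Fin m →₀ ℕ, ∃ r : Polynomial ℂ,
      MvPolynomial.aeval (fun i => Polynomial.X ^ 2 * y i) (MvPolynomial.monomial d (f.coeff d))
        = Polynomial.X ^ (2 * n) * ((if d.degree = n then
            MvPolynomial.aeval y (MvPolynomial.monomial d (f.coeff d)) else 0)
          + Polynomial.X ^ 2 * r) := by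
    intro d
    have e : MvPolynomial.aeval (fun i => Polynomial.X ^ 2 * y i)
        (MvPolynomial.monomial d (f.coeff d)) = Polynomial.X ^ (2 * d.degree) *
          MvPolynomial.aeval y (MvPolynomial.monomial d (f.coeff d)) := by
      simp only [MvPolynomial.aeval_monomial, Finsupp.prod_pow]
      simp only [mul_pow, Finset.prod_mul_distrib]
      rw [Finset.prod_pow_eq_pow_sum, ← Finsupp.degree_eq_sum, ← pow_mul]
      ring
    rcases lt_trichotomy d.degree n with h | h | h
    · exact ⟨0, by simp [hf d h]⟩
    · exact ⟨0, by rw [e, if_pos h, h]; ring⟩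
    · obtain ⟨j, hj⟩ := Nat.exists_eq_add_of_lt h
      refine ⟨Polynomial.X ^ (2 * j) *
        MvPolynomial.aeval y (MvPolynomial.monomial d (f.coeff d)), ?_⟩
      rw [e, if_neg (by omega), hj]; ring
  choose r hr using key
  refine ⟨∑ d ∈ f.support, r d, ?_⟩
  conv_lhs => rw [f.as_sum]
  rw [map_sum, Finset.sum_congr rfl fun d _ => hr d, ← Finset.mul_sum, Finset.sum_add_distrib,
    ← Finset.mul_sum, MvPolynomial.homogeneousComponent_apply, map_sum, Finset.sum_filter]

lemma eval_aeval {m : ℕ} (y : Fin m → Polynomial ℂ) (x : ℂ) (P : MvPolynomial (Fin m) ℂ) :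
    (MvPolynomial.aeval y P).eval x = MvPolynomial.eval (fun i => (y i).eval x) P := by
  induction P using MvPolynomial.induction_on with
  | C a => simp
  | add p q hp hq => simp [hp, hq]
  | mul_X p j hp => simp [hp]

/-- If in every direction `u` there is a curve `X ^ 2 * y` with `y (0) = u` on which `f` vanishes to
order `2 * n`, then `f` has no terms of degree less than `n`: the lowest nonzero form of `f` would be
visible on the curve in a direction where it does not vanish. -/
lemma coeff_eq_zero_of_curves {m : ℕ} (n : ℕ) (f : MvPolynomial (Fin m) ℂ)
    (h : ∀ u : Fin m → ℂ, ∃ y : Fin m → Polynomial ℂ, (∀ i, (y i).eval 0 = u i) ∧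
      Polynomial.X ^ (2 * n) ∣ MvPolynomial.aeval (fun i => Polynomial.X ^ 2 * y i) f)
    (d : Fin m →₀ ℕ) (hd : d.degree < n) : f.coeff d = 0 := by
  induction hN : d.degree using Nat.strong_induction_on generalizing d with
  | _ N ih =>
    have hH : MvPolynomial.homogeneousComponent N f = 0 := by
      apply MvPolynomial.funext
      intro u
      obtain ⟨y, hy, hdvd⟩ := h u
      obtain ⟨r, hr⟩ := aeval_scaled N f (fun e he => ih e.degree he e (by omega) rfl) y
      rw [hr, show 2 * n = 2 * N + (2 * n - 2 * N) by omega, pow_add,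
        mul_dvd_mul_iff_left (pow_ne_zero _ Polynomial.X_ne_zero)] at hdvd
      have h1 := (dvd_pow_self (Polynomial.X : Polynomial ℂ) (by omega)).trans hdvd
      rw [Polynomial.X_dvd_iff, Polynomial.coeff_zero_eq_eval_zero, Polynomial.eval_add] at h1
      have h2 : (MvPolynomial.aeval y (MvPolynomial.homogeneousComponent N f)).eval 0
          = MvPolynomial.eval u (MvPolynomial.homogeneousComponent N f) := by
        rw [eval_aeval, funext hy]
      simpa [h2] using h1
    have := congrArg (MvPolynomial.coeff d) hH
    rwa [MvPolynomial.coeff_homogeneousComponent, if_pos hN] at this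

/-- A polynomial curve `γ` through `g` whose square leaves `g ^ 2` in direction `u` at order `X ^ 2`.
If `g = 0` the curve is `γ = √u X`, so that `γ ^ 3` is still `O(X ^ 3)`. -/
lemma exists_local_param (g u : ℂ) : ∃ γ y h : Polynomial ℂ,
    γ ^ 2 = Polynomial.C (g ^ 2) + Polynomial.X ^ 2 * y ∧ y.eval 0 = u ∧
    γ ^ 3 = Polynomial.C (g ^ 3) + Polynomial.X ^ 2 * h ∧ h.eval 0 = 3 / 2 * g * u := by
  by_cases hg : g = 0
  · obtain ⟨w, hw⟩ := IsAlgClosed.exists_pow_nat_eq u (zero_lt_two)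
    refine ⟨Polynomial.X * Polynomial.C w, Polynomial.C (w ^ 2),
      Polynomial.X * Polynomial.C (w ^ 3), ?_, by simp [hw], ?_, by simp [hg]⟩
    · simp [hg]; ring
    · simp [hg]; ring
  · refine ⟨Polynomial.C g + Polynomial.X ^ 2 * Polynomial.C (u / (2 * g)),
      Polynomial.C (2 * g * (u / (2 * g))) + Polynomial.X ^ 2 * Polynomial.C ((u / (2 * g)) ^ 2),
      Polynomial.C (3 * g ^ 2 * (u / (2 * g)))
        + Polynomial.X ^ 2 * (Polynomial.C (3 * g * (u / (2 * g)) ^ 2)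
          + Polynomial.X ^ 2 * Polynomial.C ((u / (2 * g)) ^ 3)), ?_, ?_, ?_, ?_⟩
    · simp only [map_mul, map_pow, map_ofNat]; ring
    · simp; field_simp
    · simp only [map_mul, map_pow, map_ofNat]; ring
    · simp; field_simp

/-! ### The order of vanishing as a count of sign vectors -/

/-- The sign encoded by a Boolean: `true` is `1`, `false` is `-1`. -/
noncomputable def sgn (b : Bool) : ℂ := if b then 1 else -1

lemma sgn_ne_zero (b : Bool) : sgn b ≠ 0 := by cases b <;> simp [sgn]

/-- The signed sum `∑ i, ε i * (s i)⁻¹ * x i`; with `x i = γ i ^ 3` it is the factor of `Q` indexed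
by `ε`. -/
noncomputable def linForm {m : ℕ} (s x : Fin m → ℂ) (ε : Fin m → Bool) : ℂ :=
  ∑ i, sgn (ε i) * (s i)⁻¹ * x i

/-- The sign vectors, normalised by `ε i₀ = true`, whose factor of `Q` vanishes at the point with
coordinates `g i ^ 2`. -/
noncomputable def vanishingSigns {m : ℕ} (i₀ : Fin m) (s g : Fin m → ℂ) :
    Finset (Fin m → Bool) :=
  Finset.univ.filter fun ε => ε i₀ = true ∧ linForm s (fun i => g i ^ 3) ε = 0

/-- On a suitable curve in direction `u`, `Q` is `X ^ 2` to the number of vanishing factors, times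
the first-order terms `b ε` of those factors, times the product `R` of the nonvanishing factors. -/
lemma exists_factorization {m : ℕ} (i₀ : Fin m) (s : Fin m → ℂ) (Q : MvPolynomial (Fin m) ℂ)
    (hQ : ∀ (c γ : Fin m → ℂ), (∀ i, (γ i) ^ 2 = c i) → MvPolynomial.eval c Q =
        ∏ ε ∈ Finset.univ.filter (fun ε : Fin m → Bool => ε i₀ = true),
          linForm s (fun i => γ i ^ 3) ε)
    (g u : Fin m → ℂ) :
    ∃ (y : Fin m → Polynomial ℂ) (b : (Fin m → Bool) → Polynomial ℂ) (R : Polynomial ℂ),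
      (∀ i, (y i).eval 0 = u i) ∧
      (∀ ε, (b ε).eval 0 = linForm s (fun i => 3 / 2 * g i * u i) ε) ∧
      R.eval 0 ≠ 0 ∧
      MvPolynomial.aeval (fun i => Polynomial.X ^ 2 * y i) (recenter (fun i => g i ^ 2) Q)
        = Polynomial.X ^ (2 * (vanishingSigns i₀ s g).card)
          * ((∏ ε ∈ vanishingSigns i₀ s g, b ε) * R) := by
  choose γ y h hγ2 hy hγ3 hh using fun i => exists_local_param (g i) (u i)
  let b : (Fin m → Bool) → Polynomial ℂ := fun ε =>
    ∑ i, Polynomial.C (sgn (ε i) * (s i)⁻¹) * h i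
  let a : (Fin m → Bool) → ℂ := linForm s (fun i => g i ^ 3)
  let E := Finset.univ.filter (fun ε : Fin m → Bool => ε i₀ = true)
  have hV : E.filter (fun ε => a ε = 0) = vanishingSigns i₀ s g := by
    rw [Finset.filter_filter]; rfl
  refine ⟨y, b, ∏ ε ∈ E.filter (fun ε => ¬ a ε = 0),
    (Polynomial.C (a ε) + Polynomial.X ^ 2 * b ε), hy, ?_, ?_, ?_⟩
  · intro ε
    simp [b, linForm, Polynomial.eval_finsetSum, hh]
  · rw [Polynomial.eval_prod, Finset.prod_ne_zero_iff]
    intro ε hε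
    simpa using (Finset.mem_filter.1 hε).2
  · have h1 : MvPolynomial.aeval (fun i => Polynomial.X ^ 2 * y i) (recenter (fun i => g i ^ 2) Q)
        = ∏ ε ∈ E, (Polynomial.C (a ε) + Polynomial.X ^ 2 * b ε) := by
      rw [aeval_recenter]
      apply Polynomial.funext
      intro x
      rw [eval_aeval, hQ _ (fun i => (γ i).eval x), Polynomial.eval_prod]
      · refine Finset.prod_congr rfl fun ε _ => ?_
        simp only [linForm, a, b, ← Polynomial.eval_pow, hγ3]
        simp only [Polynomial.eval_add, Polynomial.eval_mul, Polynomial.eval_finsetSum,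
          Polynomial.eval_C, mul_add, Finset.sum_add_distrib, Finset.mul_sum]
        congr 1
        exact Finset.sum_congr rfl fun i _ => by ring
      · intro i
        rw [← Polynomial.eval_pow, hγ2]
    rw [h1, ← Finset.prod_filter_mul_prod_filter_not E (fun ε => a ε = 0), ← mul_assoc, hV]
    congr 1
    rw [pow_mul, ← Finset.prod_const, ← Finset.prod_mul_distrib]
    refine Finset.prod_congr rfl fun ε hε => ?_
    have : a ε = 0 := (Finset.mem_filter.1 hε).2.2
    simp [this]

/-- The order of vanishing of `Q` at `(g i ^ 2)` exceeds `n` iff the number of vanishing factors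
does. The hypothesis `hn` replaces the upper bound on the order in the case `g i₀ = 0`, where
`Pi.single i₀ 1` is a direction in which vanishing factors have no first-order term. -/
lemma coeff_vanish_iff {m : ℕ} (i₀ : Fin m) (s : Fin m → ℂ) (hs : ∀ i, s i ≠ 0)
    (Q : MvPolynomial (Fin m) ℂ)
    (hQ : ∀ (c γ : Fin m → ℂ), (∀ i, (γ i) ^ 2 = c i) → MvPolynomial.eval c Q =
        ∏ ε ∈ Finset.univ.filter (fun ε : Fin m → Bool => ε i₀ = true),
          linForm s (fun i => γ i ^ 3) ε)
    (g : Fin m → ℂ) (n : ℕ) (hn : g i₀ = 0 → n < (vanishingSigns i₀ s g).card) :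
    (∀ d : Fin m →₀ ℕ, d.degree ≤ n → (recenter (fun i => g i ^ 2) Q).coeff d = 0)
      ↔ n < (vanishingSigns i₀ s g).card := by
  constructor
  · intro h
    by_contra! hlt
    have hg : g i₀ ≠ 0 := fun h0 => absurd (hn h0) (by omega)
    obtain ⟨y, b, R, -, hb, hR, he⟩ := exists_factorization i₀ s Q hQ g (Pi.single i₀ 1)
    obtain ⟨r, hr⟩ := aeval_scaled (n + 1) _ (fun d hd => h d (by omega)) y
    rw [he, show 2 * (n + 1) = 2 * (vanishingSigns i₀ s g).card
        + (2 * (n + 1) - 2 * (vanishingSigns i₀ s g).card) by omega, pow_add, mul_assoc] at hr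
    have h1 := congrArg (Polynomial.eval 0)
      (mul_left_cancel₀ (pow_ne_zero _ Polynomial.X_ne_zero) hr)
    rw [Polynomial.eval_mul, Polynomial.eval_mul, Polynomial.eval_pow, Polynomial.eval_X,
      zero_pow (by omega), zero_mul, Polynomial.eval_prod] at h1
    refine mul_ne_zero (Finset.prod_ne_zero_iff.2 fun ε _ => ?_) hR h1
    rw [hb, linForm, Finset.sum_eq_single i₀]
    · simp [hg, hs, sgn_ne_zero]
    · intro i _ hi
      simp [hi]
    · simp
  · intro hlt d hd
    refine coeff_eq_zero_of_curves (n + 1) _ (fun u => ?_) d (by omega)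
    obtain ⟨y, b, R, hy, -, -, he⟩ := exists_factorization i₀ s Q hQ g u
    refine ⟨y, hy, ?_⟩
    rw [he]
    exact (pow_dvd_pow _ (by omega)).mul_right _

/-! ### Counting vanishing factors for paired coordinates -/

lemma card_pairedSigns {m k : ℕ} (e : Fin k ⊕ Fin k ≃ Fin m) (i₀ : Fin m) :
    (Finset.univ.filter fun ε : Fin m → Bool =>
      ε i₀ = true ∧ ∀ a, ε (e (.inr a)) = ε (e (.inl a))).card = 2 ^ (k - 1) := by
  let p : Fin m → Fin k := fun i => Sum.elim id id (e.symm i)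
  have hp : ∀ a, p (e (.inl a)) = a ∧ p (e (.inr a)) = a := fun a => by simp [p]
  have himg : (Finset.univ.filter fun ε : Fin m → Bool =>
      ε i₀ = true ∧ ∀ a, ε (e (.inr a)) = ε (e (.inl a)))
      = (Fintype.piFinset fun a : Fin k => if a = p i₀ then {true} else Finset.univ).image
        (fun η : Fin k → Bool => η ∘ p) := by
    ext ε
    simp only [Finset.mem_filter, Finset.mem_univ, true_and, Finset.mem_image,
      Fintype.mem_piFinset]
    constructor
    · rintro ⟨h0, h⟩
      have hε : (fun a => ε (e (.inl a))) ∘ p = ε := by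
        funext i
        obtain ⟨x, rfl⟩ := e.surjective i
        rcases x with a | a
        · simp [hp]
        · simp [hp, h]
      refine ⟨fun a => ε (e (.inl a)), fun a => ?_, hε⟩
      split_ifs with ha
      · have := congrFun hε i₀
        simp only [Function.comp_apply, ← ha] at this
        simp [this, h0]
      · simp
    · rintro ⟨η, hη, rfl⟩
      exact ⟨by simpa using hη (p i₀), fun a => by simp [hp]⟩
  rw [himg, Finset.card_image_of_injective, Fintype.card_piFinset]
  · rw [Finset.prod_congr rfl (g := fun a => if a = p i₀ then 1 else 2)
      (fun a _ => by split_ifs <;> simp), ← Finset.mul_prod_erase _ _ (Finset.mem_univ (p i₀)),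
      Finset.prod_congr rfl (g := fun _ => 2)
        (fun a ha => if_neg (Finset.ne_of_mem_erase ha))]
    simp
  · intro η η' h
    funext a
    simpa [hp] using congrFun h (e (.inl a))

/-- Replacing one square root by its negative if necessary, the two terms of a pair cancel. -/
lemma exists_sqrt_pair (c c' s s' : ℂ) 
    (h : c' ^ 3 / s' ^ 2 = c ^ 3 / s ^ 2) :
    ∃ g g' : ℂ, g ^ 2 = c ∧ g' ^ 2 = c' ∧ s'⁻¹ * g' ^ 3 = - (s⁻¹ * g ^ 3) := by
  obtain ⟨g, hg⟩ := IsAlgClosed.exists_pow_nat_eq c zero_lt_two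
  obtain ⟨g', hg'⟩ := IsAlgClosed.exists_pow_nat_eq c' zero_lt_two
  have : (s'⁻¹ * g' ^ 3) ^ 2 = (s⁻¹ * g ^ 3) ^ 2 := by
    rw [← hg, ← hg'] at h
    rw [mul_pow, mul_pow, inv_pow, inv_pow, ← pow_mul, ← pow_mul, mul_comm 3 2, pow_mul, pow_mul,
      inv_mul_eq_div, inv_mul_eq_div, h]
  rcases sq_eq_sq_iff_eq_or_eq_neg.1 this with h | h
  · exact ⟨g, -g', hg, by rw [neg_sq, hg'], by rw [← h]; ring⟩
  · exact ⟨g, g', hg, hg', h⟩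

lemma linForm_paired {m k : ℕ} (e : Fin k ⊕ Fin k ≃ Fin m) (s x : Fin m → ℂ)
    (hx : ∀ a, (s (e (.inr a)))⁻¹ * x (e (.inr a)) = -((s (e (.inl a)))⁻¹ * x (e (.inl a))))
    (ε : Fin m → Bool) :
    linForm s x ε = ∑ a with ε (e (.inr a)) ≠ ε (e (.inl a)),
      2 * (sgn (ε (e (.inl a))) * ((s (e (.inl a)))⁻¹ * x (e (.inl a)))) := by
  rw [linForm, ← e.sum_comp, Fintype.sum_sum_type, ← Finset.sum_add_distrib, Finset.sum_filter]
  refine Finset.sum_congr rfl fun a _ => ?_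
  rw [mul_assoc, mul_assoc, hx]
  cases ε (e (.inl a)) <;> cases ε (e (.inr a)) <;> simp [sgn] <;> ring

lemma linForm_not {m : ℕ} (s x : Fin m → ℂ) (ε : Fin m → Bool) :
    linForm s x (fun i => !ε i) = - linForm s x ε := by
  rw [linForm, linForm, ← Finset.sum_neg_distrib]
  refine Finset.sum_congr rfl fun i _ => ?_
  cases ε i <;> simp [sgn]

/-- The `2 ^ (k - 1)` sign vectors constant on pairs always vanish; there is a further one iff some
nonempty signed subsum of the `p (I a)` is zero. -/
lemma card_lt_iff {m k : ℕ} (e : Fin k ⊕ Fin k ≃ Fin m) (i₀ : Fin m) (s g : Fin m → ℂ)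
    (hx : ∀ a, (s (e (.inr a)))⁻¹ * g (e (.inr a)) ^ 3
      = -((s (e (.inl a)))⁻¹ * g (e (.inl a)) ^ 3)) :
    2 ^ (k - 1) < (vanishingSigns i₀ s g).card ↔
      ∃ S : Finset (Fin k), S.Nonempty ∧ ∃ ρ : Fin k → ℂ,
        (∀ a ∈ S, ρ a ^ 2 = ((s (e (.inl a)))⁻¹ * g (e (.inl a)) ^ 3) ^ 2) ∧
          ∑ a ∈ S, ρ a = 0 := by
  rw [← card_pairedSigns e i₀]
  set T := Finset.univ.filter fun ε : Fin m → Bool =>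
      ε i₀ = true ∧ ∀ a, ε (e (.inr a)) = ε (e (.inl a)) with hT
  have hlin := linForm_paired e s (fun i => g i ^ 3) hx
  have hsub : T ⊆ vanishingSigns i₀ s g := by
    intro ε hε
    obtain ⟨h0, h⟩ := (Finset.mem_filter.1 hε).2
    refine Finset.mem_filter.2 ⟨Finset.mem_univ _, h0, ?_⟩
    rw [hlin]
    simp [h]
  constructor
  · intro hlt
    obtain ⟨ε, hε, hεT⟩ := Finset.exists_mem_notMem_of_card_lt_card hlt
    obtain ⟨h0, h⟩ := (Finset.mem_filter.1 hε).2
    refine ⟨Finset.univ.filter fun a => ε (e (.inr a)) ≠ ε (e (.inl a)), ?_,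
      fun a => sgn (ε (e (.inl a))) * ((s (e (.inl a)))⁻¹ * g (e (.inl a)) ^ 3), ?_, ?_⟩
    · by_contra hne
      rw [Finset.not_nonempty_iff_eq_empty, Finset.filter_eq_empty_iff] at hne
      exact hεT (Finset.mem_filter.2 ⟨Finset.mem_univ _, h0,
        fun a => not_not.1 (hne (Finset.mem_univ a))⟩)
    · intro a _
      cases ε (e (.inl a)) <;> simp [sgn]
    · rw [hlin, ← Finset.mul_sum] at h
      exact (mul_eq_zero.1 h).resolve_left two_ne_zero
  · rintro ⟨S, ⟨a₀, ha₀⟩, ρ, hρ, hsum⟩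
    have hη : ∀ a, ∃ η : Bool, a ∈ S → ρ a = sgn η * ((s (e (.inl a)))⁻¹ * g (e (.inl a)) ^ 3) := by
      intro a
      by_cases ha : a ∈ S
      · rcases sq_eq_sq_iff_eq_or_eq_neg.1 (hρ a ha) with h | h
        · exact ⟨true, fun _ => by simpa [sgn] using h⟩
        · exact ⟨false, fun _ => by simpa [sgn] using h⟩
      · exact ⟨true, fun h => absurd h ha⟩
    choose η hη using hη
    let ε : Fin m → Bool := fun i =>
      Sum.elim η (fun a => if a ∈ S then !η a else η a) (e.symm i)
    have hl : ∀ a, ε (e (.inl a)) = η a := fun a => by simp [ε]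
    have hr : ∀ a, ε (e (.inr a)) = if a ∈ S then !η a else η a := fun a => by simp [ε]
    have hne : ∀ a, ε (e (.inr a)) ≠ ε (e (.inl a)) ↔ a ∈ S := by
      intro a
      rw [hl, hr]
      by_cases ha : a ∈ S <;> simp [ha]
    have hz : linForm s (fun i => g i ^ 3) ε = 0 := by
      have hS : (Finset.univ.filter fun a => ε (e (.inr a)) ≠ ε (e (.inl a))) = S := by
        ext a
        rw [Finset.mem_filter]
        exact ⟨fun h => (hne a).1 h.2, fun h => ⟨Finset.mem_univ a, (hne a).2 h⟩⟩
      rw [hlin, hS, ← Finset.mul_sum]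
      simp only [hl]
      rw [ ← Finset.sum_congr rfl fun a ha => hη a ha, hsum, mul_zero]
    apply Finset.card_lt_card
    rw [Finset.ssubset_iff_of_subset hsub]
    -- `ε` or its negative is normalised at `i₀`, and neither is constant on the pair `a₀`.
    by_cases h0 : ε i₀ = true
    · refine ⟨ε, Finset.mem_filter.2 ⟨Finset.mem_univ _, h0, hz⟩, fun hmem => ?_⟩
      exact (hne a₀).2 ha₀ ((Finset.mem_filter.1 hmem).2.2 a₀)
    · refine ⟨fun i => !ε i, Finset.mem_filter.2 ⟨Finset.mem_univ _, by simpa using h0, ?_⟩,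
        fun hmem => ?_⟩
      · rw [linForm_not, hz, neg_zero]
      · exact (hne a₀).2 ha₀ (by simpa using (Finset.mem_filter.1 hmem).2.2 a₀)

theorem stmt13 (m k : ℕ) (hmk : m = 2 * k) (hk : 2 ≤ k)
    (Fc : Fin m → ℚ) (hFc : ∀ i, Fc i ≠ 0)
    (s : Fin m → ℂ) (hs : ∀ i, (s i) ^ 2 = (Fc i : ℂ))
    (Q : MvPolynomial (Fin m) ℂ)
    (hQ : ∀ (c γ : Fin m → ℂ), (∀ i, (γ i) ^ 2 = c i) →
      MvPolynomial.eval c Q =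
        ∏ ε ∈ Finset.univ.filter (fun ε : Fin m → Bool => ε ⟨0, by omega⟩ = true),
          ∑ i, (if ε i then (1 : ℂ) else -1) * (s i)⁻¹ * (γ i) ^ 3)
    (I J : Fin k → Fin m) (hIJ : Function.Bijective (Sum.elim I J))
    (t : Fin k → ℚ) (ht : ∀ a, (t a) ^ 3 = Fc (J a) / Fc (I a))
    (c : Fin m → ℚ) (hc : c ≠ 0) (hcp : ∀ a, c (J a) = t a * c (I a)) :
    (∀ L : List (Fin m), L.length ≤ 2 ^ (k - 1) →
        MvPolynomial.eval (fun i => (c i : ℂ))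
          (L.foldr (fun i P => MvPolynomial.pderiv i P) Q) = 0)
      ↔ ∃ S : Finset (Fin k), S.Nonempty ∧ ∃ ρ : Fin k → ℂ,
          (∀ a ∈ S, (ρ a) ^ 2 = ((c (I a) : ℂ)) ^ 3 / ((Fc (I a) : ℂ))) ∧
          (∑ a ∈ S, ρ a) = 0 := by
  let e : Fin k ⊕ Fin k ≃ Fin m := Equiv.ofBijective _ hIJ
  have heI : ∀ a, e (.inl a) = I a := fun a => rfl
  have heJ : ∀ a, e (.inr a) = J a := fun a => rfl
  have hs0 : ∀ i, s i ≠ 0 := fun i h => hFc i (by simpa [h] using (hs i).symm)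
  have hpair : ∀ a, (c (J a) : ℂ) ^ 3 / s (J a) ^ 2 = (c (I a) : ℂ) ^ 3 / s (I a) ^ 2 := by
    intro a
    rw [hs, hs, hcp]
    have h1 := hFc (I a)
    have h2 := hFc (J a)
    have : (t a * c (I a)) ^ 3 / Fc (J a) = c (I a) ^ 3 / Fc (I a) := by
      rw [mul_pow, ht]; field_simp
    exact_mod_cast this
  choose gI gJ hgI hgJ hgIJ using fun a =>
    exists_sqrt_pair (c (I a)) (c (J a)) (s (I a)) (s (J a)) (hpair a)
  let g : Fin m → ℂ := fun i => Sum.elim gI gJ (e.symm i)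
  have hgl : ∀ a, g (e (.inl a)) = gI a := fun a => by simp [g]
  have hgr : ∀ a, g (e (.inr a)) = gJ a := fun a => by simp [g]
  have hg2 : (fun i => g i ^ 2) = fun i => (c i : ℂ) := by
    funext i
    obtain ⟨x | x, rfl⟩ := e.surjective i
    · rw [hgl, hgI, heI]
    · rw [hgr, hgJ, heJ]
  have hx : ∀ a, (s (e (.inr a)))⁻¹ * g (e (.inr a)) ^ 3
      = -((s (e (.inl a)))⁻¹ * g (e (.inl a)) ^ 3) := by
    intro a
    rw [hgl, hgr, heI, heJ, hgIJ]
  have hcard := card_lt_iff e ⟨0, by omega⟩ s g hx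
  have hsq : ∀ a, ((s (e (.inl a)))⁻¹ * g (e (.inl a)) ^ 3) ^ 2
      = (c (I a) : ℂ) ^ 3 / (Fc (I a) : ℂ) := by
    intro a
    rw [hgl, heI, ← hgI, ← hs, mul_pow, inv_pow, inv_mul_eq_div]; ring
  rw [partials_vanish_iff, ← hg2, coeff_vanish_iff ⟨0, by omega⟩ s hs0 Q hQ g, hcard]
  · simp only [hsq]
  · intro h0
    rw [hcard]
    obtain ⟨x, hx0⟩ := e.surjective ⟨0, by omega⟩
    have hz : ∃ a, (s (e (.inl a)))⁻¹ * g (e (.inl a)) ^ 3 = 0 := by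
      rw [← hx0] at h0
      rcases x with a | a
      · exact ⟨a, by simp [h0]⟩
      · exact ⟨a, by simpa [h0] using hx a⟩
    obtain ⟨a, ha⟩ := hz
    exact ⟨{a}, Finset.singleton_nonempty a, 0, by simp [ha], by simp⟩
end

section
/- Let n ≥ 2 and let a₁,…,a_n be rational numbers. Suppose there exist a nonempty subset S ⊆ {1,…,n} and complex numbers (r_k)_{k∈S} with r_k² = a_k for every k ∈ S and ∑_{k∈S} r_k = 0. Then there exist distinct indices i, j ∈ {1,…,n} such that a_i·a_j = q² for some rational number q (i.e., a_i·a_j is a square in ℚ, possibly 0). -/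
/-!
The idea: square roots of rationals in pairwise different square classes are linearly independent
over `ℚ`. Each nonzero `r` with `r ^ 2 ∈ ℚ` in a Galois extension `L / ℚ` defines a quadratic
character `σ ↦ σ r / r` of the Galois group. Applying `σ` to `∑ r k = 0` gives the
relation `∑ r k • χ_k = 0` among these characters, so by Dedekind's theorem two of them coincide,
`χ_i = χ_j`. Then `r i * r j` is Galois-invariant, hence a rational number `q`, and
`a i * a j = q ^ 2`. As the `r k` are algebraic, `L` may be taken to be the algebraic closure of
`ℚ` in `ℂ`.
-/

open scoped BigOperators

/-- An automorphism sends a square root of a rational to plus or minus itself. -/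
lemma algEquiv_sqrt_eq_or_neg {L : Type*} [Field L] [Algebra ℚ L] {r : L} {a : ℚ}
    (hr : r ^ 2 = algebraMap ℚ L a) (σ : L ≃ₐ[ℚ] L) : σ r = r ∨ σ r = -r := by
  apply sq_eq_sq_iff_eq_or_eq_neg.mp
  rw [← map_pow, hr, AlgEquiv.commutes]

/-- The quadratic character `σ ↦ σ r / r` of the Galois group attached to a nonzero square root
`r` of a rational number, with values `±1` regarded in `L`. -/
def sqrtChar {L : Type*} [Field L] [Algebra ℚ L] (r : L) (hr0 : r ≠ 0) (a : ℚ)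
    (hr : r ^ 2 = algebraMap ℚ L a) : (L ≃ₐ[ℚ] L) →* L where
  toFun σ := σ r / r
  map_one' := by simp [hr0]
  map_mul' σ τ := by
    rcases algEquiv_sqrt_eq_or_neg hr τ with h | h <;>
      rcases algEquiv_sqrt_eq_or_neg hr σ with h' | h' <;>
      simp [AlgEquiv.mul_apply, h, h', hr0]

/-- Two nonzero square roots with the same character have rational product. -/
lemma mul_eq_sq_of_sqrtChar_eq {L : Type*} [Field L] [Algebra ℚ L] [IsGalois ℚ L] {r s : L}
    (hr0 : r ≠ 0) (hs0 : s ≠ 0) {a b : ℚ} (hr : r ^ 2 = algebraMap ℚ L a)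
    (hs : s ^ 2 = algebraMap ℚ L b) (h : sqrtChar r hr0 a hr = sqrtChar s hs0 b hs) :
    ∃ q : ℚ, a * b = q ^ 2 := by
  have hfix : ∀ σ : L ≃ₐ[ℚ] L, σ (r * s) = r * s := by
    intro σ
    have h1 : σ r / r = σ s / s := DFunLike.congr_fun h σ
    rw [div_eq_div_iff hr0 hs0] at h1
    -- `σ r * s = σ s * r` and `σ s ^ 2 = s ^ 2`, so `σ r * σ s * s = s ^ 2 * r`.
    have h2 : σ s ^ 2 = s ^ 2 := by rw [← map_pow, hs, AlgEquiv.commutes]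
    apply mul_right_cancel₀ hs0
    rw [map_mul]
    linear_combination σ s * h1 + r * h2
  obtain ⟨q, hq⟩ := (InfiniteGalois.mem_range_algebraMap_iff_fixed (k := ℚ) (r * s)).mpr hfix
  refine ⟨q, (algebraMap ℚ L).injective ?_⟩
  rw [map_mul, map_pow, hq, ← hr, ← hs, mul_pow]

/-- A vanishing sum of nonzero square roots forces two of the radicands into one square class. -/
lemma exists_mul_eq_sq_of_sum_eq_zero {L ι : Type*} [Field L] [Algebra ℚ L] [IsGalois ℚ L]
    [Fintype ι] [Nonempty ι] (a : ι → ℚ) (r : ι → L) (hr0 : ∀ k, r k ≠ 0)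
    (hr : ∀ k, r k ^ 2 = algebraMap ℚ L (a k)) (hsum : ∑ k, r k = 0) :
    ∃ i j, i ≠ j ∧ ∃ q : ℚ, a i * a j = q ^ 2 := by
  by_contra! hne
  let χ : ι → ((L ≃ₐ[ℚ] L) →* L) := fun k => sqrtChar (r k) (hr0 k) (a k) (hr k)
  have hinj : Function.Injective χ := by
    intro i j hij
    by_contra hne'
    obtain ⟨q, hq⟩ := mul_eq_sq_of_sqrtChar_eq (hr0 i) (hr0 j) (hr i) (hr j) hij
    exact hne i j hne' q hq
  have hli := (linearIndependent_monoidHom (L ≃ₐ[ℚ] L) L).comp χ hinj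
  rw [Fintype.linearIndependent_iff] at hli
  obtain ⟨k⟩ := ‹Nonempty ι›
  refine hr0 k (hli r ?_ k)
  funext σ
  have h1 : ∑ k, σ (r k) = 0 := by rw [← map_sum, hsum, map_zero]
  simp only [Finset.sum_apply, Pi.smul_apply, Function.comp_apply, Pi.zero_apply, smul_eq_mul]
  rw [← h1]
  exact Finset.sum_congr rfl fun k _ => mul_div_cancel₀ _ (hr0 k)

/-- In characteristic zero, the relative algebraic closure of `F` in an algebraically closed field
is Galois over `F`. -/
lemma isGalois_algebraicClosure (F E : Type*) [Field F] [CharZero F] [Field E] [Algebra F E]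
    [IsAlgClosed E] : IsGalois F (algebraicClosure F E) := by
  have : Normal F (algebraicClosure F E) := IsAlgClosure.normal F _
  exact {}

theorem stmt14 (n : ℕ) (hn : 2 ≤ n) (a : Fin n → ℚ)
    (h : ∃ S : Finset (Fin n), S.Nonempty ∧ ∃ r : Fin n → ℂ,
      (∀ k ∈ S, (r k) ^ 2 = (a k : ℂ)) ∧ (∑ k ∈ S, r k) = 0) :
    ∃ i j : Fin n, i ≠ j ∧ ∃ q : ℚ, a i * a j = q ^ 2 := by
  obtain ⟨S, hS, r, hr, hsum⟩ := h
  by_cases h0 : ∃ k, a k = 0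
  · obtain ⟨k, hk⟩ := h0
    have : Nontrivial (Fin n) := Fin.nontrivial_iff_two_le.mpr hn
    obtain ⟨j, hj⟩ := exists_ne k
    exact ⟨k, j, hj.symm, 0, by simp [hk]⟩
  push Not at h0
  have halg : ∀ k : S, r k ∈ algebraicClosure ℚ ℂ := by
    intro k
    rw [mem_algebraicClosure_iff]
    apply IsAlgebraic.of_pow two_pos
    rw [hr k k.2]
    exact isAlgebraic_algebraMap (a k)
  have : Nonempty S := hS.to_subtype
  -- The `ℚ`-algebra structure found by instance search on the intermediate field is the one of
  -- a characteristic zero field; all `ℚ`-algebra structures agree.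
  have : IsGalois ℚ (algebraicClosure ℚ ℂ) := by
    convert isGalois_algebraicClosure ℚ ℂ
    exact Subsingleton.elim _ _
  obtain ⟨i, j, hij, q, hq⟩ := exists_mul_eq_sq_of_sum_eq_zero
    (L := algebraicClosure ℚ ℂ) (fun k : S => a k) (fun k => ⟨r k, halg k⟩)
    (by
      intro k hk
      have hk' : r k = 0 := congrArg Subtype.val hk
      have := hr k k.2
      rw [hk'] at this
      apply h0 k
      exact_mod_cast (by simpa using this.symm : (a k : ℂ) = 0))
    (fun k => Subtype.ext (hr k k.2))
    (by
      apply Subtype.ext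
      rw [AddSubmonoidClass.coe_finsetSum]
      exact (Finset.sum_coe_sort S r).trans hsum)
  exact ⟨i, j, fun h => hij (Subtype.ext h), q, hq⟩
end

section
/- Let m ≥ 4 be an even integer and let F = F₁x₁³ + ⋯ + F_mx_m³ with F₁,…,F_m nonzero rational numbers. A ℚ-linear subspace L ⊆ ℚ^m of dimension m/2 satisfies F(x) = 0 for all x ∈ L if and only if there exist a partition of {1,…,m} into m/2 pairs {i_k, j_k} and rational numbers t_k with t_k³ = F_{j_k}/F_{i_k} such that L = {x ∈ ℚ^m : x_{i_k} + t_k·x_{j_k} = 0 for all k = 1,…,m/2}. -/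
open scoped BigOperators

/-!
Write `F` for the coefficient vector `Fc` and multiply vectors of `ℚ^m` coordinatewise. Polarizing
the cubic form shows that it vanishes on `L` exactly when `∑ F x y z = 0` for all `x, y, z ∈ L`,
that is, when `F · L · L` is orthogonal to `L`. Choose `u ∈ L` whose zero coordinates are only those
vanishing on all of `L`. Multiplication by `F u` is injective on `L` and lands in the space of
functionals vanishing on `L`, which has dimension `2k - k = k`; so every functional vanishing
on `L` has the form `F u y` with `y ∈ L`. Applied to a coordinate functional this
shows that no coordinate vanishes on `L`, and applied to `F x y` it shows `L · L ⊆ u · L`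
(`exists_unit_mul_mem`).

Hence `A = u⁻¹ L` is closed under products and contains `1`: it is a `k`-dimensional
subalgebra of `ℚ^m`. Such an algebra is the algebra of functions constant on the classes
of an equivalence relation on the coordinates; what is needed is that it contains the indicators
of the classes (`indicator_mem`). As it has dimension `k`, there are at least `k` classes.
Evaluating the cubic form at `u · 1_C ∈ L` gives `∑_{i ∈ C} F_i u_i³ = 0`, so each class `C` has at
least two elements. As `m = 2k`, there are exactly `k` classes, each of them a pair `{i, j}`
with `F_i u_i³ + F_j u_j³ = 0`, and `t = -u_i / u_j`.
-/

theorem polarization {m : ℕ} (Fc : Fin m → ℚ) (L : Submodule ℚ (Fin m → ℚ))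
    (h : ∀ x ∈ L, (∑ i, Fc i * (x i) ^ 3) = 0)
    {x y z : Fin m → ℚ} (hx : x ∈ L) (hy : y ∈ L) (hz : z ∈ L) :
    ∑ i, Fc i * (x i * y i * z i) = 0 := by
  have h1 := h _ (L.add_mem (L.add_mem hx hy) hz)
  have h2 := h _ (L.add_mem hx hy)
  have h3 := h _ (L.add_mem hx hz)
  have h4 := h _ (L.add_mem hy hz)
  have h5 := h _ hx
  have h6 := h _ hy
  have h7 := h _ hz
  have key : 6 * ∑ i, Fc i * (x i * y i * z i) =
      (∑ i, Fc i * ((x + y + z) i) ^ 3) - (∑ i, Fc i * ((x + y) i) ^ 3)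
      - (∑ i, Fc i * ((x + z) i) ^ 3) - (∑ i, Fc i * ((y + z) i) ^ 3)
      + (∑ i, Fc i * (x i) ^ 3) + (∑ i, Fc i * (y i) ^ 3) + (∑ i, Fc i * (z i) ^ 3) := by
    rw [Finset.mul_sum]
    simp only [← Finset.sum_sub_distrib, ← Finset.sum_add_distrib]
    refine Finset.sum_congr rfl fun i _ => ?_
    simp only [Pi.add_apply]
    ring
  rw [h1, h2, h3, h4, h5, h6, h7] at key
  linarith

/-- A general vector of `L` vanishes only in the coordinates that vanish on all of `L`. -/
theorem exists_generic_s15 {m : ℕ} (L : Submodule ℚ (Fin m → ℚ)) :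
    ∃ u ∈ L, ∀ i, u i = 0 → ∀ x ∈ L, x i = 0 := by
  obtain ⟨u, hu, h⟩ := Module.Dual.exists_forall_mem_ne_zero_of_forall_exists
    (ι := {i : Fin m // ∃ x ∈ L, x i ≠ 0}) L
    (fun i => (LinearMap.proj i.1 : (Fin m → ℚ) →ₗ[ℚ] ℚ)) (fun i => i.2)
  refine ⟨u, hu, fun i hi x hx => ?_⟩
  by_contra hne
  exact h ⟨i, x, hx, hne⟩ hi

/-- A middle-dimensional `L` in the zero locus satisfies `L · L ⊆ u · L` for some `u ∈ L` without
zero coordinates. -/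
theorem exists_unit_mul_mem {m k : ℕ} (hmk : m = 2 * k)
    (Fc : Fin m → ℚ) (hFc : ∀ i, Fc i ≠ 0)
    (L : Submodule ℚ (Fin m → ℚ)) (hdim : Module.finrank ℚ L = k)
    (h : ∀ x ∈ L, (∑ i, Fc i * (x i) ^ 3) = 0) :
    ∃ u ∈ L, (∀ i, u i ≠ 0) ∧
      ∀ x ∈ L, ∀ y ∈ L, ∃ z ∈ L, ∀ i, x i * y i = u i * z i := by
  obtain ⟨u, hu, hgen⟩ := exists_generic_s15 L
  -- `D w` is the functional `x ↦ ∑ F w x`, and `Φ` is `y ↦ D (u y)` on `L`.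
  let D : (Fin m → ℚ) →ₗ[ℚ] Module.Dual ℚ (Fin m → ℚ) :=
    LinearMap.mk₂ ℚ (fun w x => ∑ i, Fc i * (w i * x i))
      (fun a b c => by
        rw [← Finset.sum_add_distrib]
        exact Finset.sum_congr rfl fun i _ => by simp only [Pi.add_apply]; ring)
      (fun r a b => by
        rw [smul_eq_mul, Finset.mul_sum]
        exact Finset.sum_congr rfl fun i _ => by simp only [Pi.smul_apply, smul_eq_mul]; ring)
      (fun a b c => by
        rw [← Finset.sum_add_distrib]
        exact Finset.sum_congr rfl fun i _ => by simp only [Pi.add_apply]; ring)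
      (fun r a b => by
        rw [smul_eq_mul, Finset.mul_sum]
        exact Finset.sum_congr rfl fun i _ => by simp only [Pi.smul_apply, smul_eq_mul]; ring)
  have hD : ∀ w x, D w x = ∑ i, Fc i * (w i * x i) := fun w x => rfl
  have hDs : ∀ w i, D w (Pi.single i 1) = Fc i * w i := by
    intro w i
    rw [hD, Finset.sum_eq_single i]
    · simp
    · intro j _ hj
      simp [hj]
    · simp
  let Φ : L →ₗ[ℚ] Module.Dual ℚ (Fin m → ℚ) :=
    D ∘ₗ (LinearMap.mulLeft ℚ u) ∘ₗ L.subtype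
  have hΦ : ∀ y : L, Φ y = D (u * (y : Fin m → ℚ)) := fun y => rfl
  have hinj : Function.Injective Φ := by
    rw [← LinearMap.ker_eq_bot, LinearMap.ker_eq_bot']
    intro y hy
    ext i
    have h1 : Φ y (Pi.single i 1) = 0 := by rw [hy]; rfl
    rw [hΦ, hDs] at h1
    rcases mul_eq_zero.mp ((mul_eq_zero.mp h1).resolve_left (hFc i)) with h2 | h2
    · exact hgen i h2 _ y.2
    · exact h2
  have hann : ∀ x ∈ L, ∀ y ∈ L, D (x * y) ∈ L.dualAnnihilator := by
    intro x hx y hy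
    rw [Submodule.mem_dualAnnihilator]
    intro z hz
    rw [hD]
    exact polarization Fc L h hx hy hz
  have hrange : LinearMap.range Φ = L.dualAnnihilator := by
    apply Submodule.eq_of_le_of_finrank_eq
    · rintro _ ⟨y, rfl⟩
      exact hann u hu y y.2
    · rw [LinearMap.finrank_range_of_inj hinj, hdim]
      have := Subspace.finrank_add_finrank_dualAnnihilator_eq L
      rw [hdim, Module.finrank_fin_fun] at this
      omega
  have hlift : ∀ φ ∈ L.dualAnnihilator, ∃ y ∈ L, φ = D (u * y) := by
    intro φ hφ
    rw [← hrange] at hφ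
    obtain ⟨y, rfl⟩ := hφ
    exact ⟨y, y.2, rfl⟩
  refine ⟨u, hu, ?_, ?_⟩
  · intro i hi
    obtain ⟨y, -, hy⟩ := hlift (LinearMap.proj i) (by
      rw [Submodule.mem_dualAnnihilator]
      exact fun x hx => hgen i hi x hx)
    have h1 := congrArg (fun φ => φ (Pi.single i (1 : ℚ))) hy
    simp only [hDs] at h1
    simp [hi] at h1
  · intro x hx y hy
    obtain ⟨z, hz, hxy⟩ := hlift _ (hann x hx y hy)
    refine ⟨z, hz, fun i => ?_⟩
    have h1 := congrArg (fun φ => φ (Pi.single i (1 : ℚ))) hxy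
    simp only [hDs] at h1
    exact mul_left_cancel₀ (hFc i) h1

/-- The equivalence relation on coordinates: no function in `A` separates `i` from `j`. -/
def unseparated {ι : Type*} (A : Subalgebra ℚ (ι → ℚ)) : Setoid ι where
  r i j := ∀ a ∈ A, a i = a j
  iseqv := ⟨fun _ _ _ => rfl, fun h a ha => (h a ha).symm,
    fun h h' a ha => (h a ha).trans (h' a ha)⟩

open Classical in
/-- A subalgebra of `ℚ^ι` contains the indicators of its classes: the indicator of the class of `i`
is a product of functions that are `1` at `i` and `0` at a given inequivalent `j`. -/
theorem indicator_mem {ι : Type*} [Fintype ι] (A : Subalgebra ℚ (ι → ℚ)) (i : ι) :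
    (fun j => if unseparated A j i then (1 : ℚ) else 0) ∈ A := by
  have hsep : ∀ j, ∃ a ∈ A, a i = 1 ∧ (¬ unseparated A j i → a j = 0) := by
    intro j
    by_cases hj : unseparated A j i
    · exact ⟨1, A.one_mem, rfl, fun h => absurd hj h⟩
    · have hj' : ¬ ∀ a ∈ A, a j = a i := hj
      push Not at hj'
      obtain ⟨a, ha, hne⟩ := hj'
      refine ⟨(a i - a j)⁻¹ • (a - algebraMap ℚ (ι → ℚ) (a j)),
        A.smul_mem (A.sub_mem ha (A.algebraMap_mem _)) _, ?_, fun _ => ?_⟩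
      · have : a i - a j ≠ 0 := sub_ne_zero.mpr (Ne.symm hne)
        simp [this]
      · simp
  choose a ha h1 h0 using hsep
  have hprod : (∏ j, a j) ∈ A := A.prod_mem fun j _ => ha j
  convert hprod using 1
  funext j
  rw [Finset.prod_apply]
  split_ifs with hj
  · symm
    refine Finset.prod_eq_one fun l _ => ?_
    rw [hj _ (ha l), h1]
  · exact (Finset.prod_eq_zero (f := fun c => a c j) (Finset.mem_univ j) (h0 j hj)).symm

/-- The classes of the algebra `u⁻¹ L` are the required pairs: there are at least `k` of them for
dimension reasons, and each has at least two of the `2k` coordinates. -/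
theorem exists_pairing {m k : ℕ} (hmk : m = 2 * k)
    (Fc : Fin m → ℚ) (hFc : ∀ i, Fc i ≠ 0)
    (L : Submodule ℚ (Fin m → ℚ)) (hdim : Module.finrank ℚ L = k)
    (h : ∀ x ∈ L, (∑ i, Fc i * (x i) ^ 3) = 0) :
    ∃ (I J : Fin k → Fin m), Function.Bijective (Sum.elim I J) ∧
        ∃ t : Fin k → ℚ, (∀ a, (t a) ^ 3 = Fc (J a) / Fc (I a)) ∧
          (L : Set (Fin m → ℚ)) = {x | ∀ a, x (I a) + t a * x (J a) = 0} := by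
  classical
  obtain ⟨u, hu, hu0, hmul⟩ := exists_unit_mul_mem hmk Fc hFc L hdim h
  let A : Subalgebra ℚ (Fin m → ℚ) :=
    (L.comap (LinearMap.mulLeft ℚ u)).toSubalgebra
      (by simpa using hu)
      (by
        intro a b ha hb
        simp only [Submodule.mem_comap, LinearMap.mulLeft_apply] at ha hb ⊢
        obtain ⟨z, hz, hzz⟩ := hmul _ ha _ hb
        convert hz using 1
        funext i
        refine mul_left_cancel₀ (hu0 i) ?_
        rw [← hzz i]
        simp only [Pi.mul_apply]
        ring)
  have hA : ∀ a, a ∈ A ↔ u * a ∈ L := fun a => Iff.rfl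
  have hLA : ∀ x ∈ L, x / u ∈ A := by
    intro x hx
    rw [hA]
    convert hx using 1
    funext i
    simp only [Pi.mul_apply, Pi.div_apply]
    field_simp [hu0 i]
  let Q := Quotient (unseparated A)
  let π : Fin m → Q := Quotient.mk (unseparated A)
  have hπ : ∀ i j, π i = π j ↔ unseparated A i j := fun i j => Quotient.eq
  let I' : Q → Fin m := Quotient.out
  have hI' : ∀ q, π (I' q) = q := fun q => Quotient.out_eq q
  have hconst : ∀ x ∈ L, ∀ i j, π i = π j → x i / u i = x j / u j := by
    intro x hx i j hij
    exact (hπ i j).mp hij _ (hLA x hx)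
  have hind : ∀ q : Q, (fun j => u j * if π j = q then (1 : ℚ) else 0) ∈ L := by
    intro q
    have h1 := (hA _).mp (indicator_mem A (I' q))
    convert h1 using 1
    funext j
    simp only [Pi.mul_apply]
    congr 1
    refine if_congr ?_ rfl rfl
    rw [← hπ, hI']
  have hsum : ∀ q : Q, ∑ j, (if π j = q then Fc j * u j ^ 3 else 0) = 0 := by
    intro q
    refine Eq.trans ?_ (h _ (hind q))
    refine Finset.sum_congr rfl fun j _ => ?_
    split_ifs <;> simp
  have hJ : ∀ q : Q, ∃ j, π j = q ∧ j ≠ I' q := by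
    intro q
    by_contra! hq
    have h1 := hsum q
    rw [Finset.sum_eq_single (I' q)] at h1
    · rw [if_pos (hI' q)] at h1
      exact mul_ne_zero (hFc _) (pow_ne_zero 3 (hu0 _)) h1
    · intro j _ hj
      exact if_neg fun hj' => hj (hq j hj')
    · simp
  choose J' hJ' hJI using hJ
  have hcard : k ≤ Fintype.card Q := by
    let Ψ : L →ₗ[ℚ] (Q → ℚ) := LinearMap.funLeft ℚ ℚ I' ∘ₗ L.subtype
    have hinj : Function.Injective Ψ := by
      rw [← LinearMap.ker_eq_bot, LinearMap.ker_eq_bot']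
      intro x hx
      ext i
      have h1 : (x : Fin m → ℚ) (I' (π i)) = 0 := congrFun hx (π i)
      have h2 := hconst x x.2 i (I' (π i)) (hI' _).symm
      rw [h1, zero_div, div_eq_zero_iff] at h2
      exact h2.resolve_right (hu0 i)
    have := LinearMap.finrank_le_finrank_of_injective hinj
    rwa [hdim, Module.finrank_fintype_fun_eq_card] at this
  have hinj : Function.Injective (Sum.elim I' J') := by
    have hI'inj : Function.Injective I' := fun a b hab => by rw [← hI' a, hab, hI']
    have hJ'inj : Function.Injective J' := fun a b hab => by rw [← hJ' a, hab, hJ']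
    refine hI'inj.sumElim hJ'inj fun a b hab => ?_
    have : a = b := by rw [← hI' a, hab, hJ']
    subst this
    exact hJI a hab.symm
  have hcardQ : Fintype.card Q = k := by
    have := Fintype.card_le_of_injective _ hinj
    rw [Fintype.card_sum, Fintype.card_fin] at this
    omega
  have hbij : Function.Bijective (Sum.elim I' J') := by
    rw [Fintype.bijective_iff_injective_and_card]
    refine ⟨hinj, ?_⟩
    rw [Fintype.card_sum, Fintype.card_fin]
    omega
  have hclass : ∀ i, i = I' (π i) ∨ i = J' (π i) := by
    intro i
    obtain ⟨q | q, hq⟩ := hbij.2 i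
    · left
      rw [← hq]
      simp only [Sum.elim_inl, hI']
    · right
      rw [← hq]
      simp only [Sum.elim_inr, hJ']
  have hpair : ∀ q, Fc (I' q) * u (I' q) ^ 3 + Fc (J' q) * u (J' q) ^ 3 = 0 := by
    intro q
    have h1 := hsum q
    rw [Finset.sum_eq_add (I' q) (J' q) (hJI q).symm] at h1
    · rwa [if_pos (hI' q), if_pos (hJ' q)] at h1
    · intro j _ hj
      refine if_neg fun hjq => ?_
      subst hjq
      rcases hclass j with h2 | h2
      · exact hj.1 h2
      · exact hj.2 h2
    · simp
    · simp
  let e : Fin k ≃ Q := (Fintype.equivFinOfCardEq hcardQ).symm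
  refine ⟨I' ∘ e, J' ∘ e, ?_, fun a => -(u (I' (e a)) / u (J' (e a))), ?_, ?_⟩
  · have : Sum.elim (I' ∘ e) (J' ∘ e) = Sum.elim I' J' ∘ Sum.map e e := by
      rw [Sum.elim_comp_map]
    rw [this]
    exact hbij.comp (Equiv.sumCongr e e).bijective
  · intro a
    have h1 := hpair (e a)
    have h2 := hu0 (J' (e a))
    have h3 := hFc (I' (e a))
    simp only [Function.comp_apply]
    field_simp
    linarith
  · ext x
    simp only [SetLike.mem_coe, Set.mem_ofPred_eq, Function.comp_apply]
    constructor
    · intro hx a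
      have h1 := hconst x hx (I' (e a)) (J' (e a)) (by rw [hI', hJ'])
      have h2 := hu0 (J' (e a))
      have h3 := hu0 (I' (e a))
      field_simp at h1 ⊢
      linarith
    · intro hx
      have hx' : ∀ q, x (I' q) / u (I' q) = x (J' q) / u (J' q) := by
        intro q
        have h1 := hx (e.symm q)
        rw [e.apply_symm_apply] at h1
        have h2 := hu0 (J' q)
        have h3 := hu0 (I' q)
        field_simp at h1 ⊢
        linarith
      -- `x / u` is constant on classes, so `x` is a combination of the vectors `u · 1_C`.
      have hxs : x = ∑ q : Q, (x (I' q) / u (I' q)) •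
          (fun j => u j * if π j = q then (1 : ℚ) else 0) := by
        funext i
        rw [Finset.sum_apply]
        rw [Finset.sum_eq_single (π i) (fun q _ hq => by simp [hq.symm]) (by simp)]
        simp only [Pi.smul_apply, smul_eq_mul, if_true, mul_one]
        rw [eq_comm, ← eq_div_iff (hu0 i)]
        rcases hclass i with h2 | h2
        · rw [← h2]
        · rw [hx', ← h2]
      rw [hxs]
      exact L.sum_mem fun q _ => L.smul_mem _ (hind q)

theorem stmt15 (m k : ℕ) (hmk : m = 2 * k) (hk : 2 ≤ k)
    (Fc : Fin m → ℚ) (hFc : ∀ i, Fc i ≠ 0)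
    (L : Submodule ℚ (Fin m → ℚ)) (hdim : Module.finrank ℚ L = k) :
    (∀ x ∈ L, (∑ i, Fc i * (x i) ^ 3) = 0) ↔
      ∃ (I J : Fin k → Fin m), Function.Bijective (Sum.elim I J) ∧
        ∃ t : Fin k → ℚ, (∀ a, (t a) ^ 3 = Fc (J a) / Fc (I a)) ∧
          (L : Set (Fin m → ℚ)) = {x | ∀ a, x (I a) + t a * x (J a) = 0} := by
  constructor
  · exact exists_pairing hmk Fc hFc L hdim
  · rintro ⟨I, J, hbij, t, ht, hL⟩ x hx
    have hx' : ∀ a, x (I a) + t a * x (J a) = 0 := by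
      have : x ∈ (L : Set (Fin m → ℚ)) := hx
      rwa [hL] at this
    rw [← hbij.sum_comp (fun i => Fc i * x i ^ 3), Fintype.sum_sum_type,
      ← Finset.sum_add_distrib]
    refine Finset.sum_eq_zero fun a _ => ?_
    simp only [Sum.elim_inl, Sum.elim_inr]
    have h1 : x (I a) = -(t a * x (J a)) := by linarith [hx' a]
    have h2 : Fc (I a) * t a ^ 3 = Fc (J a) := by
      rw [ht, mul_div_cancel₀ _ (hFc _)]
    rw [h1, ← h2]
    ring
end
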